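/- Let N ⊆ E be a coisotropic smooth submanifold. Then every point p ∈ N is locally rigid with respect to N. (Forward implication of the characterization: coisotropy implies local rigidity of all points.) -/

import Mathlib

/-!
Local rigidity is proved by a linking argument for the Hamiltonian action functional, carried out on
a finite-dimensional discretisation, so that no Floer theory or Sobolev space is needed.

*Normal form* (`exists_graphData`). Near `p`, in affine symplectic coordinates, a coisotropic `N` is
a graph `{y i = a i, i ∈ s}`, where the `a i` vanish to second order at the origin, do not depend on
the `y j`, `j ∈ s`, and the functions `y i - a i` are in involution. Indeed the Hamiltonian vectors
at `p` of defining functions of `N` are isotropic, so a unitary map of `ℂⁿ` moves their span to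
coordinate directions of `{y = 0}` (`exists_symplectic_frame`, `exists_adapted`), and the implicit
function theorem applies (`exists_graph`). Involution comes from `involution_of_coisotropic`.

*A Hamiltonian onto the graph* (`GraphData.exists_generating`). Write `x'` for the `x i`, `i ∈ s`, and
`x''`, `y''` for the coordinates with index outside `s`. The flow of `-∑ x i * a i (t x', x'', y'')`
conserves `y j - t * a j (t x', x'', y'')` (`GraphData.conserved`, which uses involution), so it carries
points of `{y = 0}` into the graph at time one. Cut off near the origin, this Hamiltonian `β` is
compactly supported and bounded by a small multiple of the squared length.

*Connecting trajectories* (`exists_connecting`). Let `B` be a well, bounded above by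
`|z|² / 26 - κ`, and let `H` be a Hamiltonian of Hofer norm less than `κ / 4`. Then some trajectory
of `β` starting on `{y = 0}` ends at the end of a trajectory of `H` that starts in the support of `B`.
For the proof, run `β`, `H` reversed, `B`, `H`, `β` reversed, each for unit time, and discretise the
action of paths with free end points on `{y = 0}` by the symplectic Euler scheme. On the subspace
`{q = 0, v = y}` (start at the origin, velocity equal to momentum) the action is at least
`κ - ‖H‖` up to a small error (`phases_low`): the two copies of `H` cancel up to the oscillation, and
`β` and `B` are absorbed by the quadratic part. On the complement `{v = -y}` the action is
nonpositive far out. The saddle point theorem `exists_saddle_point`, resting on the Brouwer-type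
lemma `exists_zero_of_eq_id_outside`, yields a discrete trajectory of action at least `κ / 4`. If the
exact trajectory with the same starting point missed the support of `B`, it would retrace itself and
have action zero; by the convergence of the Euler scheme (`concat_error`) this is a contradiction.

*Conclusion.* Take `B` supported in a small ball inside `U` (`exists_well`). The connecting
trajectory is a trajectory of `H` from a point of `U` to a point of `N`; as `H` is supported in `W`, it
stays in `W`. Hence every `φ` displacing `U` from `N ∩ W` has Hofer norm at least `κ / 4 > 0`.
-/

open scoped ENNReal Topology

noncomputable section

/-- The standard symplectic vector space `E = ℝⁿ × ℝⁿ`. -/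
abbrev E (n : ℕ) := (Fin n → ℝ) × (Fin n → ℝ)

/-- The standard symplectic form `ω₀((x,y),(x',y')) = ⟨x,y'⟩ − ⟨y,x'⟩`. -/
def omega0 (n : ℕ) (z w : E n) : ℝ :=
  (∑ i, z.1 i * w.2 i) - ∑ i, z.2 i * w.1 i

/-- The Hamiltonian vector field `X_{H_t}(x,y) = (∂_y H(t,x,y), −∂_x H(t,x,y))`. -/
def XH (n : ℕ) (H : ℝ × E n → ℝ) (t : ℝ) (z : E n) : E n :=
  ((fun i => fderiv ℝ (fun w => H (t, w)) z (0, Pi.single i 1)),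
   (fun i => -fderiv ℝ (fun w => H (t, w)) z (Pi.single i 1, 0)))

/-- `Φ` is the Hamiltonian flow of `H`: `Φ 0 = id` and `(d/dt) Φ t z = X_{H_t} (Φ t z)`. -/
def IsHamFlow (n : ℕ) (H : ℝ × E n → ℝ) (Φ : ℝ → E n → E n) : Prop :=
  (∀ z, Φ 0 z = z) ∧ ∀ z t, HasDerivAt (fun s => Φ s z) (XH n H t (Φ t z)) t

/-- `H : ℝ × E → ℝ` is smooth with support a compact subset of `[0,1] × W`. -/
def AdmissibleH (n : ℕ) (W : Set (E n)) (H : ℝ × E n → ℝ) : Prop :=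
  ContDiff ℝ (⊤ : ℕ∞) H ∧ IsCompact (tsupport H) ∧
    tsupport H ⊆ Set.Icc (0 : ℝ) 1 ×ˢ W

/-- `Ham(W)`: time-one maps of Hamiltonian flows of admissible Hamiltonians. -/
def HamGrp (n : ℕ) (W : Set (E n)) : Set (E n → E n) :=
  {φ | ∃ H Φ, AdmissibleH n W H ∧ IsHamFlow n H Φ ∧ φ = Φ 1}

/-- `‖H‖ = ∫₀¹ (sup H(t,·) − inf H(t,·)) dt`. -/
def HNorm (n : ℕ) (H : ℝ × E n → ℝ) : ℝ :=
  ∫ t in (0:ℝ)..(1:ℝ),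
    (sSup (Set.range fun z => H (t, z)) - sInf (Set.range fun z => H (t, z)))

/-- The Hofer norm `‖φ‖_W` of `φ ∈ Ham(W)`. -/
def hoferNorm (n : ℕ) (W : Set (E n)) (φ : E n → E n) : ℝ :=
  sInf {c | ∃ H Φ, AdmissibleH n W H ∧ IsHamFlow n H Φ ∧ φ = Φ 1 ∧ c = HNorm n H}

/-- The displacement energy `e_W(U,N)`, valued in `ℝ≥0∞` (so `inf ∅ = ⊤`).
`closure U ∩ W` is the closure of `U` in `W`. -/
def dispE (n : ℕ) (W U N : Set (E n)) : ℝ≥0∞ :=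
  sInf {c | ∃ φ ∈ HamGrp n W, φ '' (closure U ∩ W) ∩ N = ∅ ∧
    c = ENNReal.ofReal (hoferNorm n W φ)}

/-- `p` is rigid with respect to `N` in `W`. -/
def RigidWrt (n : ℕ) (W N : Set (E n)) (p : E n) : Prop :=
  ∀ U : Set (E n), IsOpen U → p ∈ U → U ⊆ W → 0 < dispE n W U N

/-- `N` is a subset of `W` which is closed as a subset of `W`. -/
def ClosedIn (n : ℕ) (W N : Set (E n)) : Prop :=
  N ⊆ W ∧ closure N ∩ W ⊆ N

/-- `N` is locally closed. -/
def LocallyClosedSet (n : ℕ) (N : Set (E n)) : Prop :=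
  ∀ q ∈ N, ∃ V : Set (E n), IsOpen V ∧ q ∈ V ∧ ClosedIn n V (N ∩ V)

/-- `p` is locally rigid with respect to `N`. -/
def LocRigid (n : ℕ) (N : Set (E n)) (p : E n) : Prop :=
  ∃ W : Set (E n), IsOpen W ∧ p ∈ W ∧ ClosedIn n W (N ∩ W) ∧
    RigidWrt n W (N ∩ W) p

/-- `ψ` is a symplectomorphism from the open set `W` onto its (open) image. -/
def IsSymplecto (n : ℕ) (W : Set (E n)) (ψ : E n → E n) : Prop :=
  IsOpen W ∧ IsOpen (ψ '' W) ∧ Set.InjOn ψ W ∧ ContDiffOn ℝ (⊤ : ℕ∞) ψ W ∧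
  (∃ g : E n → E n, ContDiffOn ℝ (⊤ : ℕ∞) g (ψ '' W) ∧ ∀ z ∈ W, g (ψ z) = z) ∧
  ∀ z ∈ W, ∀ u v, omega0 n (fderiv ℝ ψ z u) (fderiv ℝ ψ z v) = omega0 n u v

/-- `ψ` is a symplectic homeomorphism of `E`: a homeomorphism which is a `C⁰`-limit
(uniformly on compact sets, together with inverses) of symplectomorphisms of `E` onto `E`. -/
def IsSympHomeo (n : ℕ) (ψ : E n ≃ₜ E n) : Prop :=
  ∃ Ψ : ℕ → E n ≃ E n,
    (∀ m, IsSymplecto n Set.univ (Ψ m)) ∧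
    TendstoLocallyUniformly (fun m z => Ψ m z) (fun z => ψ z) Filter.atTop ∧
    TendstoLocallyUniformly (fun m z => (Ψ m).symm z) (fun z => ψ.symm z) Filter.atTop

/-- A fixed `k`-dimensional coordinate subspace `ℝᵏ × {0}` of `E`. -/
def coordSubspace (n k : ℕ) : Set (E n) :=
  {z | (∀ i : Fin n, k ≤ (i : ℕ) → z.1 i = 0) ∧
       (∀ i : Fin n, k ≤ n + (i : ℕ) → z.2 i = 0)}

/-- `N` is a smooth `k`-dimensional submanifold of `E`. -/
def IsSubmanifold (n k : ℕ) (N : Set (E n)) : Prop :=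
  ∀ p ∈ N, ∃ (V : Set (E n)) (Φ : E n → E n),
    IsOpen V ∧ p ∈ V ∧ IsOpen (Φ '' V) ∧ Set.InjOn Φ V ∧
    ContDiffOn ℝ (⊤ : ℕ∞) Φ V ∧
    (∃ g : E n → E n, ContDiffOn ℝ (⊤ : ℕ∞) g (Φ '' V) ∧ ∀ z ∈ V, g (Φ z) = z) ∧
    Φ '' (N ∩ V) = coordSubspace n k ∩ Φ '' V

/-- The tangent space `T_pN`, as velocities of curves through `p` lying locally in `N`. -/
def TangentSet (n : ℕ) (N : Set (E n)) (p : E n) : Set (E n) :=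
  {v | ∃ γ : ℝ → E n, γ 0 = p ∧ (∀ᶠ t in 𝓝 (0:ℝ), γ t ∈ N) ∧ HasDerivAt γ v 0}

/-- The symplectic orthogonal complement `T^{ω₀}`. -/
def symplOrth (n : ℕ) (T : Set (E n)) : Set (E n) :=
  {v | ∀ u ∈ T, omega0 n v u = 0}

/-- `N` is coisotropic: `(T_pN)^{ω₀} ⊆ T_pN` for all `p ∈ N`. -/
def IsCoisotropic (n : ℕ) (N : Set (E n)) : Prop :=
  ∀ p ∈ N, symplOrth n (TangentSet n N p) ⊆ TangentSet n N p

/-- `N` is Lagrangian: `(T_pN)^{ω₀} = T_pN` for all `p ∈ N`. -/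
def IsLagrangian (n : ℕ) (N : Set (E n)) : Prop :=
  ∀ p ∈ N, symplOrth n (TangentSet n N p) = TangentSet n N p

/-- `Σ_N`: Hamiltonian diffeomorphisms preserving `N`. -/
def SigmaGrp (n : ℕ) (N : Set (E n)) : Set (E n → E n) :=
  {φ | φ ∈ HamGrp n Set.univ ∧ φ '' N = N}

/-- `Σ̄_N`: the closure of `Σ_N` in the Hofer metric. -/
def SigmaBar (n : ℕ) (N : Set (E n)) : Set (E n → E n) :=
  {φ | φ ∈ HamGrp n Set.univ ∧ ∀ ε : ℝ, 0 < ε →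
    ∃ ψ ∈ SigmaGrp n N, ∃ χ : E n → E n,
      Function.LeftInverse χ ψ ∧ Function.RightInverse χ ψ ∧
      hoferNorm n Set.univ (χ ∘ φ) < ε}

/-- The rigid locus `R_N = ⋂_{φ ∈ Σ̄_N} φ⁻¹(N)`. -/
def rigidLocus (n : ℕ) (N : Set (E n)) : Set (E n) :=
  ⋂ φ ∈ SigmaBar n N, φ ⁻¹' N

/-! ### A Brouwer-type lemma -/

section Brouwer
open MeasureTheory

/-- Lagrange interpolation for `t ↦ det (1 + t A)`, a polynomial of degree at most `finrank V`:
its value at `1` is a fixed affine combination of its values at the nodes `t i`. -/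
lemma exists_det_interpolation {V : Type*} [NormedAddCommGroup V] [NormedSpace ℝ V]
    [FiniteDimensional ℝ V] (t : ℕ → ℝ) (ht : Function.Injective t) :
    ∃ c : ℕ → ℝ, ∑ i ∈ Finset.range (Module.finrank ℝ V + 1), c i = 1 ∧
      ∀ A : V →L[ℝ] V, (1 + A).det =
        ∑ i ∈ Finset.range (Module.finrank ℝ V + 1), c i * (1 + t i • A).det := by
  set d := Module.finrank ℝ V with hd
  refine ⟨fun i => (Lagrange.basis (Finset.range (d + 1)) t i).eval 1, ?_, ?_⟩
  · have h := Lagrange.sum_basis (s := Finset.range (d + 1)) (v := t) ht.injOn ⟨0, by simp⟩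
    have h2 := congrArg (Polynomial.eval 1) h
    simpa [Polynomial.eval_finsetSum] using h2
  · intro A
    let b := Module.finBasis ℝ V
    let M := LinearMap.toMatrix b b (A : V →ₗ[ℝ] V)
    let P : Polynomial ℝ := Matrix.det ((Polynomial.X : Polynomial ℝ) • M.map Polynomial.C +
      (1 : Matrix (Fin d) (Fin d) ℝ).map Polynomial.C)
    have hP : ∀ s : ℝ, P.eval s = (1 + s • A).det := by
      intro s
      have h1 : P.eval s = (s • M + 1).det := by
        simp only [P]
        rw [← Polynomial.coe_evalRingHom, RingHom.map_det]
        congr 1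
        ext i j
        simp [Matrix.one_apply, Polynomial.coe_evalRingHom]
        split_ifs <;> simp <;> ring
      rw [h1]
      have h2 : (1 + s • A).det = LinearMap.det ((1 + s • A : V →L[ℝ] V) : V →ₗ[ℝ] V) := rfl
      rw [h2, ← LinearMap.det_toMatrix b]
      congr 1
      have h3 : ((1 + s • A : V →L[ℝ] V) : V →ₗ[ℝ] V) = 1 + s • (A : V →ₗ[ℝ] V) := by
        ext; rfl
      rw [h3, map_add, map_smul, LinearMap.toMatrix_one, add_comm]
    have hdeg : P.degree < (Finset.range (d + 1)).card := by
      have := Polynomial.natDegree_det_X_add_C_le M (1 : Matrix (Fin d) (Fin d) ℝ)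
      rw [Fintype.card_fin] at this
      refine lt_of_le_of_lt (Polynomial.degree_le_of_natDegree_le this) ?_
      rw [Finset.card_range]
      exact_mod_cast Nat.lt_succ_self d
    have h := Lagrange.eq_interpolate (s := Finset.range (d + 1)) (v := t) ht.injOn hdeg
    have h2 := congrArg (Polynomial.eval 1) h
    rw [Lagrange.interpolate_apply, Polynomial.eval_finsetSum, hP] at h2
    simp only [one_smul, Polynomial.eval_mul, Polynomial.eval_C, hP] at h2
    rw [h2]
    exact Finset.sum_congr rfl fun i _ => mul_comm _ _

variable {V : Type*} [NormedAddCommGroup V] [InnerProductSpace ℝ V]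
    [FiniteDimensional ℝ V] [MeasurableSpace V] [BorelSpace V]

/-- For small `s`, `id + s w` is a bijection of the ball, so its Jacobian integrates to the volume. -/
lemma integral_det_small {w : V → V} {K : NNReal} (hw : LipschitzWith K w) {R : ℝ}
    (hout : ∀ x, R ≤ ‖x‖ → w x = 0)
    (hdiff : ∀ x ∈ Metric.ball (0 : V) R, DifferentiableAt ℝ w x) {s : ℝ}
    (hsK : ‖s‖₊ * K < 1)
    (hdet : ∀ x ∈ Metric.ball (0 : V) R, 0 < (1 + s • fderiv ℝ w x).det) :
    ∫ x in Metric.ball (0 : V) R, (1 + s • fderiv ℝ w x).det = volume.real (Metric.ball (0 : V) R) := by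
  set B := Metric.ball (0 : V) R
  let F : V → V := fun x => x + s • w x
  have happ : ApproximatesLinearOn F ((ContinuousLinearEquiv.refl ℝ V : V ≃L[ℝ] V) : V →L[ℝ] V)
      Set.univ (‖s‖₊ * K) := by
    rw [ApproximatesLinearOn.approximatesLinearOn_iff_lipschitzOnWith, lipschitzOnWith_univ]
    have : (F - ⇑((ContinuousLinearEquiv.refl ℝ V : V ≃L[ℝ] V) : V →L[ℝ] V)) = fun x => s • w x := by
      ext x; simp [F]
    rw [this]
    exact (lipschitzWith_smul s).comp hw
  have hc : Subsingleton V ∨ ‖s‖₊ * K <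
      ‖((ContinuousLinearEquiv.refl ℝ V : V ≃L[ℝ] V).symm : V →L[ℝ] V)‖₊⁻¹ := by
    rcases subsingleton_or_nontrivial V with h | h
    · exact Or.inl h
    · right
      have : ‖((ContinuousLinearEquiv.refl ℝ V : V ≃L[ℝ] V).symm : V →L[ℝ] V)‖₊ = 1 := by
        have h1 : ((ContinuousLinearEquiv.refl ℝ V : V ≃L[ℝ] V).symm : V →L[ℝ] V)
          = ContinuousLinearMap.id ℝ V := rfl
        rw [h1]
        ext
        simp
      rw [this]; simpa using hsK
  have hsurj := happ.surjective hc
  have hinj : Function.Injective F := fun x y h => by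
    have := happ.injective hc (a₁ := ⟨x, trivial⟩) (a₂ := ⟨y, trivial⟩) h
    exact congrArg Subtype.val this
  have hFout : ∀ x, R ≤ ‖x‖ → F x = x := fun x hx => by simp [F, hout x hx]
  have himg : F '' B = B := by
    ext y
    constructor
    · rintro ⟨x, hx, rfl⟩
      by_contra hy
      have hy' : R ≤ ‖F x‖ := by simpa [B] using hy
      have := hinj (hFout _ hy')
      rw [this] at hy'
      simp only [B, mem_ball_zero_iff] at hx
      linarith
    · intro hy
      obtain ⟨x, rfl⟩ := hsurj y
      refine ⟨x, ?_, rfl⟩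
      by_contra hx
      have hx' : R ≤ ‖x‖ := by simpa [B] using hx
      rw [hFout x hx'] at hy
      exact hx hy
  have hder : ∀ x ∈ B, HasFDerivWithinAt F (1 + s • fderiv ℝ w x) B x := fun x hx =>
    ((hasFDerivAt_id x).add ((hdiff x hx).hasFDerivAt.const_smul s)).hasFDerivWithinAt
  have h := integral_image_eq_integral_abs_det_fderiv_smul (volume : Measure V)
    (Metric.isOpen_ball.measurableSet) hder hinj.injOn (fun _ => (1 : ℝ))
  rw [himg] at h
  simp only [smul_eq_mul, mul_one] at h
  rw [setIntegral_const] at h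
  rw [smul_eq_mul, mul_one] at h
  rw [h]
  exact setIntegral_congr_fun Metric.isOpen_ball.measurableSet fun x hx => (abs_of_pos (hdet x hx)).symm

/-- The Jacobian of `id + w` integrates to the volume of the ball, however large `w` is: the integral
of the Jacobian of `id + s w` is a polynomial in `s`, which is constant for small `s`. -/
lemma integral_det_eq {w : V → V} {K : NNReal} (hw : LipschitzWith K w) {R : ℝ}
    (hout : ∀ x, R ≤ ‖x‖ → w x = 0)
    (hdiff : ∀ x ∈ Metric.ball (0 : V) R, DifferentiableAt ℝ w x) :
    ∫ x in Metric.ball (0 : V) R, (1 + fderiv ℝ w x).det = volume.real (Metric.ball (0 : V) R) := by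
  have hcont : Continuous fun A : V →L[ℝ] V => A.det := ContinuousLinearMap.continuous_det
  have hone : (1 : V →L[ℝ] V).det = 1 := by
    change LinearMap.det (LinearMap.id : V →ₗ[ℝ] V) = 1
    exact LinearMap.det_id
  obtain ⟨δ, hδ, hδ'⟩ : ∃ δ > 0, ∀ A : V →L[ℝ] V, ‖A‖ < δ → 0 < (1 + A).det := by
    have : ∀ᶠ A in 𝓝 (0 : V →L[ℝ] V), 0 < (1 + A).det := by
      have hc : ContinuousAt (fun A : V →L[ℝ] V => (1 + A).det) 0 :=
        (hcont.comp (continuous_const.add continuous_id)).continuousAt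
      exact hc.eventually (lt_mem_nhds (by simp [hone]))
    obtain ⟨δ, hδ, h⟩ := Metric.eventually_nhds_iff.1 this
    exact ⟨δ, hδ, fun A hA => h (by simpa using hA)⟩
  set η : ℝ := min (δ / (K + 1)) (1 / (K + 1)) / 2 with hη
  have hK1 : (0 : ℝ) < K + 1 := by positivity
  have hηpos : 0 < η := by positivity
  let t : ℕ → ℝ := fun i => η / (i + 1)
  have ht : Function.Injective t := by
    intro i j hij
    simp only [t] at hij
    have hi : (0 : ℝ) < i + 1 := by positivity
    have hj : (0 : ℝ) < j + 1 := by positivity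
    rw [div_eq_div_iff hi.ne' hj.ne'] at hij
    have := mul_left_cancel₀ hηpos.ne' hij
    have h2 : (i : ℝ) = j := by linarith
    exact_mod_cast h2
  have htpos : ∀ i, 0 < t i := fun i => by positivity
  have htle : ∀ i, t i ≤ η := fun i => div_le_self hηpos.le (by linarith [(Nat.cast_nonneg i : (0:ℝ) ≤ i)])
  have hη1 : η * K < 1 := by
    have h1 : η < 1 / (K + 1) := by
      have : min (δ / (K + 1)) (1 / (K + 1)) ≤ 1 / ((K : ℝ) + 1) := min_le_right _ _
      have h0 : 0 < 1 / ((K : ℝ) + 1) := by positivity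
      rw [hη]; linarith
    rw [lt_div_iff₀ hK1] at h1
    nlinarith
  have hη2 : η * K < δ := by
    have h1 : η < δ / (K + 1) := by
      have : min (δ / (K + 1)) (1 / (K + 1)) ≤ δ / ((K : ℝ) + 1) := min_le_left _ _
      have h0 : 0 < δ / ((K : ℝ) + 1) := by positivity
      rw [hη]; linarith
    rw [lt_div_iff₀ hK1] at h1
    nlinarith
  have hfd : ∀ x, ‖fderiv ℝ w x‖ ≤ K := fun x => norm_fderiv_le_of_lipschitz ℝ hw
  obtain ⟨c, hc1, hc2⟩ := exists_det_interpolation (V := V) t ht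
  have hintg : ∀ i, Integrable (fun x => c i * (1 + t i • fderiv ℝ w x).det)
      (volume.restrict (Metric.ball (0 : V) R)) := by
    intro i
    apply Integrable.const_mul
    have hcomp : IsCompact (Metric.closedBall (0 : V →L[ℝ] V) K) := isCompact_closedBall _ _
    have hg : Continuous fun A : V →L[ℝ] V => (1 + t i • A).det := by
      exact hcont.comp (by fun_prop)
    obtain ⟨C, hC⟩ := hcomp.exists_bound_of_continuousOn hg.continuousOn
    have hm : Measurable fun x => (1 + t i • fderiv ℝ w x).det :=
      hg.measurable.comp (measurable_fderiv ℝ w)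
    have : IsFiniteMeasure (volume.restrict (Metric.ball (0 : V) R)) :=
      ⟨by simpa using Metric.isBounded_ball.measure_lt_top⟩
    exact Integrable.of_bound hm.aestronglyMeasurable C
      (Filter.Eventually.of_forall fun x => hC _ (by simpa using hfd x))
  calc ∫ x in Metric.ball (0 : V) R, (1 + fderiv ℝ w x).det
      = ∫ x in Metric.ball (0 : V) R, ∑ i ∈ Finset.range (Module.finrank ℝ V + 1),
          c i * (1 + t i • fderiv ℝ w x).det := by simp_rw [← hc2]
    _ = ∑ i ∈ Finset.range (Module.finrank ℝ V + 1), c i * volume.real (Metric.ball (0 : V) R) := by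
        rw [integral_finsetSum _ fun i _ => hintg i]
        refine Finset.sum_congr rfl fun i _ => ?_
        rw [integral_const_mul, integral_det_small hw hout hdiff]
        · rw [← NNReal.coe_lt_coe]
          push_cast
          rw [Real.norm_of_nonneg (htpos i).le]
          exact lt_of_le_of_lt (mul_le_mul_of_nonneg_right (htle i) K.2) hη1
        · intro x _
          apply hδ'
          rw [norm_smul, Real.norm_of_nonneg (htpos i).le]
          calc t i * ‖fderiv ℝ w x‖ ≤ η * K := mul_le_mul (htle i) (hfd x) (norm_nonneg _) hηpos.le
            _ < δ := hη2
    _ = _ := by rw [← Finset.sum_mul, hc1, one_mul]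

/-- A map which is Lipschitz on a closed ball and vanishes on and beyond its boundary sphere is
globally Lipschitz. -/
lemma lipschitz_of_zero_outside {V : Type*} [NormedAddCommGroup V] [InnerProductSpace ℝ V] {w : V → V} {K : NNReal} {R : ℝ}
    (hw : LipschitzOnWith K w (Metric.closedBall 0 R)) (hout : ∀ x, R ≤ ‖x‖ → w x = 0) :
    LipschitzWith K w := by
  have key : ∀ x y, ‖x‖ ≤ R → R ≤ ‖y‖ → dist (w x) (w y) ≤ K * dist x y := by
    intro x y hx hy
    have hc : ContinuousOn (fun s : ℝ => ‖AffineMap.lineMap x y s‖) (Set.Icc 0 1) := by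
      apply Continuous.continuousOn
      have := AffineMap.lineMap_continuous (R := ℝ) (p := x) (q := y)
      fun_prop
    have := intermediate_value_Icc (zero_le_one' ℝ) hc
    obtain ⟨s, hs, hs'⟩ := this (⟨by simpa using hx, by simpa using hy⟩ : R ∈ Set.Icc _ _)
    have h1 : w (AffineMap.lineMap x y s) = 0 := hout _ hs'.ge
    have h2 := hw.dist_le_mul x (by simpa using hx) (AffineMap.lineMap x y s) (by simpa using hs'.le)
    rw [h1] at h2
    rw [hout y hy]
    refine h2.trans (mul_le_mul_of_nonneg_left ?_ K.2)
    rw [dist_comm, dist_lineMap_left, Real.norm_of_nonneg hs.1]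
    exact mul_le_of_le_one_left dist_nonneg hs.2
  refine LipschitzWith.of_dist_le_mul fun x y => ?_
  rcases le_total ‖x‖ R with hx | hx <;> rcases le_total ‖y‖ R with hy | hy
  · exact hw.dist_le_mul x (by simpa using hx) y (by simpa using hy)
  · exact key x y hx hy
  · rw [dist_comm, dist_comm x]; exact key y x hy hx
  · rw [hout x hx, hout y hy, dist_self]; positivity

/-- A `C¹` self-map of a Euclidean space which is the identity outside a ball hits the origin.
Otherwise its normalisation retracts a ball onto its boundary sphere: the Jacobian of the retraction
vanishes identically, although it integrates to the volume of the ball. -/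
lemma exists_zero_of_eq_id_outside {f : V → V} (hf : ContDiff ℝ 1 f) {R₀ : ℝ}
    (hid : ∀ x, R₀ ≤ ‖x‖ → f x = x) : ∃ x, f x = 0 := by
  by_contra! hne
  obtain ⟨C, hC⟩ := (isCompact_closedBall (0 : V) R₀).exists_bound_of_continuousOn
    hf.continuous.continuousOn
  set R : ℝ := max (max R₀ C) 0 + 1 with hR
  have hR0 : R₀ < R := by have := le_max_left R₀ C; have := le_max_left (max R₀ C) 0; linarith
  have hRC : C < R := by have := le_max_right R₀ C; have := le_max_left (max R₀ C) 0; linarith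
  have hRpos : 0 < R := by have := le_max_right (max R₀ C) 0; linarith
  let g : V → V := fun x => (R / ‖f x‖) • f x
  have hg : ContDiff ℝ 1 g := by
    have h1 : ContDiff ℝ 1 fun x => ‖f x‖ := hf.norm ℝ hne
    exact (contDiff_const.div h1 fun x => norm_ne_zero_iff.2 (hne x)).smul hf
  have hgn : ∀ x, ‖g x‖ = R := by
    intro x
    have := norm_ne_zero_iff.2 (hne x)
    simp only [g, norm_smul, norm_div, norm_norm, Real.norm_of_nonneg hRpos.le]
    field_simp
  let w : V → V := fun x => if ‖x‖ < R then g x - x else 0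
  have hout : ∀ x, R ≤ ‖x‖ → w x = 0 := fun x hx => if_neg (not_lt.2 hx)
  have hin : ∀ x, ‖x‖ ≤ R → w x = g x - x := by
    intro x hx
    rcases hx.lt_or_eq with h | h
    · exact if_pos h
    · rw [hout x h.ge]
      have h2 : f x = x := hid x (by linarith)
      have h3 : ‖x‖ ≠ 0 := by rw [h]; exact hRpos.ne'
      simp only [g, h2]
      rw [← h, div_self h3, one_smul, sub_self]
  obtain ⟨K, hK⟩ := (hg.sub contDiff_id).contDiffOn.exists_lipschitzOnWith (s := Metric.closedBall (0 : V) R)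
    one_ne_zero (convex_closedBall _ _) (isCompact_closedBall _ _)
  have hK' : LipschitzOnWith K w (Metric.closedBall 0 R) := by
    intro x hx y hy
    rw [hin x (by simpa using hx), hin y (by simpa using hy)]
    exact hK hx hy
  have hLip := lipschitz_of_zero_outside hK' hout
  have hev : ∀ x ∈ Metric.ball (0 : V) R, w =ᶠ[𝓝 x] fun x => g x - x := by
    intro x hx
    filter_upwards [Metric.isOpen_ball.mem_nhds hx] with y hy
    exact hin y (by simpa using (mem_ball_zero_iff.1 hy).le)
  have hgd : ∀ x, DifferentiableAt ℝ g x := fun x => hg.differentiable one_ne_zero x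
  have hfd : ∀ x ∈ Metric.ball (0 : V) R, HasFDerivAt w (fderiv ℝ g x - 1) x := fun x hx =>
    ((hgd x).hasFDerivAt.sub (hasFDerivAt_id x)).congr_of_eventuallyEq (hev x hx)
  have h1 := integral_det_eq hLip hout fun x hx => (hfd x hx).differentiableAt
  have h2 : ∫ x in Metric.ball (0 : V) R, (1 + fderiv ℝ w x).det = 0 := by
    rw [setIntegral_congr_fun (g := fun _ => (0 : ℝ)) Metric.isOpen_ball.measurableSet]
    · simp
    · intro x hx
      simp only
      rw [(hfd x hx).fderiv]
      have h3 : (1 : V →L[ℝ] V) + (fderiv ℝ g x - 1) = fderiv ℝ g x := by abel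
      rw [h3]
      by_contra hdet
      -- the derivative of `‖g‖² = R²` gives `⟪g x, Dg(x) v⟫ = 0`; take `v` with `Dg(x) v = g x`
      have hsq : ∀ v, inner ℝ (g x) (fderiv ℝ g x v) = 0 := by
        intro v
        have h4 : HasFDerivAt (fun y => ‖g y‖ ^ 2) (2 • (innerSL ℝ (g x)).comp (fderiv ℝ g x)) x :=
          (hgd x).hasFDerivAt.norm_sq
        have h5 : (fun y => ‖g y‖ ^ 2) = fun _ => R ^ 2 := by ext y; rw [hgn]
        rw [h5] at h4
        have h6 := h4.unique (hasFDerivAt_const _ _)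
        have h7 := congrArg (fun T : V →L[ℝ] ℝ => T v) h6
        simpa using h7
      have hu : IsUnit (LinearMap.det (fderiv ℝ g x : V →ₗ[ℝ] V)) := isUnit_iff_ne_zero.2 hdet
      have hb := (LinearMap.equivOfIsUnitDet hu).surjective (g x)
      obtain ⟨v, hv⟩ := hb
      have hv' : fderiv ℝ g x v = g x := by simpa using hv
      have h8 := hsq v
      rw [hv', real_inner_self_eq_norm_sq, hgn] at h8
      exact (pow_ne_zero 2 hRpos.ne') h8
  rw [h2] at h1
  have h3 : 0 < volume.real (Metric.ball (0 : V) R) :=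
    ENNReal.toReal_pos (Metric.measure_ball_pos _ _ hRpos).ne' Metric.isBounded_ball.measure_lt_top.ne
  linarith

end Brouwer

/-! ### A finite-dimensional saddle point theorem -/

section Saddle

/-- A linear substitute for the gradient on a finite-dimensional normed space. -/
lemma exists_gradient_map (Z : Type*) [NormedAddCommGroup Z] [NormedSpace ℝ Z]
    [FiniteDimensional ℝ Z] :
    ∃ (T : (Z →L[ℝ] ℝ) →L[ℝ] Z) (c : ℝ), 0 < c ∧ ∀ l : Z →L[ℝ] ℝ, c * ‖l‖ ^ 2 ≤ l (T l) := by
  let b := Module.finBasis ℝ Z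
  obtain ⟨C, hC, hb⟩ := b.exists_opNorm_le (F := ℝ)
  refine ⟨∑ i, (ContinuousLinearMap.apply ℝ ℝ (b i)).smulRight (b i), 1 / C ^ 2, by positivity, ?_⟩
  intro l
  have h1 : l ((∑ i, (ContinuousLinearMap.apply ℝ ℝ (b i)).smulRight (b i)) l) = ∑ i, (l (b i)) ^ 2 := by
    simp [pow_two]
  rw [h1]
  set S := ∑ i, (l (b i)) ^ 2 with hS
  have hS0 : 0 ≤ S := Finset.sum_nonneg fun i _ => sq_nonneg _
  have h2 : ‖l‖ ≤ C * Real.sqrt S := by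
    refine hb (Real.sqrt_nonneg _) fun i => ?_
    rw [Real.norm_eq_abs]
    refine Real.abs_le_sqrt ?_
    exact Finset.single_le_sum (f := fun i => (l (b i)) ^ 2) (fun i _ => sq_nonneg _) (Finset.mem_univ i)
  have h3 : ‖l‖ ^ 2 ≤ C ^ 2 * S := by
    calc ‖l‖ ^ 2 ≤ (C * Real.sqrt S) ^ 2 := pow_le_pow_left₀ (norm_nonneg _) h2 2
      _ = C ^ 2 * S := by rw [mul_pow, Real.sq_sqrt hS0]
  rw [div_mul_eq_mul_div, one_mul, div_le_iff₀ (by positivity)]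
  linarith

/-- Finite-dimensional saddle point theorem. `ι V` is a linear subspace with complement `ker P`, the
function is non-positive far out on `ι V` and at least `α > 0` on `ker P`. Truncated gradient descent
would otherwise push `ι V` below level `α / 2` while fixing it far out, hence off `ker P`, which
`exists_zero_of_eq_id_outside` forbids. -/
lemma exists_saddle_point {Z V : Type*} [NormedAddCommGroup Z] [NormedSpace ℝ Z]
    [FiniteDimensional ℝ Z] [NormedAddCommGroup V] [NormedSpace ℝ V] [FiniteDimensional ℝ V]
    {A : Z → ℝ} (hA : ContDiff ℝ 2 A) {K : NNReal} (hK : LipschitzWith K (fderiv ℝ A))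
    (ι : V →L[ℝ] Z) (P : Z →L[ℝ] V) (hP : ∀ v, P (ι v) = v) {R₀ : ℝ}
    (hR : ∀ v, R₀ ≤ ‖v‖ → A (ι v) ≤ 0) {α : ℝ} (hα : 0 < α) (hlow : ∀ z, P z = 0 → α ≤ A z)
    {ν ρ : ℝ} (hν : 0 < ν) (hPS : ∀ z, α / 2 ≤ A z → ‖fderiv ℝ A z‖ < ν → ‖z‖ ≤ ρ) :
    ∃ z, fderiv ℝ A z = 0 ∧ α / 2 ≤ A z := by
  by_contra! hcrit
  have hdA : Continuous (fderiv ℝ A) := hA.continuous_fderiv (by norm_num)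
  have hdiff : ∀ z, HasFDerivAt A (fderiv ℝ A z) z := fun z =>
    (hA.differentiable (by norm_num) z).hasFDerivAt
  obtain ⟨ν₀, hν₀, hlb⟩ : ∃ ν₀ > 0, ∀ z, α / 2 ≤ A z → ν₀ ≤ ‖fderiv ℝ A z‖ := by
    let Kc : Set Z := Metric.closedBall 0 ρ ∩ {z | α / 2 ≤ A z}
    have hKc : IsCompact Kc := (isCompact_closedBall _ _).inter_right
      (isClosed_le continuous_const hA.continuous)
    rcases Kc.eq_empty_or_nonempty with he | hne
    · refine ⟨ν, hν, fun z hz => ?_⟩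
      by_contra! h
      have : z ∈ Kc := ⟨by simpa using hPS z hz h, hz⟩
      rw [he] at this
      exact this
    · obtain ⟨z₀, hz₀, hmin⟩ := hKc.exists_isMinOn hne hdA.norm.continuousOn
      have hpos : 0 < ‖fderiv ℝ A z₀‖ := by
        rw [norm_pos_iff]
        intro h
        exact absurd hz₀.2 (not_le.2 (hcrit z₀ h))
      refine ⟨min ν ‖fderiv ℝ A z₀‖, lt_min hν hpos, fun z hz => ?_⟩
      by_contra! h
      have h1 := lt_min_iff.1 h
      exact absurd (hmin (⟨by simpa using hPS z hz h1.1, hz⟩ : z ∈ Kc)) (not_le.2 h1.2)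
  obtain ⟨T, c, hc, hT⟩ := exists_gradient_map Z
  set s : ℝ := c / (2 * (K * ‖T‖ ^ 2 + 1)) with hs
  have hden : (0 : ℝ) < 2 * (K * ‖T‖ ^ 2 + 1) := by positivity
  have hspos : 0 < s := by positivity
  have hsmall : s * (K * ‖T‖ ^ 2) ≤ c / 2 := by
    rw [hs, div_mul_eq_mul_div, div_le_div_iff₀ hden two_pos]
    nlinarith
  let η : Z → ℝ := fun z => Real.smoothTransition (2 * A z / α)
  let σ : Z → Z := fun z => z - (s * η z) • T (fderiv ℝ A z)
  have hη : ContDiff ℝ 1 η :=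
    Real.smoothTransition.contDiff.comp
      ((contDiff_const.mul (hA.of_le (by norm_num))).div_const _)
  have hσ : ContDiff ℝ 1 σ := by
    have h1 : ContDiff ℝ 1 fun z => T (fderiv ℝ A z) :=
      T.contDiff.comp (hA.fderiv_right (m := 1) (by norm_num))
    exact contDiff_id.sub ((contDiff_const.mul hη).smul h1)
  have hσid : ∀ z, A z ≤ 0 → σ z = z := by
    intro z hz
    have : η z = 0 := Real.smoothTransition.zero_of_nonpos
      (div_nonpos_of_nonpos_of_nonneg (by linarith) hα.le)
    simp [σ, this]
  have hdesc : ∀ z, A (σ z) ≤ A z - s * η z * (c / 2) * ‖fderiv ℝ A z‖ ^ 2 := by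
    intro z
    have hη0 : 0 ≤ η z := Real.smoothTransition.nonneg _
    have hη1 : η z ≤ 1 := Real.smoothTransition.le_one _
    set τ := s * η z with hτ
    have hτ0 : 0 ≤ τ := by positivity
    have hτs : τ ≤ s := mul_le_of_le_one_right hspos.le hη1
    set l := fderiv ℝ A z with hl
    have hmv := (convex_segment z (σ z)).norm_image_sub_le_of_norm_hasFDerivWithin_le' (f := A)
      (f' := fun y => fderiv ℝ A y) (φ := l) (C := K * ‖σ z - z‖) (x := z) (y := σ z)
      (fun y _ => (hdiff y).hasFDerivWithinAt) (fun y hy => by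
        have h1 := hK.dist_le_mul y z
        rw [dist_eq_norm, dist_eq_norm] at h1
        refine h1.trans (mul_le_mul_of_nonneg_left ?_ K.2)
        obtain ⟨a, ha, rfl⟩ := (segment_eq_image' ℝ z (σ z) ▸ hy :)
        rw [add_sub_cancel_left, norm_smul, Real.norm_of_nonneg ha.1]
        exact mul_le_of_le_one_left (norm_nonneg _) ha.2)
      (left_mem_segment _ _ _) (right_mem_segment _ _ _)
    have hσz : σ z - z = -(τ • T l) := by simp [σ, hτ, hl]
    rw [hσz, norm_neg, norm_smul, Real.norm_of_nonneg hτ0, map_neg, map_smul, smul_eq_mul] at hmv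
    have h2 := (abs_le.1 (Real.norm_eq_abs _ ▸ hmv)).2
    have h3 := hT l
    have h4 : ‖T l‖ ≤ ‖T‖ * ‖l‖ := T.le_opNorm l
    have h5 : ‖T l‖ ^ 2 ≤ ‖T‖ ^ 2 * ‖l‖ ^ 2 := by
      rw [← mul_pow]; exact pow_le_pow_left₀ (norm_nonneg _) h4 2
    have h6 : K * (τ * ‖T l‖) * (τ * ‖T l‖) ≤ τ * (c / 2 * ‖l‖ ^ 2) := by
      have h7 : τ * (K * ‖T‖ ^ 2) ≤ c / 2 :=
        (mul_le_mul_of_nonneg_right hτs (by positivity)).trans hsmall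
      calc K * (τ * ‖T l‖) * (τ * ‖T l‖) = τ * (τ * K) * ‖T l‖ ^ 2 := by ring
        _ ≤ τ * (τ * K) * (‖T‖ ^ 2 * ‖l‖ ^ 2) := mul_le_mul_of_nonneg_left h5 (by positivity)
        _ = τ * ((τ * (K * ‖T‖ ^ 2)) * ‖l‖ ^ 2) := by ring
        _ ≤ τ * (c / 2 * ‖l‖ ^ 2) :=
          mul_le_mul_of_nonneg_left (mul_le_mul_of_nonneg_right h7 (sq_nonneg _)) hτ0
    have h8 : τ * (c * ‖l‖ ^ 2) ≤ τ * l (T l) := mul_le_mul_of_nonneg_left h3 hτ0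
    nlinarith
  have hmono : ∀ z, A (σ z) ≤ A z := fun z => by
    have h0 : 0 ≤ s * η z * (c / 2) * ‖fderiv ℝ A z‖ ^ 2 := by
      have : 0 ≤ η z := Real.smoothTransition.nonneg _
      positivity
    linarith [hdesc z]
  set δ : ℝ := s * (c / 2) * ν₀ ^ 2 with hδ
  have hδpos : 0 < δ := by positivity
  have hdrop : ∀ z, α / 2 ≤ A z → A (σ z) ≤ A z - δ := by
    intro z hz
    have h1 : η z = 1 := Real.smoothTransition.one_of_one_le (by rw [le_div_iff₀ hα]; linarith)
    have h2 := hdesc z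
    rw [h1, mul_one] at h2
    have h3 : ν₀ ^ 2 ≤ ‖fderiv ℝ A z‖ ^ 2 := pow_le_pow_left₀ hν₀.le (hlb z hz) 2
    have h4 : δ ≤ s * (c / 2) * ‖fderiv ℝ A z‖ ^ 2 := mul_le_mul_of_nonneg_left h3 (by positivity)
    linarith
  obtain ⟨S, hS⟩ : ∃ S, ∀ v, A (ι v) ≤ S := by
    obtain ⟨S, hS⟩ := (isCompact_closedBall (0 : V) R₀).exists_bound_of_continuousOn
      ((hA.continuous.comp ι.continuous).continuousOn)
    refine ⟨max S 0, fun v => ?_⟩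
    rcases le_total R₀ ‖v‖ with h | h
    · exact (hR v h).trans (le_max_right _ _)
    · exact ((le_abs_self _).trans (hS v (by simpa using h))).trans (le_max_left _ _)
  have hiter : ∀ (k : ℕ) v, A (σ^[k] (ι v)) < α / 2 ∨ A (σ^[k] (ι v)) ≤ S - k * δ := by
    intro k v
    induction k with
    | zero => right; simpa using hS v
    | succ k ih =>
      rw [Function.iterate_succ_apply']
      rcases lt_or_ge (A (σ^[k] (ι v))) (α / 2) with h | h
      · exact Or.inl ((hmono _).trans_lt h)
      · right
        have h1 := ih.resolve_left (not_lt.2 h)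
        have h2 := hdrop _ h
        push_cast
        linarith
  obtain ⟨M, hM⟩ := exists_nat_gt ((S - α / 2) / δ)
  rw [div_lt_iff₀ hδpos] at hM
  let e : V ≃L[ℝ] EuclideanSpace ℝ (Fin (Module.finrank ℝ V)) := toEuclidean
  let f : EuclideanSpace ℝ (Fin (Module.finrank ℝ V)) → EuclideanSpace ℝ (Fin (Module.finrank ℝ V)) :=
    fun x => e (P (σ^[M] (ι (e.symm x))))
  have hσM : ContDiff ℝ 1 σ^[M] := by
    clear hM
    induction M with
    | zero => simpa using contDiff_id
    | succ k ih => rw [Function.iterate_succ]; exact ContDiff.comp ih hσ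
  have hf : ContDiff ℝ 1 f :=
    e.contDiff.comp (P.contDiff.comp (hσM.comp (ι.contDiff.comp e.symm.contDiff)))
  have hfid : ∀ x, |R₀| * (‖(e : V →L[ℝ] EuclideanSpace ℝ (Fin (Module.finrank ℝ V)))‖ + 1) ≤ ‖x‖ → f x = x := by
    intro x hx
    have h1 : ‖x‖ ≤ ‖(e : V →L[ℝ] EuclideanSpace ℝ (Fin (Module.finrank ℝ V)))‖ * ‖e.symm x‖ := by
      have := (e : V →L[ℝ] EuclideanSpace ℝ (Fin (Module.finrank ℝ V))).le_opNorm (e.symm x)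
      simpa using this
    have h2 : R₀ ≤ ‖e.symm x‖ := by
      by_contra! h
      have h0 := norm_nonneg (e.symm x)
      have h3 : ‖e.symm x‖ < |R₀| := h.trans_le (le_abs_self _)
      have h4 := norm_nonneg (e : V →L[ℝ] EuclideanSpace ℝ (Fin (Module.finrank ℝ V)))
      nlinarith
    have h3 : A (ι (e.symm x)) ≤ 0 := hR _ h2
    have h4 : σ^[M] (ι (e.symm x)) = ι (e.symm x) := Function.iterate_fixed (hσid _ h3) M
    simp [f, h4, hP]
  obtain ⟨x, hx⟩ := exists_zero_of_eq_id_outside hf hfid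
  have hx' : P (σ^[M] (ι (e.symm x))) = 0 := by simpa [f] using hx
  have h1 := hlow _ hx'
  rcases hiter M (e.symm x) with h | h <;> linarith

end Saddle

/-! ### The discretised action functional -/

/-- The Hamiltonian vector field `(∂_y F, -∂_x F)` of an autonomous Hamiltonian `F`. -/
def hamVF {n : ℕ} (F : E n → ℝ) (z : E n) : E n :=
  ((fun i => fderiv ℝ F z (0, Pi.single i 1)), (fun i => -fderiv ℝ F z (Pi.single i 1, 0)))

/-- The integrand `⟨y, ∂_y F⟩ - F` of the action functional along Hamiltonian trajectories. -/
def lagr {n : ℕ} (F : E n → ℝ) (z : E n) : ℝ :=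
  ∑ l, z.2 l * fderiv ℝ F z (0, Pi.single l 1) - F z

section Discrete

variable {n m : ℕ}

/-- Configuration space `(q, v, y)` of the discretised action functional: initial position,
velocities and momenta at `m` time steps. -/
abbrev ZS (n m : ℕ) := (Fin n → ℝ) × (Fin m → Fin n → ℝ) × (Fin m → Fin n → ℝ)

/-- Partial sums `∑_{i < j} f i` of a family indexed by `Fin m`. -/
def psum (f : Fin m → Fin n → ℝ) (j : ℕ) : Fin n → ℝ := ∑ i : Fin m, if (i : ℕ) < j then f i else 0

lemma psum_zero (f : Fin m → Fin n → ℝ) : psum f 0 = 0 := by simp [psum]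

lemma psum_succ (f : Fin m → Fin n → ℝ) (j : Fin m) : psum f (j + 1) = psum f j + f j := by
  unfold psum
  have : f j = ∑ i, if i = j then f i else 0 := by simp
  rw [this, ← Finset.sum_add_distrib]
  refine Finset.sum_congr rfl fun i _ => ?_
  rcases lt_trichotomy (i : ℕ) j with h | h | h
  · have : i ≠ j := by rintro rfl; omega
    simp [h, this, Nat.lt_succ_of_lt h]
  · have : i = j := Fin.ext h
    subst this
    simp
  · have : i ≠ j := by rintro rfl; omega
    have h1 : ¬ (i : ℕ) < j := by omega
    have h2 : ¬ (i : ℕ) < j + 1 := by omega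
    rw [if_neg h1, if_neg h2, if_neg this, add_zero]

lemma norm_psum_le {C : ℝ} (hC : 0 ≤ C) {f : Fin m → Fin n → ℝ} (hf : ∀ i, ‖f i‖ ≤ C) (j : ℕ) :
    ‖psum f j‖ ≤ m * C := by
  unfold psum
  calc ‖∑ i : Fin m, if (i : ℕ) < j then f i else 0‖ ≤ ∑ i : Fin m, ‖if (i : ℕ) < j then f i else 0‖ :=
        norm_sum_le _ _
    _ ≤ ∑ _i : Fin m, C := by
        refine Finset.sum_le_sum fun i _ => ?_
        split_ifs
        · exact hf i
        · simpa using hC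
    _ = m * C := by simp

/-- The projection of `(q, v, y)` to the coordinate `v j l`. -/
def prV (j : Fin m) (l : Fin n) : ZS n m →L[ℝ] ℝ :=
  LinearMap.toContinuousLinearMap
    { toFun := fun z => z.2.1 j l, map_add' := fun _ _ => rfl, map_smul' := fun _ _ => rfl }

/-- The projection of `(q, v, y)` to the coordinate `y j l`. -/
def prY (j : Fin m) (l : Fin n) : ZS n m →L[ℝ] ℝ :=
  LinearMap.toContinuousLinearMap
    { toFun := fun z => z.2.2 j l, map_add' := fun _ _ => rfl, map_smul' := fun _ _ => rfl }

@[simp] lemma prV_apply (j : Fin m) (l : Fin n) (z : ZS n m) : prV j l z = z.2.1 j l := rfl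

@[simp] lemma prY_apply (j : Fin m) (l : Fin n) (z : ZS n m) : prY j l z = z.2.2 j l := rfl

lemma psum_add (f g : Fin m → Fin n → ℝ) (j : ℕ) : psum (f + g) j = psum f j + psum g j := by
  unfold psum
  rw [← Finset.sum_add_distrib]
  refine Finset.sum_congr rfl fun i _ => ?_
  split_ifs <;> simp

lemma psum_smul (c : ℝ) (f : Fin m → Fin n → ℝ) (j : ℕ) : psum (c • f) j = c • psum f j := by
  unfold psum
  rw [Finset.smul_sum]
  refine Finset.sum_congr rfl fun i _ => ?_
  split_ifs <;> simp

/-- The phase space point at which the `j`-th Hamiltonian is evaluated. -/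
def node (h : ℝ) (j : Fin m) : ZS n m →L[ℝ] E n :=
  LinearMap.toContinuousLinearMap
    { toFun := fun z => (z.1 + h • psum z.2.1 j, z.2.2 j)
      map_add' := fun z w => by
        simp only [Prod.fst_add, Prod.snd_add, psum_add, smul_add, Pi.add_apply, Prod.mk_add_mk]
        congr 1
        abel
      map_smul' := fun c z => by
        simp only [Prod.smul_fst, Prod.smul_snd, psum_smul, smul_comm h c, Pi.smul_apply,
          RingHom.id_apply, Prod.smul_mk, smul_add] }

lemma node_apply (h : ℝ) (j : Fin m) (z : ZS n m) :
    node h j z = (z.1 + h • psum z.2.1 j, z.2.2 j) := rfl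

/-- The discretised action functional `h ∑ (⟨y j, v j⟩ - G j (node j))`. -/
def actD (h : ℝ) (G : Fin m → E n → ℝ) (z : ZS n m) : ℝ :=
  h * ∑ j, ∑ l, z.2.1 j l * z.2.2 j l - h * ∑ j, G j (node h j z)

/-- The differential of `actD`. -/
def dactD (h : ℝ) (G : Fin m → E n → ℝ) (z : ZS n m) : ZS n m →L[ℝ] ℝ :=
  h • ∑ j, ∑ l, (prV j l z • prY j l + prY j l z • prV j l)
    - h • ∑ j, (fderiv ℝ (G j) (node h j z)).comp (node h j)

lemma hasFDerivAt_actD (h : ℝ) {G : Fin m → E n → ℝ} (hG : ∀ j, ContDiff ℝ 2 (G j)) (z : ZS n m) :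
    HasFDerivAt (actD h G) (dactD h G z) z := by
  unfold actD dactD
  refine HasFDerivAt.sub (HasFDerivAt.const_mul ?_ h) (HasFDerivAt.const_mul ?_ h)
  · refine HasFDerivAt.fun_sum fun j _ => HasFDerivAt.fun_sum fun l _ => ?_
    exact (prV j l).hasFDerivAt.mul (prY j l).hasFDerivAt
  · refine HasFDerivAt.fun_sum fun j _ => ?_
    exact (((hG j).differentiable (by norm_num)) _).hasFDerivAt.comp z (node h j).hasFDerivAt

lemma contDiff_actD (h : ℝ) {G : Fin m → E n → ℝ} (hG : ∀ j, ContDiff ℝ 2 (G j)) :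
    ContDiff ℝ 2 (actD h G) := by
  unfold actD
  refine (contDiff_const.mul ?_).sub (contDiff_const.mul ?_)
  · refine ContDiff.sum fun j _ => ContDiff.sum fun l _ => ?_
    exact (prV j l).contDiff.mul (prY j l).contDiff
  · exact ContDiff.sum fun j _ => (hG j).comp (node h j).contDiff

lemma exists_lipschitz_sum {ι X Y : Type*} [PseudoMetricSpace X] [SeminormedAddCommGroup Y]
    (s : Finset ι) {f : ι → X → Y} (hf : ∀ i, ∃ K, LipschitzWith K (f i)) :
    ∃ K, LipschitzWith K (fun x => ∑ i ∈ s, f i x) := by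
  classical
  induction s using Finset.induction_on with
  | empty => exact ⟨0, by simpa using LipschitzWith.const (0 : Y)⟩
  | insert a s ha ih =>
    obtain ⟨K, hK⟩ := ih
    obtain ⟨K', hK'⟩ := hf a
    exact ⟨K' + K, by simpa [Finset.sum_insert ha] using hK'.add hK⟩

lemma exists_lipschitz_dactD (h : ℝ) {G : Fin m → E n → ℝ} (hG : ∀ j, ContDiff ℝ 2 (G j))
    (hGc : ∀ j, HasCompactSupport (G j)) : ∃ K, LipschitzWith K (dactD h G) := by
  obtain ⟨K₁, hK₁⟩ : ∃ K, LipschitzWith K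
      (fun z : ZS n m => ∑ j, ∑ l, (prV j l z • prY j l + prY j l z • prV j l)) := by
    refine exists_lipschitz_sum _ fun j => exists_lipschitz_sum _ fun l => ?_
    exact ⟨_, ((prV j l).smulRight (prY j l) + (prY j l).smulRight (prV j l)).lipschitz⟩
  obtain ⟨K₂, hK₂⟩ : ∃ K, LipschitzWith K
      (fun z : ZS n m => ∑ j, (fderiv ℝ (G j) (node h j z)).comp (node h j)) := by
    refine exists_lipschitz_sum _ fun j => ?_
    have hc : HasCompactSupport (fderiv ℝ (G j)) := (hGc j).fderiv (𝕜 := ℝ)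
    have hd : ContDiff ℝ 1 (fderiv ℝ (G j)) := (hG j).fderiv_right (m := 1) (by norm_num)
    obtain ⟨C, hC⟩ := hd.lipschitzWith_of_hasCompactSupport hc (by norm_num)
    refine ⟨C * ‖node (n := n) h j‖₊ * ‖node (n := n) h j‖₊, LipschitzWith.of_dist_le_mul fun z w => ?_⟩
    rw [dist_eq_norm, ← ContinuousLinearMap.sub_comp]
    have h1 := hC.dist_le_mul (node h j z) (node h j w)
    have h2 := (node h j).lipschitz.dist_le_mul z w
    rw [dist_eq_norm] at h1
    calc _ ≤ _ := ContinuousLinearMap.opNorm_comp_le _ _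
      _ ≤ (C * (‖node h j‖ * dist z w)) * ‖node h j‖ := by
        refine mul_le_mul_of_nonneg_right (h1.trans ?_) (norm_nonneg _)
        exact mul_le_mul_of_nonneg_left h2 C.2
      _ = _ := by push_cast; ring
  exact ⟨_, ((lipschitzWith_smul h).comp hK₁).sub ((lipschitzWith_smul h).comp hK₂)⟩

lemma dactD_apply (h : ℝ) (G : Fin m → E n → ℝ) (z w : ZS n m) :
    dactD h G z w = h * ∑ j, ∑ l, (z.2.1 j l * w.2.2 j l + z.2.2 j l * w.2.1 j l)
      - h * ∑ j, fderiv ℝ (G j) (node h j z) (node h j w) := by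
  simp [dactD]

lemma psum_single (i : Fin m) (w : Fin n → ℝ) (j : ℕ) :
    psum (Pi.single i w) j = if (i : ℕ) < j then w else 0 := by
  unfold psum
  rw [Finset.sum_eq_single i]
  · simp
  · intro b _ hb
    simp [Pi.single_eq_of_ne hb]
  · simp

lemma psum_zero_fun (j : ℕ) : psum (0 : Fin m → Fin n → ℝ) j = 0 := by simp [psum]

lemma dactD_momentum (h : ℝ) (G : Fin m → E n → ℝ) (z : ZS n m) (j : Fin m) (l : Fin n) :
    dactD h G z (0, 0, Pi.single j (Pi.single l 1)) =
      h * (z.2.1 j l - fderiv ℝ (G j) (node h j z) (0, Pi.single l 1)) := by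
  rw [dactD_apply, mul_sub]
  congr 2
  · rw [Finset.sum_eq_single j, Finset.sum_eq_single l]
    · simp
    · intro b _ hb; simp [Pi.single_eq_of_ne hb]
    · simp
    · intro b _ hb; simp [Pi.single_eq_of_ne hb]
    · simp
  · rw [Finset.sum_eq_single j]
    · simp [node_apply, psum_zero_fun]
    · intro b _ hb
      have : node h b ((0, 0, Pi.single j (Pi.single l 1)) : ZS n m) = 0 := by
        simp [node_apply, psum_zero_fun, Pi.single_eq_of_ne hb]
      rw [this, map_zero]
    · simp

lemma dactD_velocity (h : ℝ) (G : Fin m → E n → ℝ) (z : ZS n m) (j : Fin m) (l : Fin n) :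
    dactD h G z (0, Pi.single j (Pi.single l 1), 0) =
      h * (z.2.2 j l - h * ∑ i : Fin m, if (j : ℕ) < i then
        fderiv ℝ (G i) (node h i z) (Pi.single l 1, 0) else 0) := by
  rw [dactD_apply, mul_sub]
  congr 2
  · rw [Finset.sum_eq_single j, Finset.sum_eq_single l]
    · simp
    · intro b _ hb; simp [Pi.single_eq_of_ne hb]
    · simp
    · intro b _ hb; simp [Pi.single_eq_of_ne hb]
    · simp
  · rw [Finset.mul_sum]
    refine Finset.sum_congr rfl fun i _ => ?_
    rw [node_apply h i (0, Pi.single j (Pi.single l 1), 0)]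
    simp only [psum_single, Pi.zero_apply, zero_add]
    split_ifs
    · rw [← smul_eq_mul, ← map_smul]
      simp
    · simp only [smul_zero, mul_zero]
      exact map_zero _

lemma dactD_position (h : ℝ) (G : Fin m → E n → ℝ) (z : ZS n m) (l : Fin n) :
    dactD h G z (Pi.single l 1, 0, 0) =
      -(h * ∑ i : Fin m, fderiv ℝ (G i) (node h i z) (Pi.single l 1, 0)) := by
  rw [dactD_apply]
  simp [node_apply, psum_zero_fun]

lemma norm_pi_single_one (l : Fin n) : ‖(Pi.single l 1 : Fin n → ℝ)‖ = 1 := by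
  rw [Pi.norm_single, norm_one]

lemma psum_eq_range (y : ℕ → Fin n → ℝ) {j : ℕ} (hj : j ≤ m) :
    psum (fun i : Fin m => y i) j = ∑ i ∈ Finset.range j, y i := by
  induction j with
  | zero => simp [psum_zero]
  | succ j ih =>
    rw [Finset.sum_range_succ, ← ih (by omega)]
    exact psum_succ (fun i : Fin m => y i) ⟨j, hj⟩

end Discrete

/-! ### A Palais–Smale bound -/

section Discrete2
variable {n m : ℕ}

/-- The Palais–Smale type bound needed for the saddle point theorem. -/
lemma actD_palaisSmale {h : ℝ} (hh : 0 < h) {G : Fin m → E n → ℝ}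
    {R M : ℝ} (hM : 0 ≤ M) (hR : ∀ j z, R < ‖z‖ → G j z = 0 ∧ fderiv ℝ (G j) z = 0)
    (hdM : ∀ j z, ‖fderiv ℝ (G j) z‖ ≤ M) {α : ℝ} (hα : 0 < α) :
    ∃ ν ρ : ℝ, 0 < ν ∧ ∀ z, α / 2 ≤ actD h G z → ‖dactD h G z‖ < ν → ‖z‖ ≤ ρ := by
  set Y : ℝ := h * (m * M) + 1 with hY
  have hY0 : 0 < Y := by positivity
  set ν : ℝ := min h (α / (4 * (m * n * Y + 1))) with hνdef
  have hν : 0 < ν := by positivity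
  set ρ₁ : ℝ := |R| + h * (m * (M + 1)) with hρ₁
  refine ⟨ν, max ρ₁ (max (M + 1) Y), hν, fun z hz hd => ?_⟩
  have hsm : ν ≤ h := min_le_left _ _
  -- the derivative in a unit coordinate direction is at most `ν`
  have hunit : ∀ w : ZS n m, ‖w‖ ≤ 1 → |dactD h G z w| ≤ ν := fun w hw => by
    have := (dactD h G z).le_opNorm w
    rw [Real.norm_eq_abs] at this
    nlinarith [norm_nonneg (dactD h G z), norm_nonneg w]
  have hsing : ∀ (j : Fin m) (l : Fin n), ‖(Pi.single j (Pi.single l 1) : Fin m → Fin n → ℝ)‖ = 1 :=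
    fun j l => by rw [Pi.norm_single, norm_pi_single_one]
  have hv' : ∀ j l, |z.2.1 j l - fderiv ℝ (G j) (node h j z) (0, Pi.single l 1)| ≤ ν / h := by
    intro j l
    have h1 := hunit (0, 0, Pi.single j (Pi.single l 1)) (by
      simp [Prod.norm_def, hsing])
    rw [dactD_momentum, abs_mul, abs_of_pos hh] at h1
    rw [le_div_iff₀ hh]; linarith
  have hy' : ∀ j l, |z.2.2 j l - h * ∑ i : Fin m, if (j : ℕ) < i then
        fderiv ℝ (G i) (node h i z) (Pi.single l 1, 0) else 0| ≤ ν / h := by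
    intro j l
    have h1 := hunit (0, Pi.single j (Pi.single l 1), 0) (by
      simp [Prod.norm_def, hsing])
    rw [dactD_velocity, abs_mul, abs_of_pos hh] at h1
    rw [le_div_iff₀ hh]; linarith
  have hνh : ν / h ≤ 1 := by rw [div_le_one hh]; exact hsm
  have hv : ∀ j, ‖z.2.1 j‖ ≤ M + 1 := by
    intro j
    refine (pi_norm_le_iff_of_nonneg (by positivity)).2 fun l => ?_
    have h1 := (fderiv ℝ (G j) (node h j z)).le_opNorm ((0, Pi.single l 1) : E n)
    have h2 : ‖((0, Pi.single l 1) : E n)‖ = 1 := by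
      simp [Prod.norm_def, norm_pi_single_one]
    rw [h2, mul_one, Real.norm_eq_abs] at h1
    have h3 := hdM j (node h j z)
    rw [Real.norm_eq_abs]
    have h4 := abs_sub_abs_le_abs_sub (z.2.1 j l) (fderiv ℝ (G j) (node h j z) (0, Pi.single l 1))
    linarith [hv' j l]
  have hy : ∀ j, ‖z.2.2 j‖ ≤ Y := by
    intro j
    refine (pi_norm_le_iff_of_nonneg hY0.le).2 fun l => ?_
    have hs : |∑ i : Fin m, if (j : ℕ) < i then
        fderiv ℝ (G i) (node h i z) (Pi.single l 1, 0) else 0| ≤ m * M := by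
      calc _ ≤ ∑ i : Fin m, |if (j : ℕ) < i then
              fderiv ℝ (G i) (node h i z) (Pi.single l 1, 0) else 0| := Finset.abs_sum_le_sum_abs _ _
        _ ≤ ∑ _i : Fin m, M := by
            refine Finset.sum_le_sum fun i _ => ?_
            split_ifs
            · have h1 := (fderiv ℝ (G i) (node h i z)).le_opNorm ((Pi.single l 1, 0) : E n)
              have h2 : ‖((Pi.single l 1, 0) : E n)‖ = 1 := by
                simp [Prod.norm_def, norm_pi_single_one]
              rw [h2, mul_one, Real.norm_eq_abs] at h1
              exact h1.trans (hdM i _)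
            · simpa using hM
        _ = m * M := by simp
    rw [Real.norm_eq_abs]
    have h4 := abs_sub_abs_le_abs_sub (z.2.2 j l) (h * ∑ i : Fin m, if (j : ℕ) < i then
        fderiv ℝ (G i) (node h i z) (Pi.single l 1, 0) else 0)
    rw [abs_mul h, abs_of_pos hh] at h4
    have h5 := mul_le_mul_of_nonneg_left hs hh.le
    linarith [hy' j l]
  have hq : ‖z.1‖ ≤ ρ₁ := by
    by_contra! hq
    have hout : ∀ j, R < ‖node h j z‖ := fun j => by
      have h1 := norm_psum_le (by positivity : (0 : ℝ) ≤ M + 1) hv j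
      have h2 : ‖z.1‖ - ‖h • psum z.2.1 j‖ ≤ ‖z.1 + h • psum z.2.1 j‖ := by
        have := norm_sub_norm_le z.1 (-(h • psum z.2.1 j))
        rwa [norm_neg, sub_neg_eq_add] at this
      have h3 : ‖h • psum z.2.1 j‖ ≤ h * (m * (M + 1)) := by
        rw [norm_smul, Real.norm_of_nonneg hh.le]
        exact mul_le_mul_of_nonneg_left h1 hh.le
      have h4 : ‖z.1 + h • psum z.2.1 j‖ ≤ ‖node h j z‖ := by
        rw [node_apply]; exact norm_fst_le ((z.1 + h • psum z.2.1 j, z.2.2 j) : E n)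
      linarith [le_abs_self R]
    have hA : actD h G z ≤ h * (m * (n * (ν / h * Y))) := by
      unfold actD
      have h0 : ∑ j, G j (node h j z) = 0 := Finset.sum_eq_zero fun j _ => (hR j _ (hout j)).1
      rw [h0, mul_zero, sub_zero]
      refine mul_le_mul_of_nonneg_left ?_ hh.le
      calc _ ≤ ∑ _j : Fin m, ∑ _l : Fin n, ν / h * Y := by
            refine Finset.sum_le_sum fun j _ => Finset.sum_le_sum fun l _ => ?_
            have h1 := hv' j l
            rw [(hR j _ (hout j)).2] at h1
            simp only [zero_apply, sub_zero] at h1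
            have h2 : |z.2.2 j l| ≤ Y := (norm_le_pi_norm (z.2.2 j) l).trans (hy j)
            calc _ ≤ |z.2.1 j l * z.2.2 j l| := le_abs_self _
              _ = |z.2.1 j l| * |z.2.2 j l| := abs_mul _ _
              _ ≤ _ := mul_le_mul h1 h2 (abs_nonneg _) (by positivity)
        _ = _ := by simp
    have h1 : h * (m * (n * (ν / h * Y))) = ν * (m * n * Y) := by field_simp
    have h2 : ν ≤ α / (4 * (m * n * Y + 1)) := min_le_right _ _
    rw [le_div_iff₀ (by positivity)] at h2
    nlinarith
  refine max_le (hq.trans (le_max_left _ _)) (max_le ?_ ?_)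
  · refine (pi_norm_le_iff_of_nonneg (by positivity)).2 fun j => ?_
    exact (hv j).trans ((le_max_left _ _).trans (le_max_right _ _))
  · refine (pi_norm_le_iff_of_nonneg (by positivity)).2 fun j => ?_
    exact (hy j).trans ((le_max_right _ _).trans (le_max_right _ _))

end Discrete2

/-! ### Critical points and discrete trajectories -/

section Discrete3
variable {n m : ℕ}

/-- Critical points of the discretised action are discrete Hamiltonian trajectories which start on
`{y = 0}`, and whose action is the critical value. -/
lemma trajectory_of_critical {h : ℝ} (hh : 0 < h) {G : Fin m → E n → ℝ} {z : ZS n m}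
    (hz : dactD h G z = 0) :
    ∃ w : ℕ → E n, (w 0).2 = 0 ∧
      (∀ j : Fin m, w (j + 1) = w j + h • hamVF (G j) ((w j).1, (w (j + 1)).2)) ∧
      actD h G z = h * ∑ j : Fin m, lagr (G j) ((w j).1, (w (j + 1)).2) := by
  have hv : ∀ j l, z.2.1 j l = fderiv ℝ (G j) (node h j z) (0, Pi.single l 1) := fun j l => by
    have h1 := dactD_momentum h G z j l
    rw [hz, zero_apply] at h1
    have := (mul_eq_zero.1 h1.symm).resolve_left hh.ne'
    linarith
  have hy : ∀ j l, z.2.2 j l = h * ∑ i : Fin m, if (j : ℕ) < i then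
        fderiv ℝ (G i) (node h i z) (Pi.single l 1, 0) else 0 := fun j l => by
    have h1 := dactD_velocity h G z j l
    rw [hz, zero_apply] at h1
    have := (mul_eq_zero.1 h1.symm).resolve_left hh.ne'
    linarith
  have hq : ∀ l, ∑ i : Fin m, fderiv ℝ (G i) (node h i z) (Pi.single l 1, 0) = 0 := fun l => by
    have h1 := dactD_position h G z l
    rw [hz, zero_apply, eq_comm, neg_eq_zero] at h1
    exact (mul_eq_zero.1 h1).resolve_left hh.ne'
  let gx : Fin m → Fin n → ℝ := fun i l => fderiv ℝ (G i) (node h i z) (Pi.single l 1, 0)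
  let w : ℕ → E n := fun j => (z.1 + h • psum z.2.1 j, -(h • psum gx j))
  -- the total of `gx` vanishes, so sums over `i > j` are minus sums over `i ≤ j`
  have hw2 : ∀ j : Fin m, (w (j + 1)).2 = z.2.2 j := by
    intro j
    ext l
    have h1 : (∑ i : Fin m, if (j : ℕ) < i then gx i l else 0) = -(psum gx (j + 1)) l := by
      have h2 := hq l
      rw [eq_neg_iff_add_eq_zero]
      refine Eq.trans ?_ h2
      unfold psum
      rw [Finset.sum_apply, ← Finset.sum_add_distrib]
      refine Finset.sum_congr rfl fun i _ => ?_
      by_cases hij : (j : ℕ) < i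
      · have : ¬ (i : ℕ) < j + 1 := by omega
        simp [hij, this, gx]
      · have : (i : ℕ) < j + 1 := by omega
        simp [hij, this, gx]
    rw [hy j l]
    change -(h * psum gx (j + 1) l) = h * ∑ i : Fin m, if (j : ℕ) < i then gx i l else 0
    rw [h1]
    ring
  have hnode : ∀ j : Fin m, ((w j).1, (w (j + 1)).2) = node h j z := fun j => by
    rw [node_apply, hw2]
  refine ⟨w, by simp [w, psum_zero], fun j => ?_, ?_⟩
  · rw [hnode]
    refine Prod.ext ?_ ?_
    · have : z.2.1 j = (hamVF (G j) (node h j z)).1 := by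
        ext l; exact hv j l
      change z.1 + h • psum z.2.1 (j + 1) = z.1 + h • psum z.2.1 j + h • (hamVF (G j) (node h j z)).1
      rw [← this, psum_succ, smul_add, add_assoc]
    · have : -gx j = (hamVF (G j) (node h j z)).2 := by
        ext l; rfl
      change -(h • psum gx (j + 1)) = -(h • psum gx j) + h • (hamVF (G j) (node h j z)).2
      rw [← this, psum_succ, smul_add, smul_neg, neg_add]
  · unfold actD
    rw [← mul_sub, ← Finset.sum_sub_distrib]
    congr 1
    refine Finset.sum_congr rfl fun j _ => ?_
    rw [hnode]
    unfold lagr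
    congr 1
    refine Finset.sum_congr rfl fun l _ => ?_
    rw [← hv j l, node_apply, mul_comm]

/-- The inclusion `(q, y) ↦ (q, -y, y)` of the negative subspace of the action. -/
def negIncl (n m : ℕ) : (Fin n → ℝ) × (Fin m → Fin n → ℝ) →L[ℝ] ZS n m :=
  LinearMap.toContinuousLinearMap
    { toFun := fun p => (p.1, -p.2, p.2)
      map_add' := fun p r => by simp [add_comm]
      map_smul' := fun c p => by simp }

/-- The projection onto the negative subspace of the action along `{q = 0, v = y}`. -/
def negProj (n m : ℕ) : ZS n m →L[ℝ] (Fin n → ℝ) × (Fin m → Fin n → ℝ) :=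
  LinearMap.toContinuousLinearMap
    { toFun := fun z => (z.1, (1 / 2 : ℝ) • (z.2.2 - z.2.1))
      map_add' := fun p r => by
        simp only [Prod.fst_add, Prod.snd_add, Prod.mk_add_mk, ← smul_add]
        congr 2
        abel
      map_smul' := fun c p => by
        simp only [Prod.smul_fst, Prod.smul_snd, RingHom.id_apply, Prod.smul_mk, ← smul_sub]
        rw [smul_comm] }

lemma negIncl_apply (p : (Fin n → ℝ) × (Fin m → Fin n → ℝ)) :
    negIncl n m p = (p.1, -p.2, p.2) := rfl

lemma negProj_apply (z : ZS n m) :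
    negProj n m z = (z.1, (1 / 2 : ℝ) • (z.2.2 - z.2.1)) := rfl

lemma actD_negIncl_nonpos {h : ℝ} (hh : 0 < h) {G : Fin m → E n → ℝ}
    {R M : ℝ} (hM : 0 ≤ M) (hR : ∀ j z, R < ‖z‖ → G j z = 0) (hGM : ∀ j z, |G j z| ≤ M) :
    ∃ R₀ : ℝ, ∀ p, R₀ ≤ ‖p‖ → actD h G (negIncl n m p) ≤ 0 := by
  set Y : ℝ := m * M + 1 with hY
  have hY1 : 1 ≤ Y := by rw [hY]; linarith [show (0 : ℝ) ≤ m * M by positivity]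
  refine ⟨Y + (|R| + h * (m * Y) + 1), fun p hp => ?_⟩
  rw [negIncl_apply]
  have hquad : ∑ j, ∑ l, (-p.2) j l * p.2 j l = -∑ j, ∑ l, (p.2 j l) ^ 2 := by
    simp only [Pi.neg_apply, neg_mul, Finset.sum_neg_distrib, pow_two]
  unfold actD
  simp only
  rw [hquad, ← mul_sub]
  refine mul_nonpos_of_nonneg_of_nonpos hh.le ?_
  have hnn : 0 ≤ ∑ j, ∑ l, (p.2 j l) ^ 2 :=
    Finset.sum_nonneg fun _ _ => Finset.sum_nonneg fun _ _ => sq_nonneg _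
  by_cases hy : Y ≤ ‖p.2‖
  · have h1 : ∃ j l, Y ≤ |p.2 j l| := by
      by_contra! hcon
      have : ‖p.2‖ < Y := (pi_norm_lt_iff (by linarith)).2 fun j =>
        (pi_norm_lt_iff (by linarith)).2 fun l => hcon j l
      linarith
    obtain ⟨j, l, hjl⟩ := h1
    have h2 : (p.2 j l) ^ 2 ≤ ∑ j, ∑ l, (p.2 j l) ^ 2 :=
      (Finset.single_le_sum (f := fun l => (p.2 j l) ^ 2) (fun _ _ => sq_nonneg _)
        (Finset.mem_univ l)).trans
      (Finset.single_le_sum (f := fun j => ∑ l, (p.2 j l) ^ 2)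
        (fun _ _ => Finset.sum_nonneg fun _ _ => sq_nonneg _) (Finset.mem_univ j))
    have h3 : m * M ≤ (p.2 j l) ^ 2 := by
      rw [← sq_abs]; nlinarith
    have h4 : -(m * M) ≤ ∑ j, G j (node h j (p.1, -p.2, p.2)) := by
      have : |∑ j, G j (node h j (p.1, -p.2, p.2))| ≤ m * M := by
        calc _ ≤ ∑ j, |G j (node h j (p.1, -p.2, p.2))| := Finset.abs_sum_le_sum_abs _ _
          _ ≤ ∑ _j : Fin m, M := Finset.sum_le_sum fun j _ => hGM j _
          _ = m * M := by simp
      exact (abs_le.1 this).1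
    linarith
  · have h0 : ∑ j, G j (node h j (p.1, -p.2, p.2)) = 0 := by
      refine Finset.sum_eq_zero fun j _ => hR j _ ?_
      push Not at hy
      have hp1 : |R| + h * (m * Y) + 1 ≤ ‖p.1‖ := by
        have hpos : 0 ≤ |R| + h * (m * Y) + 1 := by positivity
        rw [Prod.norm_def] at hp
        rcases le_max_iff.1 hp with h | h <;> linarith
      have h1 : ‖psum (-p.2) j‖ ≤ m * Y := norm_psum_le (by linarith) (fun i => by
        rw [Pi.neg_apply, norm_neg]; exact (norm_le_pi_norm _ i).trans hy.le) j
      have h2 : ‖p.1‖ - ‖h • psum (-p.2) j‖ ≤ ‖p.1 + h • psum (-p.2) j‖ := by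
        have := norm_sub_norm_le p.1 (-(h • psum (-p.2) j))
        rwa [norm_neg, sub_neg_eq_add] at this
      have h3 : ‖h • psum (-p.2) j‖ ≤ h * (m * Y) := by
        rw [norm_smul, Real.norm_of_nonneg hh.le]
        exact mul_le_mul_of_nonneg_left h1 hh.le
      have h4 : ‖p.1 + h • psum (-p.2) j‖ ≤ ‖node h j (p.1, -p.2, p.2)‖ :=
        norm_fst_le ((p.1 + h • psum (-p.2) j, p.2 j) : E n)
      linarith [le_abs_self R]
    rw [h0]
    linarith

lemma exists_support_bound {F : E n → ℝ} (hF : ContDiff ℝ 2 F) (hc : HasCompactSupport F) :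
    ∃ R M : ℝ, 0 ≤ M ∧ (∀ z, R < ‖z‖ → F z = 0 ∧ fderiv ℝ F z = 0) ∧
      ∀ z, |F z| ≤ M ∧ ‖fderiv ℝ F z‖ ≤ M := by
  obtain ⟨R, hR⟩ := hc.isCompact.isBounded.subset_closedBall 0
  obtain ⟨M₁, hM₁⟩ := hc.exists_bound_of_continuous hF.continuous
  have hdc : HasCompactSupport (fderiv ℝ F) := hc.fderiv (𝕜 := ℝ)
  obtain ⟨M₂, hM₂⟩ := hdc.exists_bound_of_continuous (hF.continuous_fderiv (by norm_num))
  refine ⟨R, max M₁ M₂, (norm_nonneg _).trans ((hM₁ 0).trans (le_max_left _ _)), fun z hz => ?_,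
    fun z => ⟨(hM₁ z).trans (le_max_left _ _), (hM₂ z).trans (le_max_right _ _)⟩⟩
  have hz' : z ∉ tsupport F := fun hmem => by
    have := hR hmem
    rw [mem_closedBall_zero_iff] at this
    linarith
  exact ⟨image_eq_zero_of_notMem_tsupport hz',
    image_eq_zero_of_notMem_tsupport fun hmem => hz' (tsupport_fderiv_subset ℝ hmem)⟩

/-- If the discretised action is at least `α > 0` on the positive subspace `{q = 0, v = y}`, there is
a discrete Hamiltonian trajectory starting on `{y = 0}` of action at least `α / 2`. -/
theorem exists_discrete_trajectory {h : ℝ} (hh : 0 < h) {G : ℕ → E n → ℝ}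
    (hG : ∀ j, ContDiff ℝ 2 (G j)) (hGc : ∀ j, HasCompactSupport (G j)) {α : ℝ} (hα : 0 < α)
    (hlow : ∀ y : ℕ → Fin n → ℝ, α ≤ h * ∑ j ∈ Finset.range m, ∑ l, (y j l) ^ 2
      - h * ∑ j ∈ Finset.range m, G j (h • ∑ i ∈ Finset.range j, y i, y j)) :
    ∃ w : ℕ → E n, (w 0).2 = 0 ∧
      (∀ j < m, w (j + 1) = w j + h • hamVF (G j) ((w j).1, (w (j + 1)).2)) ∧
      α / 2 ≤ h * ∑ j ∈ Finset.range m, lagr (G j) ((w j).1, (w (j + 1)).2) := by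
  let G' : Fin m → E n → ℝ := fun j => G j
  have hG' : ∀ j, ContDiff ℝ 2 (G' j) := fun j => hG j
  choose R₁ M₁ hM₁ hR₁ hb₁ using fun j : Fin m => exists_support_bound (hG' j) (hGc j)
  obtain ⟨R, hR⟩ := Finite.exists_le R₁
  obtain ⟨M, hM⟩ := Finite.exists_le M₁
  have hout : ∀ j z, R < ‖z‖ → G' j z = 0 ∧ fderiv ℝ (G' j) z = 0 :=
    fun j z hz => hR₁ j z ((hR j).trans_lt hz)
  have hM0 : (0 : ℝ) ≤ max M 0 := le_max_right _ _
  obtain ⟨R₀, hR₀⟩ := actD_negIncl_nonpos hh (G := G') hM0 (fun j z hz => (hout j z hz).1)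
    (fun j z => ((hb₁ j z).1.trans (hM j)).trans (le_max_left _ _))
  obtain ⟨ν, ρ, hν, hPS⟩ := actD_palaisSmale hh (G := G') hM0 hout
    (fun j z => ((hb₁ j z).2.trans (hM j)).trans (le_max_left _ _)) hα
  obtain ⟨K, hK⟩ := exists_lipschitz_dactD h hG' (fun j => hGc j)
  have hfd : fderiv ℝ (actD h G') = dactD h G' := funext fun z => (hasFDerivAt_actD h hG' z).fderiv
  obtain ⟨z, hz, hzα⟩ := exists_saddle_point (contDiff_actD h hG') (hfd ▸ hK) (negIncl n m)
    (negProj n m) (fun p => by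
      rw [negIncl_apply, negProj_apply]
      refine Prod.ext rfl ?_
      simp only
      rw [sub_neg_eq_add, ← two_smul ℝ p.2, smul_smul]
      norm_num) hR₀ hα (fun z hz => by
      rw [negProj_apply, Prod.mk_eq_zero] at hz
      have hv : z.2.1 = z.2.2 := by
        have := (smul_eq_zero.1 hz.2).resolve_left (by norm_num)
        exact (sub_eq_zero.1 this).symm
      let y : ℕ → Fin n → ℝ := fun j => if hj : j < m then z.2.2 ⟨j, hj⟩ else 0
      have hy : (fun i : Fin m => y i) = z.2.2 := by
        funext i; simp [y]
      have h1 := hlow y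
      rw [Finset.sum_range, Finset.sum_range] at h1
      convert h1 using 1
      unfold actD
      congr 2
      · refine Finset.sum_congr rfl fun j _ => Finset.sum_congr rfl fun l _ => ?_
        rw [hv, ← hy, pow_two]
      · refine Finset.sum_congr rfl fun j _ => ?_
        rw [node_apply, hz.1, hv, zero_add, ← psum_eq_range y j.2.le, hy]
        have : y j = z.2.2 j := congrFun hy j
        rw [this]) hν (fun z h1 h2 => hPS z h1 (hfd ▸ h2))
  rw [hfd] at hz
  obtain ⟨w, hw0, hw1, hw2⟩ := trajectory_of_critical hh hz
  refine ⟨w, hw0, fun j hj => hw1 ⟨j, hj⟩, ?_⟩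
  rw [Finset.sum_range]
  rw [hw2] at hzα
  exact hzα

end Discrete3

/-! ### Hamiltonian trajectories and uniform bounds -/

section Trajectories
variable {n : ℕ}

lemma fderiv_slice {F : ℝ × E n → ℝ} (hF : Differentiable ℝ F) (t : ℝ) (z v : E n) :
    fderiv ℝ (fun w => F (t, w)) z v = fderiv ℝ F (t, z) (0, v) := by
  have h1 : HasFDerivAt (fun w : E n => (t, w)) (ContinuousLinearMap.inr ℝ ℝ (E n)) z :=
    hasFDerivAt_prodMk_right t z
  have h2 := (hF (t, z)).hasFDerivAt.comp z h1
  have h3 : fderiv ℝ (fun w => F (t, w)) z = _ := h2.fderiv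
  rw [h3]
  simp

/-- `γ` is a trajectory over `[0, 1]` of the Hamiltonian `F`. -/
def IsTraj (F : ℝ × E n → ℝ) (γ : ℝ → E n) : Prop :=
  ∀ t ∈ Set.Icc (0 : ℝ) 1, HasDerivWithinAt γ (XH n F t (γ t)) (Set.Icc 0 1) t

/-- Uniform bounds for the Hamiltonian vector field of `F` and for its action integrand. -/
structure HamBound (Λ : ℝ) (F : ℝ × E n → ℝ) : Prop where
  nonneg : 0 ≤ Λ
  lip : ∀ t s z w, ‖XH n F t z - XH n F s w‖ ≤ Λ * (|t - s| + ‖z - w‖)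
  bdd : ∀ t z, ‖XH n F t z‖ ≤ Λ
  act : ∀ t z w, |lagr (fun u => F (t, u)) z - lagr (fun u => F (t, u)) w| ≤ Λ * ‖z - w‖

lemma HamBound.mono {Λ Λ' : ℝ} {F : ℝ × E n → ℝ} (h : HamBound Λ F) (hl : Λ ≤ Λ') :
    HamBound Λ' F where
  nonneg := h.nonneg.trans hl
  lip t s z w := (h.lip t s z w).trans (mul_le_mul_of_nonneg_right hl (by positivity))
  bdd t z := (h.bdd t z).trans hl
  act t z w := (h.act t z w).trans (mul_le_mul_of_nonneg_right hl (by positivity))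

lemma exists_hamBound {F : ℝ × E n → ℝ} (hF : ContDiff ℝ 2 F) (hc : HasCompactSupport F) :
    ∃ Λ, HamBound Λ F := by
  have hdiff : Differentiable ℝ F := hF.differentiable (by norm_num)
  have hd : ContDiff ℝ 1 (fderiv ℝ F) := hF.fderiv_right (m := 1) (by norm_num)
  have hdc : HasCompactSupport (fderiv ℝ F) := hc.fderiv (𝕜 := ℝ)
  have hcomp : ∀ v : ℝ × E n, ContDiff ℝ 1 fun p => fderiv ℝ F p v := fun v =>
    hd.clm_apply contDiff_const
  have hcompc : ∀ v : ℝ × E n, HasCompactSupport fun p => fderiv ℝ F p v := fun v =>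
    hdc.comp_left (g := fun L : (ℝ × E n) →L[ℝ] ℝ => L v) (by simp)
  let X : ℝ × E n → E n := fun p => XH n F p.1 p.2
  have hX : X = fun p => ((fun i => fderiv ℝ F p (0, (0, Pi.single i 1))),
      (fun i => -fderiv ℝ F p (0, (Pi.single i 1, 0)))) := by
    funext p
    simp only [X, XH, fderiv_slice hdiff]
  have hX1 : ContDiff ℝ 1 X := by
    rw [hX]
    exact (contDiff_pi.2 fun i => hcomp _).prodMk (contDiff_pi.2 fun i => (hcomp _).neg)
  have hXc : HasCompactSupport X := by
    rw [hX]
    refine hdc.comp_left (g := fun L : (ℝ × E n) →L[ℝ] ℝ => (((fun i => L (0, (0, Pi.single i 1))),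
      (fun i => -L (0, (Pi.single i 1, 0)))) : E n)) ?_
    ext i <;> simp
  obtain ⟨K, hK⟩ := hX1.lipschitzWith_of_hasCompactSupport hXc (by norm_num)
  obtain ⟨M, hM⟩ := hXc.exists_bound_of_continuous hX1.continuous
  let A : ℝ × E n → ℝ := fun p => lagr (fun u => F (p.1, u)) p.2
  have hA : A = fun p => ∑ l, p.2.2 l * fderiv ℝ F p (0, (0, Pi.single l 1)) - F p := by
    funext p
    simp only [A, lagr, fderiv_slice hdiff]
  have hA1 : ContDiff ℝ 1 A := by
    rw [hA]
    refine (ContDiff.sum fun l _ => ?_).sub (hF.of_le (by norm_num))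
    refine ContDiff.mul ?_ (hcomp _)
    exact (contDiff_pi.1 (contDiff_snd.comp contDiff_snd)) l
  have hAc : HasCompactSupport A := by
    refine HasCompactSupport.intro hc fun p hp => ?_
    have h1 : F p = 0 := image_eq_zero_of_notMem_tsupport hp
    have h2 : fderiv ℝ F p = 0 :=
      image_eq_zero_of_notMem_tsupport fun hmem => hp (tsupport_fderiv_subset ℝ hmem)
    rw [hA]
    simp [h1, h2]
  obtain ⟨K', hK'⟩ := hA1.lipschitzWith_of_hasCompactSupport hAc (by norm_num)
  refine ⟨max (max K K') M, le_max_of_le_left (le_max_of_le_left K.2), fun t s z w => ?_,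
    fun t z => (hM (t, z)).trans (le_max_right _ _), fun t z w => ?_⟩
  · have h1 := hK.dist_le_mul (t, z) (s, w)
    rw [dist_eq_norm, Prod.dist_eq, Real.dist_eq, dist_eq_norm] at h1
    refine h1.trans (mul_le_mul (le_max_of_le_left (le_max_left _ _)) ?_ (by positivity)
      (le_max_of_le_left (le_max_of_le_left K.2)))
    exact max_le (by linarith [norm_nonneg (z - w)]) (by linarith [abs_nonneg (t - s)])
  · have h1 := hK'.dist_le_mul (t, z) (t, w)
    rw [Real.dist_eq, Prod.dist_eq, dist_self, dist_eq_norm, max_eq_right (norm_nonneg _)] at h1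
    exact h1.trans (mul_le_mul_of_nonneg_right (le_max_of_le_left (le_max_right _ _)) (norm_nonneg _))

/-- The time-reversed Hamiltonian. -/
def revH (F : ℝ × E n → ℝ) : ℝ × E n → ℝ := fun p => -F (1 - p.1, p.2)

lemma revH_revH (F : ℝ × E n → ℝ) : revH (revH F) = F := by
  funext p; simp [revH]

lemma XH_revH (F : ℝ × E n → ℝ) (t : ℝ) (z : E n) : XH n (revH F) t z = -XH n F (1 - t) z := by
  have : fderiv ℝ (fun w => revH F (t, w)) z = -fderiv ℝ (fun w => F (1 - t, w)) z := by
    simp only [revH]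
    exact fderiv_fun_neg
  unfold XH
  rw [this]
  ext i <;> simp

lemma lagr_revH (F : ℝ × E n → ℝ) (t : ℝ) (z : E n) :
    lagr (fun w => revH F (t, w)) z = -lagr (fun w => F (1 - t, w)) z := by
  have : fderiv ℝ (fun w => revH F (t, w)) z = -fderiv ℝ (fun w => F (1 - t, w)) z := by
    simp only [revH]
    exact fderiv_fun_neg
  unfold lagr
  rw [this]
  simp [revH]
  ring

lemma HamBound.rev {Λ : ℝ} {F : ℝ × E n → ℝ} (h : HamBound Λ F) : HamBound Λ (revH F) where
  nonneg := h.nonneg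
  lip t s z w := by
    have h1 := h.lip (1 - s) (1 - t) w z
    rw [XH_revH, XH_revH, neg_sub_neg]
    have h2 : (1 - s) - (1 - t) = t - s := by ring
    rwa [h2, norm_sub_rev w z] at h1
  bdd t z := by rw [XH_revH, norm_neg]; exact h.bdd _ _
  act t z w := by
    rw [lagr_revH, lagr_revH, neg_sub_neg, abs_sub_comm]
    exact h.act _ _ _

lemma IsTraj.rev {F : ℝ × E n → ℝ} {γ : ℝ → E n} (h : IsTraj F γ) :
    IsTraj (revH F) (fun t => γ (1 - t)) := by
  intro t ht
  have ht' : 1 - t ∈ Set.Icc (0 : ℝ) 1 := ⟨by linarith [ht.2], by linarith [ht.1]⟩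
  have h1 := (h (1 - t) ht').scomp t ((hasDerivWithinAt_id t (Set.Icc 0 1)).const_sub 1)
    (fun s hs => ⟨by simpa using hs.2, by simpa using hs.1⟩)
  simpa [XH_revH, Function.comp_def] using h1

lemma exists_isTraj {Λ : ℝ} {F : ℝ × E n → ℝ} (h : HamBound Λ F) (z : E n) :
    ∃ γ, IsTraj F γ ∧ γ 0 = z := by
  have hΛ := h.nonneg
  let L : NNReal := ⟨Λ, hΛ⟩
  have hpl : IsPicardLindelof (XH n F) (tmin := 0) (tmax := 1) ⟨0, by simp⟩ z L 0 L L := by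
    refine ⟨fun t _ => ?_, fun x _ => ?_, fun t _ x _ => h.bdd t x, by simp⟩
    · refine (LipschitzWith.of_dist_le_mul fun x y => ?_).lipschitzOnWith
      rw [dist_eq_norm, dist_eq_norm]
      have h1 := h.lip t t x y
      rw [sub_self, abs_zero, zero_add] at h1
      exact h1
    · refine (LipschitzWith.of_dist_le_mul (K := L) fun t s => ?_).continuous.continuousOn
      rw [dist_eq_norm, Real.dist_eq]
      have h1 := h.lip t s x x
      rw [sub_self, norm_zero, add_zero] at h1
      exact h1
  obtain ⟨γ, hγ0, hγ⟩ := hpl.exists_eq_forall_mem_Icc_hasDerivWithinAt₀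
  exact ⟨γ, hγ, hγ0⟩

lemma IsTraj.norm_sub_le {Λ : ℝ} {F : ℝ × E n → ℝ} (h : HamBound Λ F) {γ : ℝ → E n}
    (hγ : IsTraj F γ) {s t : ℝ} (hs : s ∈ Set.Icc (0 : ℝ) 1) (ht : t ∈ Set.Icc (0 : ℝ) 1) :
    ‖γ t - γ s‖ ≤ Λ * |t - s| :=
  Convex.norm_image_sub_le_of_norm_hasDerivWithin_le hγ (fun t _ => h.bdd t _)
    (convex_Icc 0 1) hs ht

end Trajectories

/-! ### Convergence of the symplectic Euler scheme -/

section Euler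
variable {n : ℕ}

/-- Midpoint sampling times `(i + 1/2) / N`. -/
def sampT (N i : ℕ) : ℝ := (i + 1 / 2) / N

lemma sampT_mem {N i : ℕ} (hi : i < N) : sampT N i ∈ Set.Icc (0 : ℝ) 1 := by
  have hN : (0 : ℝ) < N := by exact_mod_cast (Nat.zero_le i).trans_lt hi
  have h1 : (i : ℝ) + 1 ≤ N := by exact_mod_cast hi
  constructor
  · unfold sampT; positivity
  · unfold sampT; rw [div_le_one hN]; linarith

lemma one_sub_sampT {N i : ℕ} (hi : i < N) : 1 - sampT N i = sampT N (N - 1 - i) := by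
  have hN : (0 : ℝ) < N := by exact_mod_cast (Nat.zero_le i).trans_lt hi
  have h1 : ((N - 1 - i : ℕ) : ℝ) = N - 1 - i := by
    rw [Nat.cast_sub (by omega), Nat.cast_sub (by omega)]; simp
  unfold sampT
  rw [h1]
  field_simp
  ring

/-- Convergence of the symplectic Euler scheme: with step `1 / N`, end points and action sums are
approximated up to a constant times the initial error plus `1 / N`. The constant depends only on
the bound `Λ`. -/
lemma euler_error {Λ : ℝ} (hΛ : 0 ≤ Λ) :
    ∃ C : ℝ, 1 ≤ C ∧ ∀ (F : ℝ × E n → ℝ), HamBound Λ F → ∀ γ, IsTraj F γ → ∀ N : ℕ, 0 < N →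
      ∀ w : ℕ → E n, (∀ i < N, w (i + 1) = w i + (1 / N : ℝ) •
        hamVF (fun u => F (sampT N i, u)) ((w i).1, (w (i + 1)).2)) →
      ‖w N - γ 1‖ ≤ C * (‖w 0 - γ 0‖ + 1 / N) ∧
      |1 / N * ∑ i ∈ Finset.range N, lagr (fun u => F (sampT N i, u)) ((w i).1, (w (i + 1)).2)
        - 1 / N * ∑ i ∈ Finset.range N, lagr (fun u => F (sampT N i, u)) (γ (sampT N i))|
        ≤ C * (‖w 0 - γ 0‖ + 1 / N) := by
  set D : ℝ := Λ * (1 + 2 * Λ) with hD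
  have hD0 : 0 ≤ D := by positivity
  set C₁ : ℝ := Real.exp Λ * (1 + D) with hC₁
  have hC₁1 : 1 ≤ C₁ := by
    have := Real.one_le_exp hΛ
    nlinarith
  refine ⟨(1 + Λ) * C₁ + 2 * Λ ^ 2, by nlinarith, fun F hF γ hγ N hN w hw => ?_⟩
  have hNr : (0 : ℝ) < N := by exact_mod_cast hN
  set h : ℝ := 1 / N with hh
  have hh0 : 0 < h := by positivity
  have hNh : N * h = 1 := by rw [hh]; field_simp
  set e : ℕ → ℝ := fun i => ‖w i - γ (i * h)‖ with he
  have hti : ∀ i : ℕ, i ≤ N → (i * h : ℝ) ∈ Set.Icc (0 : ℝ) 1 := fun i hi => by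
    have : (i : ℝ) ≤ N := by exact_mod_cast hi
    refine ⟨by positivity, ?_⟩
    rw [← hNh]
    exact mul_le_mul_of_nonneg_right this hh0.le
  have hsamp : ∀ i : ℕ, sampT N i = i * h + h / 2 := fun i => by
    rw [hh, sampT]; field_simp
  -- the evaluation points stay `Λ / N`-close to the discrete trajectory
  have hζ : ∀ i < N, ‖((w i).1, (w (i + 1)).2) - w i‖ ≤ Λ * h := by
    intro i hi
    have h1 : ‖w (i + 1) - w i‖ ≤ Λ * h := by
      rw [hw i hi, add_sub_cancel_left, norm_smul, Real.norm_of_nonneg hh0.le, mul_comm]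
      exact mul_le_mul_of_nonneg_right (hF.bdd (sampT N i) _) hh0.le
    refine le_trans ?_ h1
    refine max_le ?_ ?_
    · simp
    · exact norm_snd_le (w (i + 1) - w i)
  have hstep : ∀ i < N, e (i + 1) ≤ (1 + Λ * h) * e i + D * h ^ 2 := by
    intro i hi
    set ζ : E n := ((w i).1, (w (i + 1)).2) with hζdef
    set c : E n := XH n F (sampT N i) ζ with hc
    have hwi : w (i + 1) = w i + h • c := hw i hi
    have hsub : Set.Icc (i * h : ℝ) ((i + 1 : ℕ) * h) ⊆ Set.Icc (0 : ℝ) 1 :=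
      Set.Icc_subset_Icc (hti i hi.le).1 (hti (i + 1) hi).2
    have hle : (i * h : ℝ) ≤ (i + 1 : ℕ) * h := by push_cast; nlinarith
    have hmv := Convex.norm_image_sub_le_of_norm_hasDerivWithin_le
      (f := fun t => γ t - t • c) (f' := fun t => XH n F t (γ t) - c)
      (s := Set.Icc (i * h : ℝ) ((i + 1 : ℕ) * h)) (C := Λ * (e i + (1 + 2 * Λ) * h))
      (x := (i * h : ℝ)) (y := ((i + 1 : ℕ) * h : ℝ))
      (fun t ht => by
        have h1 := ((hγ t (hsub ht)).mono hsub).fun_sub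
          ((hasDerivWithinAt_id t (Set.Icc (i * h : ℝ) ((i + 1 : ℕ) * h))).smul_const c)
        simpa using h1)
      (fun t ht => by
        have h0 : |t - i * h| ≤ h := by
          have h1 := ht.1
          have h2 := ht.2
          push_cast at h2
          rw [abs_le]; constructor <;> nlinarith
        have h1 : |t - sampT N i| ≤ h := by
          have h1 := ht.1
          have h2 := ht.2
          push_cast at h2
          rw [abs_le, hsamp]; constructor <;> nlinarith
        have h2 : ‖γ t - γ (i * h)‖ ≤ Λ * h :=
          (hγ.norm_sub_le hF (hti i hi.le) (hsub ht)).trans (mul_le_mul_of_nonneg_left h0 hΛ)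
        have h3 : ‖γ t - ζ‖ ≤ Λ * h + e i + Λ * h := by
          have h4 : γ t - ζ = (γ t - γ (i * h)) - (w i - γ (i * h)) - (ζ - w i) := by abel
          rw [h4]
          refine (norm_sub_le _ _).trans (add_le_add ((norm_sub_le _ _).trans ?_) (hζ i hi))
          exact add_le_add h2 le_rfl
        refine (hF.lip t (sampT N i) (γ t) ζ).trans (mul_le_mul_of_nonneg_left ?_ hΛ)
        nlinarith)
      (convex_Icc _ _) (Set.left_mem_Icc.2 hle) (Set.right_mem_Icc.2 hle)
    have h5 : ((i + 1 : ℕ) * h : ℝ) - i * h = h := by push_cast; ring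
    rw [h5, Real.norm_of_nonneg hh0.le] at hmv
    have h6 : w (i + 1) - γ ((i + 1 : ℕ) * h) = (w i - γ (i * h)) -
        ((γ ((i + 1 : ℕ) * h) - ((i + 1 : ℕ) * h : ℝ) • c) - (γ (i * h) - (i * h : ℝ) • c)) := by
      have h7 : ((i + 1 : ℕ) * h : ℝ) • c = (i * h : ℝ) • c + h • c := by
        rw [← add_smul]; congr 1; push_cast; ring
      rw [hwi, h7]; abel
    have h8 : e (i + 1) ≤ e i + Λ * (e i + (1 + 2 * Λ) * h) * h := by
      change ‖w (i + 1) - γ ((i + 1 : ℕ) * h)‖ ≤ _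
      rw [h6]
      exact (norm_sub_le _ _).trans (add_le_add le_rfl hmv)
    refine h8.trans (le_of_eq ?_)
    rw [hD]; ring
  have hbound : ∀ i ≤ N, e i ≤ (1 + Λ * h) ^ i * (e 0 + i * (D * h ^ 2)) := by
    intro i
    induction i with
    | zero => intro _; simp
    | succ i ih =>
      intro hi
      have h1 := ih (by omega)
      have h2 := hstep i (by omega)
      have h3 : 1 ≤ (1 + Λ * h) ^ (i + 1) := one_le_pow₀ (by nlinarith [mul_nonneg hΛ hh0.le])
      have h4 : 0 ≤ D * h ^ 2 := by positivity
      calc e (i + 1) ≤ (1 + Λ * h) * e i + D * h ^ 2 := h2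
        _ ≤ (1 + Λ * h) * ((1 + Λ * h) ^ i * (e 0 + i * (D * h ^ 2))) +
            (1 + Λ * h) ^ (i + 1) * (D * h ^ 2) :=
          add_le_add (mul_le_mul_of_nonneg_left h1 (by positivity)) (le_mul_of_one_le_left h4 h3)
        _ = _ := by push_cast; ring
  have he0 : e 0 = ‖w 0 - γ 0‖ := by simp [he]
  have hee : ∀ i ≤ N, e i ≤ C₁ * (‖w 0 - γ 0‖ + h) := by
    intro i hi
    have hir : (i : ℝ) ≤ N := by exact_mod_cast hi
    have h1 : (1 + Λ * h) ^ i ≤ Real.exp Λ := by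
      have h2 : 1 + Λ * h ≤ Real.exp (Λ * h) := by linarith [Real.add_one_le_exp (Λ * h)]
      calc (1 + Λ * h) ^ i ≤ Real.exp (Λ * h) ^ i := pow_le_pow_left₀ (by positivity) h2 i
        _ = Real.exp (i * (Λ * h)) := (Real.exp_nat_mul _ _).symm
        _ ≤ Real.exp Λ := by
          refine Real.exp_le_exp.2 ?_
          calc i * (Λ * h) ≤ N * (Λ * h) := mul_le_mul_of_nonneg_right hir (by positivity)
            _ = Λ * (N * h) := by ring
            _ = Λ := by rw [hNh, mul_one]
    have h3 : (i : ℝ) * (D * h ^ 2) ≤ D * h := by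
      calc (i : ℝ) * (D * h ^ 2) ≤ N * (D * h ^ 2) := mul_le_mul_of_nonneg_right hir (by positivity)
        _ = D * h * (N * h) := by ring
        _ = D * h := by rw [hNh, mul_one]
    have h4 : 0 ≤ e 0 := norm_nonneg _
    calc e i ≤ _ := hbound i hi
      _ ≤ Real.exp Λ * (e 0 + D * h) := mul_le_mul h1 (by linarith) (by positivity) (by positivity)
      _ ≤ Real.exp Λ * ((1 + D) * (e 0 + h)) := by
        refine mul_le_mul_of_nonneg_left ?_ (Real.exp_pos _).le
        nlinarith [mul_nonneg hD0 h4]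
      _ = _ := by rw [he0, hC₁]; ring
  have hpos : 0 ≤ ‖w 0 - γ 0‖ := norm_nonneg _
  have hC₁0 : 0 ≤ C₁ := by linarith
  constructor
  · have h1 := hee N le_rfl
    simp only [he, hNh] at h1
    refine h1.trans (mul_le_mul_of_nonneg_right ?_ (by positivity))
    nlinarith [mul_nonneg hΛ hC₁0]
  · rw [← mul_sub, ← Finset.sum_sub_distrib, abs_mul, abs_of_pos hh0]
    have hterm : ∀ i ∈ Finset.range N,
        |lagr (fun u => F (sampT N i, u)) ((w i).1, (w (i + 1)).2) -
          lagr (fun u => F (sampT N i, u)) (γ (sampT N i))| ≤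
          ((1 + Λ) * C₁ + 2 * Λ ^ 2) * (‖w 0 - γ 0‖ + h) := by
      intro i hi
      have hi' := Finset.mem_range.1 hi
      refine (hF.act _ _ _).trans ?_
      have h1 : ‖γ (sampT N i) - γ (i * h)‖ ≤ Λ * h := by
        refine (hγ.norm_sub_le hF (hti i hi'.le) (sampT_mem hi')).trans ?_
        refine mul_le_mul_of_nonneg_left ?_ hΛ
        rw [hsamp, abs_le]; constructor <;> linarith
      have h2 : ‖((w i).1, (w (i + 1)).2) - γ (sampT N i)‖ ≤
          Λ * h + C₁ * (‖w 0 - γ 0‖ + h) + Λ * h := by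
        have h3 : ((w i).1, (w (i + 1)).2) - γ (sampT N i) =
            (((w i).1, (w (i + 1)).2) - w i) + (w i - γ (i * h)) - (γ (sampT N i) - γ (i * h)) := by
          abel
        rw [h3]
        exact (norm_sub_le _ _).trans (add_le_add ((norm_add_le _ _).trans
          (add_le_add (hζ i hi') (hee i hi'.le))) h1)
      refine (mul_le_mul_of_nonneg_left h2 hΛ).trans ?_
      nlinarith [mul_nonneg (sq_nonneg Λ) hpos, mul_nonneg hC₁0 hpos, mul_nonneg hC₁0 hh0.le]
    calc h * |∑ i ∈ Finset.range N, _| ≤ h * ∑ i ∈ Finset.range N, _ :=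
          mul_le_mul_of_nonneg_left (Finset.abs_sum_le_sum_abs _ _) hh0.le
      _ ≤ h * (N * (((1 + Λ) * C₁ + 2 * Λ ^ 2) * (‖w 0 - γ 0‖ + h))) := by
          refine mul_le_mul_of_nonneg_left ?_ hh0.le
          have := Finset.sum_le_card_nsmul _ _ _ hterm
          simpa using this
      _ = (N * h) * (((1 + Λ) * C₁ + 2 * Λ ^ 2) * (‖w 0 - γ 0‖ + h)) := by ring
      _ = _ := by rw [hNh, one_mul]

end Euler

/-! ### Oscillation and quadratic estimates -/

section Osc
variable {n : ℕ}

/-- The oscillation of `H (t, ·)`. -/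
def osc (H : ℝ × E n → ℝ) (t : ℝ) : ℝ :=
  sSup (Set.range fun z => H (t, z)) - sInf (Set.range fun z => H (t, z))

lemma sub_le_osc {H : ℝ × E n → ℝ} {M : ℝ} (hM : ∀ p, |H p| ≤ M) (t : ℝ) (z w : E n) :
    H (t, z) - H (t, w) ≤ osc H t := by
  have ha : BddAbove (Set.range fun z => H (t, z)) :=
    ⟨M, by rintro _ ⟨z, rfl⟩; exact (abs_le.1 (hM _)).2⟩
  have hb : BddBelow (Set.range fun z => H (t, z)) :=
    ⟨-M, by rintro _ ⟨z, rfl⟩; exact (abs_le.1 (hM _)).1⟩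
  exact sub_le_sub (le_csSup ha ⟨z, rfl⟩) (csInf_le hb ⟨w, rfl⟩)

lemma osc_le_add {H : ℝ × E n → ℝ} {M : ℝ} (hM : ∀ p, |H p| ≤ M) {K : ℝ}
    (hK : ∀ t s z, |H (t, z) - H (s, z)| ≤ K * |t - s|) (t s : ℝ) :
    osc H t ≤ osc H s + 2 * K * |t - s| := by
  have ha : BddAbove (Set.range fun z => H (s, z)) :=
    ⟨M, by rintro _ ⟨z, rfl⟩; exact (abs_le.1 (hM _)).2⟩
  have hb : BddBelow (Set.range fun z => H (s, z)) :=
    ⟨-M, by rintro _ ⟨z, rfl⟩; exact (abs_le.1 (hM _)).1⟩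
  have h1 : sSup (Set.range fun z => H (t, z)) ≤ sSup (Set.range fun z => H (s, z)) + K * |t - s| := by
    refine csSup_le (Set.range_nonempty _) ?_
    rintro _ ⟨z, rfl⟩
    have h2 := (abs_le.1 (hK t s z)).2
    have h3 : H (s, z) ≤ _ := le_csSup ha ⟨z, rfl⟩
    simp only at h3 ⊢
    linarith
  have h2 : sInf (Set.range fun z => H (s, z)) - K * |t - s| ≤ sInf (Set.range fun z => H (t, z)) := by
    refine le_csInf (Set.range_nonempty _) ?_
    rintro _ ⟨z, rfl⟩
    have h2 := (abs_le.1 (hK t s z)).1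
    have h3 : _ ≤ H (s, z) := csInf_le hb ⟨z, rfl⟩
    simp only at h3 ⊢
    linarith
  unfold osc
  linarith

lemma osc_sum_le {H : ℝ × E n → ℝ} {M : ℝ} (hM : ∀ p, |H p| ≤ M) {K : ℝ} (hK0 : 0 ≤ K)
    (hK : ∀ t s z, |H (t, z) - H (s, z)| ≤ K * |t - s|) {N : ℕ} (hN : 0 < N) :
    1 / N * ∑ i ∈ Finset.range N, osc H (sampT N i) ≤ HNorm n H + 2 * K / N := by
  have hNr : (0 : ℝ) < N := by exact_mod_cast hN
  set h : ℝ := 1 / N with hh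
  have hh0 : 0 < h := by positivity
  have hNh : N * h = 1 := by rw [hh]; field_simp
  have hcont : Continuous (osc H) := by
    let L : NNReal := ⟨2 * K, by positivity⟩
    have hL : (L : ℝ) = 2 * K := rfl
    refine (LipschitzWith.of_dist_le_mul (K := L) fun t s => ?_).continuous
    rw [Real.dist_eq, Real.dist_eq, hL]
    have h1 := osc_le_add hM hK t s
    have h2 := osc_le_add hM hK s t
    rw [abs_sub_comm s t] at h2
    exact abs_le.2 ⟨by linarith, by linarith⟩
  have hintg : HNorm n H = ∑ i ∈ Finset.range N, ∫ t in (i * h : ℝ)..((i + 1 : ℕ) * h), osc H t := by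
    rw [intervalIntegral.sum_integral_adjacent_intervals (a := fun i : ℕ => (i * h : ℝ))
      (fun k _ => hcont.intervalIntegrable _ _)]
    simp only [Nat.cast_zero, zero_mul, hNh]
    rfl
  have hterm : ∀ i ∈ Finset.range N, h * osc H (sampT N i) - h * (2 * K * h) ≤
      ∫ t in (i * h : ℝ)..((i + 1 : ℕ) * h), osc H t := by
    intro i _
    have hle : (i * h : ℝ) ≤ (i + 1 : ℕ) * h := by push_cast; nlinarith
    have h1 : ∫ _t in (i * h : ℝ)..((i + 1 : ℕ) * h), (osc H (sampT N i) - 2 * K * h) =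
        h * osc H (sampT N i) - h * (2 * K * h) := by
      rw [intervalIntegral.integral_const, smul_eq_mul]; push_cast; ring
    rw [← h1]
    refine intervalIntegral.integral_mono_on hle (by simp) (hcont.intervalIntegrable _ _) ?_
    intro t ht
    have h2 := osc_le_add hM hK (sampT N i) t
    have h3 : |sampT N i - t| ≤ h := by
      have h4 : sampT N i = i * h + h / 2 := by rw [hh, sampT]; field_simp
      have h5 := ht.1
      have h6 := ht.2
      push_cast at h6
      rw [abs_le, h4]; constructor <;> nlinarith
    have h4 : 2 * K * |sampT N i - t| ≤ 2 * K * h := mul_le_mul_of_nonneg_left h3 (by positivity)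
    linarith
  have hs := Finset.sum_le_sum hterm
  rw [← hintg, Finset.sum_sub_distrib, ← Finset.mul_sum, Finset.sum_const, Finset.card_range,
    nsmul_eq_mul] at hs
  have h7 : (N : ℝ) * (h * (2 * K * h)) = 2 * K / N := by
    rw [hh]; field_simp
  linarith

lemma sum_range_blocks {M : Type*} [AddCommMonoid M] (f : ℕ → M) (K N : ℕ) :
    ∑ j ∈ Finset.range (K * N), f j = ∑ k ∈ Finset.range K, ∑ i ∈ Finset.range N, f (k * N + i) := by
  induction K with
  | zero => simp
  | succ K ih => rw [add_mul, one_mul, Finset.sum_range_add, ih, Finset.sum_range_succ]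

/-- The squared Euclidean length on `E n`. -/
def sqLen (z : E n) : ℝ := ∑ l, ((z.1 l) ^ 2 + (z.2 l) ^ 2)

/-- The discretised quadratic form dominates the squared length of the nodes on `{q = 0, v = y}`. -/
lemma node_sqLen_le {N : ℕ} (hN : 0 < N) (y : ℕ → Fin n → ℝ) :
    1 / N * ∑ j ∈ Finset.range (5 * N), sqLen (((1 / N : ℝ) • ∑ i ∈ Finset.range j, y i, y j) : E n)
      ≤ 26 * (1 / N * ∑ j ∈ Finset.range (5 * N), ∑ l, (y j l) ^ 2) := by
  have hNr : (0 : ℝ) < N := by exact_mod_cast hN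
  set h : ℝ := 1 / N with hh
  have hh0 : 0 < h := by positivity
  have hNh : N * h = 1 := by rw [hh]; field_simp
  set S : ℝ := h * ∑ j ∈ Finset.range (5 * N), ∑ l, (y j l) ^ 2 with hS
  have hpos : ∀ j ∈ Finset.range (5 * N), sqLen ((h • ∑ i ∈ Finset.range j, y i, y j) : E n) ≤
      5 * S + ∑ l, (y j l) ^ 2 := by
    intro j hj
    have hj' : j ≤ 5 * N := (Finset.mem_range.1 hj).le
    unfold sqLen
    rw [Finset.sum_add_distrib]
    refine add_le_add ?_ le_rfl
    have h1 : ∀ l, ((h • ∑ i ∈ Finset.range j, y i) l) ^ 2 ≤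
        5 * h * ∑ i ∈ Finset.range (5 * N), (y i l) ^ 2 := by
      intro l
      rw [Pi.smul_apply, Finset.sum_apply, smul_eq_mul, mul_pow]
      have h2 : (∑ i ∈ Finset.range j, y i l) ^ 2 ≤ j * ∑ i ∈ Finset.range j, (y i l) ^ 2 := by
        have := sq_sum_le_card_mul_sum_sq (s := Finset.range j) (f := fun i => y i l)
        simpa using this
      have h3 : ∑ i ∈ Finset.range j, (y i l) ^ 2 ≤ ∑ i ∈ Finset.range (5 * N), (y i l) ^ 2 :=
        Finset.sum_le_sum_of_subset_of_nonneg (Finset.range_mono hj') fun _ _ _ => sq_nonneg _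
      have h4 : (j : ℝ) ≤ 5 * N := by exact_mod_cast hj'
      have h5 : 0 ≤ ∑ i ∈ Finset.range j, (y i l) ^ 2 := Finset.sum_nonneg fun _ _ => sq_nonneg _
      calc h ^ 2 * (∑ i ∈ Finset.range j, y i l) ^ 2
          ≤ h ^ 2 * ((5 * N) * ∑ i ∈ Finset.range (5 * N), (y i l) ^ 2) := by
            refine mul_le_mul_of_nonneg_left (h2.trans ?_) (sq_nonneg _)
            exact mul_le_mul h4 h3 h5 (by positivity)
        _ = 5 * h * (N * h) * ∑ i ∈ Finset.range (5 * N), (y i l) ^ 2 := by ring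
        _ = _ := by rw [hNh, mul_one]
    refine (Finset.sum_le_sum fun l _ => h1 l).trans (le_of_eq ?_)
    rw [← Finset.mul_sum, Finset.sum_comm, hS]
    ring
  have h2 := Finset.sum_le_sum hpos
  rw [Finset.sum_add_distrib, Finset.sum_const, Finset.card_range, nsmul_eq_mul] at h2
  have h3 := mul_le_mul_of_nonneg_left h2 hh0.le
  refine h3.trans (le_of_eq ?_)
  rw [mul_add, ← hS]
  push_cast
  have : h * (5 * (N : ℝ) * (5 * S)) = 25 * S * (N * h) := by ring
  rw [this, hNh]
  ring

end Osc

/-! ### Connecting trajectories -/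

section Core
variable {n : ℕ}

/-- The Hamiltonian at step `j` of the concatenation of the Hamiltonians `F 0, F 1, …`, each run
over unit time in `N` steps. -/
def concatH (F : ℕ → ℝ × E n → ℝ) (N j : ℕ) : E n → ℝ := fun u => F (j / N) (sampT N (j % N), u)

lemma concatH_block (F : ℕ → ℝ × E n → ℝ) {N i : ℕ} (k : ℕ) (hi : i < N) :
    concatH F N (k * N + i) = fun u => F k (sampT N i, u) := by
  have hN : 0 < N := by omega
  have h1 : (k * N + i) / N = k := by
    rw [Nat.add_comm, Nat.add_mul_div_right _ _ hN, Nat.div_eq_of_lt hi, zero_add]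
  have h2 : (k * N + i) % N = i := by
    rw [Nat.add_comm, Nat.add_mul_mod_self_right, Nat.mod_eq_of_lt hi]
  funext u
  rw [concatH, h1, h2]

/-- A discrete trajectory of the concatenation shadows the concatenation of exact trajectories,
with nearly the same action. -/
lemma concat_error {Λ C : ℝ} (hC : 1 ≤ C)
    (hE : ∀ (F : ℝ × E n → ℝ), HamBound Λ F → ∀ γ, IsTraj F γ → ∀ N : ℕ, 0 < N →
      ∀ w : ℕ → E n, (∀ i < N, w (i + 1) = w i + (1 / N : ℝ) •
        hamVF (fun u => F (sampT N i, u)) ((w i).1, (w (i + 1)).2)) →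
      ‖w N - γ 1‖ ≤ C * (‖w 0 - γ 0‖ + 1 / N) ∧
      |1 / N * ∑ i ∈ Finset.range N, lagr (fun u => F (sampT N i, u)) ((w i).1, (w (i + 1)).2)
        - 1 / N * ∑ i ∈ Finset.range N, lagr (fun u => F (sampT N i, u)) (γ (sampT N i))|
        ≤ C * (‖w 0 - γ 0‖ + 1 / N))
    {F : ℕ → ℝ × E n → ℝ} (hF : ∀ k, HamBound Λ (F k)) {N K : ℕ} (hN : 0 < N)
    {w : ℕ → E n} (hw : ∀ j < K * N, w (j + 1) = w j + (1 / N : ℝ) •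
      hamVF (concatH F N j) ((w j).1, (w (j + 1)).2))
    {γ : ℕ → ℝ → E n} (hγ : ∀ k < K, IsTraj (F k) (γ k)) (hγ0 : γ 0 0 = w 0)
    (hjoin : ∀ k, γ (k + 1) 0 = γ k 1) :
    |1 / N * ∑ j ∈ Finset.range (K * N), lagr (concatH F N j) ((w j).1, (w (j + 1)).2)
      - ∑ k ∈ Finset.range K, 1 / N * ∑ i ∈ Finset.range N,
          lagr (fun u => F k (sampT N i, u)) (γ k (sampT N i))| ≤ K * (2 * C) ^ K / N := by
  have hNr : (0 : ℝ) < N := by exact_mod_cast hN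
  have hblock : ∀ k < K, ‖w (k * N + N) - γ k 1‖ ≤ C * (‖w (k * N) - γ k 0‖ + 1 / N) ∧
      |1 / N * ∑ i ∈ Finset.range N, lagr (concatH F N (k * N + i))
          ((w (k * N + i)).1, (w (k * N + i + 1)).2)
        - 1 / N * ∑ i ∈ Finset.range N, lagr (fun u => F k (sampT N i, u)) (γ k (sampT N i))|
        ≤ C * (‖w (k * N) - γ k 0‖ + 1 / N) := by
    intro k hk
    have h1 := hE (F k) (hF k) (γ k) (hγ k hk) N hN (fun i => w (k * N + i)) (fun i hi => by
      have h2 : k * N + i < K * N := by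
        calc k * N + i < k * N + N := by omega
          _ = (k + 1) * N := by ring
          _ ≤ K * N := Nat.mul_le_mul_right _ hk
      have h3 := hw _ h2
      rw [concatH_block F k hi] at h3
      exact h3)
    refine ⟨h1.1, ?_⟩
    have h2 : ∑ i ∈ Finset.range N, lagr (concatH F N (k * N + i))
          ((w (k * N + i)).1, (w (k * N + i + 1)).2) = ∑ i ∈ Finset.range N,
          lagr (fun u => F k (sampT N i, u)) ((w (k * N + i)).1, (w (k * N + i + 1)).2) :=
      Finset.sum_congr rfl fun i hi => by rw [concatH_block F k (Finset.mem_range.1 hi)]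
    rw [h2]
    exact h1.2
  have hpow : ∀ k, (1 : ℝ) / N ≤ (2 * C) ^ k / N := fun k =>
    div_le_div_of_nonneg_right (one_le_pow₀ (by linarith)) hNr.le
  have hstep : ∀ k, C * ((2 * C) ^ k / N + 1 / N) ≤ (2 * C) ^ (k + 1) / N := fun k => by
    have h1 := mul_le_mul_of_nonneg_left (hpow k) (by linarith : (0 : ℝ) ≤ C)
    have h2 : (2 * C) ^ (k + 1) / N = C * ((2 * C) ^ k / N) + C * ((2 * C) ^ k / N) := by
      rw [pow_succ]; ring
    rw [h2, mul_add]
    linarith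
  have herr : ∀ k ≤ K, ‖w (k * N) - γ k 0‖ ≤ (2 * C) ^ k / N := by
    intro k
    induction k with
    | zero => intro _; rw [zero_mul, hγ0, sub_self, norm_zero]; positivity
    | succ k ih =>
      intro hk
      have h1 := (hblock k hk).1
      rw [hjoin, add_mul, one_mul]
      refine h1.trans (le_trans ?_ (hstep k))
      exact mul_le_mul_of_nonneg_left (by linarith [ih (by omega)]) (by linarith)
  rw [sum_range_blocks, Finset.mul_sum, ← Finset.sum_sub_distrib]
  refine (Finset.abs_sum_le_sum_abs _ _).trans ?_
  have h3 : ∀ k ∈ Finset.range K, |1 / N * ∑ i ∈ Finset.range N, lagr (concatH F N (k * N + i))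
          ((w (k * N + i)).1, (w (k * N + i + 1)).2)
        - 1 / N * ∑ i ∈ Finset.range N, lagr (fun u => F k (sampT N i, u)) (γ k (sampT N i))|
      ≤ (2 * C) ^ K / N := by
    intro k hk
    have hk' := Finset.mem_range.1 hk
    refine (hblock k hk').2.trans (le_trans ?_ ((hstep k).trans ?_))
    · exact mul_le_mul_of_nonneg_left (by linarith [herr k hk'.le]) (by linarith)
    · exact div_le_div_of_nonneg_right (pow_le_pow_right₀ (by linarith) hk') hNr.le
  refine (Finset.sum_le_sum h3).trans (le_of_eq ?_)
  rw [Finset.sum_const, Finset.card_range, nsmul_eq_mul]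
  ring

/-- The five phases `β`, `H` reversed, `B`, `H`, `β` reversed. -/
def phases (β H B : ℝ × E n → ℝ) : ℕ → ℝ × E n → ℝ
  | 0 => β
  | 1 => revH H
  | 2 => B
  | 3 => H
  | _ => revH β

/-- Lower bound for the discretised action of the five phases on the subspace `{q = 0, v = y}`. The two
`H`-phases run over the same times in opposite order with opposite signs, so together they cost at
most the Hofer norm; the remaining phases are dominated by the quadratic part. -/
lemma phases_low {β H B : ℝ × E n → ℝ} {κ M K : ℝ}
    (hβ : ∀ t ∈ Set.Icc (0 : ℝ) 1, ∀ z, |β (t, z)| ≤ 1 / 26 * sqLen z)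
    (hB : ∀ t ∈ Set.Icc (0 : ℝ) 1, ∀ z, B (t, z) ≤ 1 / 26 * sqLen z - κ)
    (hM : ∀ p, |H p| ≤ M) (hK0 : 0 ≤ K)
    (hK : ∀ t s z, |H (t, z) - H (s, z)| ≤ K * |t - s|) {N : ℕ} (hN : 0 < N)
    (y : ℕ → Fin n → ℝ) :
    κ - HNorm n H - 2 * K / N ≤
      (1 / N : ℝ) * ∑ j ∈ Finset.range (5 * N), ∑ l, (y j l) ^ 2
      - (1 / N : ℝ) * ∑ j ∈ Finset.range (5 * N),
        concatH (phases β H B) N j ((1 / N : ℝ) • ∑ i ∈ Finset.range j, y i, y j) := by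
  have hNr : (0 : ℝ) < N := by exact_mod_cast hN
  have hlen := node_sqLen_le hN y
  have hosc := osc_sum_le hM hK0 hK hN
  set h : ℝ := 1 / N with hh
  have hh0 : 0 < h := by positivity
  have hNh : h * N = 1 := by rw [hh]; field_simp
  set p : ℕ → E n := fun j => (h • ∑ i ∈ Finset.range j, y i, y j) with hp
  have hsq : ∀ z : E n, 0 ≤ sqLen z := fun z => Finset.sum_nonneg fun _ _ => by positivity
  have hG : ∑ j ∈ Finset.range (5 * N), concatH (phases β H B) N j (p j) ≤
      1 / 26 * ∑ j ∈ Finset.range (5 * N), sqLen (p j)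
        + ∑ i ∈ Finset.range N, osc H (sampT N i) - N * κ := by
    rw [sum_range_blocks, sum_range_blocks]
    simp only [Finset.sum_range_succ, Finset.sum_range_zero, zero_add]
    have hc : ∀ k, ∑ i ∈ Finset.range N, concatH (phases β H B) N (k * N + i) (p (k * N + i)) =
        ∑ i ∈ Finset.range N, phases β H B k (sampT N i, p (k * N + i)) := fun k =>
      Finset.sum_congr rfl fun i hi => by rw [concatH_block _ k (Finset.mem_range.1 hi)]
    rw [hc, hc, hc, hc, hc]
    have hn : ∀ k, 0 ≤ ∑ i ∈ Finset.range N, sqLen (p (k * N + i)) := fun k =>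
      Finset.sum_nonneg fun _ _ => hsq _
    have e0 : ∑ i ∈ Finset.range N, phases β H B 0 (sampT N i, p (0 * N + i)) ≤
        1 / 26 * ∑ i ∈ Finset.range N, sqLen (p (0 * N + i)) := by
      rw [Finset.mul_sum]
      exact Finset.sum_le_sum fun i hi =>
        (abs_le.1 (hβ _ (sampT_mem (Finset.mem_range.1 hi)) _)).2
    have e4 : ∑ i ∈ Finset.range N, phases β H B 4 (sampT N i, p (4 * N + i)) ≤
        1 / 26 * ∑ i ∈ Finset.range N, sqLen (p (4 * N + i)) := by
      rw [Finset.mul_sum]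
      refine Finset.sum_le_sum fun i hi => ?_
      have hi' := Finset.mem_range.1 hi
      have h1 := (abs_le.1 (hβ (1 - sampT N i)
        (by rw [one_sub_sampT hi']; exact sampT_mem (by omega)) (p (4 * N + i)))).1
      change -β (1 - sampT N i, p (4 * N + i)) ≤ _
      linarith
    have e2 : ∑ i ∈ Finset.range N, phases β H B 2 (sampT N i, p (2 * N + i)) ≤
        1 / 26 * ∑ i ∈ Finset.range N, sqLen (p (2 * N + i)) - N * κ := by
      have h1 : (N : ℝ) * κ = ∑ _i ∈ Finset.range N, κ := by simp
      rw [Finset.mul_sum, h1, ← Finset.sum_sub_distrib]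
      exact Finset.sum_le_sum fun i hi => hB _ (sampT_mem (Finset.mem_range.1 hi)) _
    have e13 : ∑ i ∈ Finset.range N, phases β H B 1 (sampT N i, p (1 * N + i)) +
        ∑ i ∈ Finset.range N, phases β H B 3 (sampT N i, p (3 * N + i)) ≤
        ∑ i ∈ Finset.range N, osc H (sampT N i) := by
      -- time reversal pairs the sample `i` of phase 1 with the sample `N - 1 - i` of phase 3
      rw [← Finset.sum_range_reflect, ← Finset.sum_add_distrib]
      refine Finset.sum_le_sum fun i hi => ?_
      have hi' := Finset.mem_range.1 hi
      have h1 : 1 - sampT N (N - 1 - i) = sampT N i := by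
        rw [← one_sub_sampT hi']; ring
      change -H (1 - sampT N (N - 1 - i), _) + H (sampT N i, _) ≤ _
      rw [h1]
      have := sub_le_osc hM (sampT N i) (p (3 * N + i)) (p (1 * N + (N - 1 - i)))
      linarith
    have := hn 1
    have := hn 3
    linarith
  have h1 := mul_le_mul_of_nonneg_left hG hh0.le
  have h2 : h * (1 / 26 * ∑ j ∈ Finset.range (5 * N), sqLen (p j)
        + ∑ i ∈ Finset.range N, osc H (sampT N i) - N * κ) =
      1 / 26 * (h * ∑ j ∈ Finset.range (5 * N), sqLen (p j)) +
        h * ∑ i ∈ Finset.range N, osc H (sampT N i) - (h * N) * κ := by ring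
  rw [h2, hNh] at h1
  linarith

/-- The action sums of a trajectory and of its time reversal cancel exactly. -/
lemma action_rev (F : ℝ × E n → ℝ) (γ : ℝ → E n) (N : ℕ) :
    ∑ i ∈ Finset.range N, lagr (fun u => revH F (sampT N i, u)) (γ (1 - sampT N i)) =
      -∑ i ∈ Finset.range N, lagr (fun u => F (sampT N i, u)) (γ (sampT N i)) := by
  rw [← Finset.sum_range_reflect, ← Finset.sum_neg_distrib]
  refine Finset.sum_congr rfl fun i hi => ?_
  have hi' := Finset.mem_range.1 hi
  have h1 : 1 - sampT N (N - 1 - i) = sampT N i := by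
    rw [← one_sub_sampT hi']; ring
  rw [lagr_revH, h1]

lemma XH_eq_zero_of_notMem {B : ℝ × E n → ℝ} {t : ℝ} {z : E n} (h : (t, z) ∉ tsupport B) :
    B (t, z) = 0 ∧ fderiv ℝ (fun w => B (t, w)) z = 0 := by
  have h1 : B =ᶠ[𝓝 (t, z)] 0 := notMem_tsupport_iff_eventuallyEq.1 h
  have h2 : (fun w => B (t, w)) =ᶠ[𝓝 z] fun _ => 0 := by
    have : Filter.Tendsto (fun w : E n => (t, w)) (𝓝 z) (𝓝 (t, z)) :=
      (Continuous.prodMk_right t).tendsto z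
    exact this.eventually h1
  exact ⟨h1.eq_of_nhds, by rw [h2.fderiv_eq]; exact fderiv_const_apply _⟩

/-- If the Hofer norm of `H` is small compared with the depth of the well `B`, then some trajectory of
`β` starting on `{y = 0}` ends where a trajectory of `H` starting in the support of `B` ends.
Otherwise the five-phase trajectory never feels `B` and retraces itself, so that its action vanishes,
in contradiction to the saddle point of positive action. -/
theorem exists_connecting {β H B : ℝ × E n → ℝ} {κ : ℝ} (hκ : 0 < κ)
    (hβs : ContDiff ℝ 2 β) (hβc : HasCompactSupport β)
    (hHs : ContDiff ℝ 2 H) (hHc : HasCompactSupport H)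
    (hBs : ContDiff ℝ 2 B) (hBc : HasCompactSupport B)
    (hβ : ∀ t ∈ Set.Icc (0 : ℝ) 1, ∀ z, |β (t, z)| ≤ 1 / 26 * sqLen z)
    (hB : ∀ t ∈ Set.Icc (0 : ℝ) 1, ∀ z, B (t, z) ≤ 1 / 26 * sqLen z - κ)
    (hH : HNorm n H < κ / 4) :
    ∃ Γ Δ : ℝ → E n, IsTraj β Γ ∧ (Γ 0).2 = 0 ∧ IsTraj H Δ ∧ Γ 1 = Δ 1 ∧
      ∃ t, (t, Δ 0) ∈ tsupport B := by
  by_contra! hcon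
  obtain ⟨Λ₁, hΛ₁⟩ := exists_hamBound hβs hβc
  obtain ⟨Λ₂, hΛ₂⟩ := exists_hamBound hHs hHc
  obtain ⟨Λ₃, hΛ₃⟩ := exists_hamBound hBs hBc
  set Λ := max Λ₁ (max Λ₂ Λ₃) with hΛ
  have hΛ₁ := hΛ₁.mono (le_max_left _ _ : Λ₁ ≤ Λ)
  have hΛ₂ := hΛ₂.mono ((le_max_left _ _).trans (le_max_right _ _) : Λ₂ ≤ Λ)
  have hΛ₃ := hΛ₃.mono ((le_max_right _ _).trans (le_max_right _ _) : Λ₃ ≤ Λ)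
  have hph : ∀ k, HamBound Λ (phases β H B k) := by
    intro k
    match k with
    | 0 => exact hΛ₁
    | 1 => exact hΛ₂.rev
    | 2 => exact hΛ₃
    | 3 => exact hΛ₂
    | _ + 4 => exact hΛ₁.rev
  have hrevs : ∀ F : ℝ × E n → ℝ, ContDiff ℝ 2 F → ContDiff ℝ 2 (revH F) := fun F hF =>
    (hF.comp ((contDiff_const.sub contDiff_fst).prodMk contDiff_snd)).neg
  have hphs : ∀ k, ContDiff ℝ 2 (phases β H B k) := by
    intro k
    match k with
    | 0 => exact hβs
    | 1 => exact hrevs _ hHs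
    | 2 => exact hBs
    | 3 => exact hHs
    | _ + 4 => exact hrevs _ hβs
  have hslc : ∀ F : ℝ × E n → ℝ, HasCompactSupport F → ∀ t, HasCompactSupport fun u => F (t, u) := by
    intro F hF t
    refine HasCompactSupport.of_support_subset_isCompact (hF.image continuous_snd) ?_
    intro u hu
    exact ⟨(t, u), subset_tsupport _ hu, rfl⟩
  have hrevc : ∀ F : ℝ × E n → ℝ, HasCompactSupport F → ∀ t,
      HasCompactSupport fun u => revH F (t, u) := fun F hF t => (hslc F hF (1 - t)).neg
  have hphc : ∀ k t, HasCompactSupport fun u => phases β H B k (t, u) := by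
    intro k t
    match k with
    | 0 => exact hslc _ hβc t
    | 1 => exact hrevc _ hHc t
    | 2 => exact hslc _ hBc t
    | 3 => exact hslc _ hHc t
    | _ + 4 => exact hrevc _ hβc t
  obtain ⟨M, hM⟩ := hHc.exists_bound_of_continuous hHs.continuous
  obtain ⟨K, hK⟩ := (hHs.of_le (by norm_num : (1 : WithTop ℕ∞) ≤ 2)).lipschitzWith_of_hasCompactSupport
    hHc (by norm_num)
  have hK' : ∀ t s z, |H (t, z) - H (s, z)| ≤ K * |t - s| := by
    intro t s z
    have h1 := hK.dist_le_mul (t, z) (s, z)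
    rw [Real.dist_eq, Prod.dist_eq, dist_self, Real.dist_eq, max_eq_left (abs_nonneg _)] at h1
    exact h1
  obtain ⟨C, hC, hE⟩ := euler_error (n := n) hΛ₁.nonneg
  obtain ⟨N, hN⟩ := exists_nat_gt (max (8 * K / κ) (8 * (5 * (2 * C) ^ 5) / κ))
  have hNr : (0 : ℝ) < N := lt_of_le_of_lt (le_max_of_le_left (by positivity)) hN
  have hN0 : 0 < N := by exact_mod_cast hNr
  have hN1 : 2 * K / N < κ / 4 := by
    have := (le_max_left _ _).trans_lt hN
    rw [div_lt_iff₀ hκ] at this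
    rw [div_lt_iff₀ hNr]; linarith
  have hN2 : 5 * (2 * C) ^ 5 / N < κ / 8 := by
    have := (le_max_right _ _).trans_lt hN
    rw [div_lt_iff₀ hκ] at this
    rw [div_lt_iff₀ hNr]; linarith
  obtain ⟨w, hw0, hw, hact⟩ := exists_discrete_trajectory (m := 5 * N) (h := 1 / N)
    (G := concatH (phases β H B) N) (by positivity)
    (fun j => (hphs _).comp (contDiff_const.prodMk contDiff_id)) (fun j => hphc _ _)
    (α := κ / 2) (by positivity)
    (fun y => le_trans (by linarith)
      (phases_low hβ hB (K := (K : ℝ)) (fun p => by simpa using hM p) K.coe_nonneg hK' hN0 y))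
  obtain ⟨Γ, hΓ, hΓ0⟩ := exists_isTraj hΛ₁ (w 0)
  obtain ⟨Δ, hΔ, hΔ0⟩ := exists_isTraj hΛ₂.rev (Γ 1)
  have hΔr : IsTraj H (fun t => Δ (1 - t)) := by
    have := hΔ.rev; rwa [revH_revH] at this
  have hout : ∀ t, (t, Δ 1) ∉ tsupport B := by
    intro t
    have := hcon Γ (fun t => Δ (1 - t)) hΓ (by rw [hΓ0, hw0]) hΔr (by simp [hΔ0]) t
    simpa using this
  let γ : ℕ → ℝ → E n := fun k => match k with
    | 0 => Γ
    | 1 => Δ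
    | 2 => fun _ => Δ 1
    | 3 => fun t => Δ (1 - t)
    | 4 => fun t => Γ (1 - t)
    | _ + 5 => fun _ => Γ 0
  have hγ : ∀ k < 5, IsTraj (phases β H B k) (γ k) := by
    intro k hk
    match k with
    | 0 => exact hΓ
    | 1 => exact hΔ
    | 2 =>
      intro t _
      have h1 := (XH_eq_zero_of_notMem (hout t)).2
      have h2 : XH n (phases β H B 2) t (γ 2 t) = 0 := by
        change XH n B t (Δ 1) = 0
        unfold XH
        rw [h1]
        ext i <;> simp
      rw [h2]
      exact hasDerivWithinAt_const _ _ _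
    | 3 => exact hΔr
    | 4 => exact hΓ.rev
    | _ + 5 => omega
  have hjoin : ∀ k, γ (k + 1) 0 = γ k 1 := by
    intro k
    match k with
    | 0 => exact hΔ0
    | 1 => rfl
    | 2 => simp [γ]
    | 3 => simp [γ, hΔ0]
    | 4 => simp [γ]
    | _ + 5 => rfl
  have herr := concat_error hC hE hph (K := 5) hN0 hw hγ hΓ0 hjoin
  have hzero : ∑ k ∈ Finset.range 5, 1 / (N : ℝ) * ∑ i ∈ Finset.range N,
      lagr (fun u => phases β H B k (sampT N i, u)) (γ k (sampT N i)) = 0 := by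
    rw [← Finset.mul_sum]
    simp only [Finset.sum_range_succ, Finset.sum_range_zero, zero_add]
    have h4 : ∑ i ∈ Finset.range N, lagr (fun u => phases β H B 4 (sampT N i, u))
        (γ 4 (sampT N i)) = _ := action_rev β Γ N
    have h3 : ∑ i ∈ Finset.range N, lagr (fun u => phases β H B 3 (sampT N i, u))
        (γ 3 (sampT N i)) = -∑ i ∈ Finset.range N,
          lagr (fun u => revH H (sampT N i, u)) (Δ (sampT N i)) := by
      have := action_rev (revH H) Δ N
      rw [revH_revH] at this
      exact this
    have h2 : ∑ i ∈ Finset.range N, lagr (fun u => phases β H B 2 (sampT N i, u))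
        (γ 2 (sampT N i)) = 0 := by
      refine Finset.sum_eq_zero fun i _ => ?_
      have h1 := XH_eq_zero_of_notMem (hout (sampT N i))
      change lagr (fun u => B (sampT N i, u)) (Δ 1) = 0
      unfold lagr
      beta_reduce
      rw [h1.1, h1.2]
      simp
    rw [h2, h3, h4]
    change 1 / (N : ℝ) * ((∑ i ∈ Finset.range N, lagr (fun u => β (sampT N i, u)) (Γ (sampT N i))) +
      (∑ i ∈ Finset.range N, lagr (fun u => revH H (sampT N i, u)) (Δ (sampT N i))) + 0 +
      _ + _) = 0
    ring
  rw [hzero, sub_zero] at herr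
  have h9 := (abs_le.1 herr).2
  push_cast at h9
  linarith

end Core

/-! ### Coisotropic graphs and the generating Hamiltonian -/

section Generating
variable {n : ℕ}

lemma pair_expand (v : E n) :
    v = ∑ l, v.1 l • ((Pi.single l 1, 0) : E n) + ∑ l, v.2 l • ((0, Pi.single l 1) : E n) := by
  refine Prod.ext ?_ ?_ <;> funext i <;>
    simp [Prod.fst_sum, Prod.snd_sum, Finset.sum_apply, Pi.single_apply]

lemma clm_expand (L : E n →L[ℝ] ℝ) (v : E n) :
    L v = ∑ l, v.1 l * L (Pi.single l 1, 0) + ∑ l, v.2 l * L (0, Pi.single l 1) := by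
  conv_lhs => rw [pair_expand v]
  simp only [map_add, map_sum, map_smul, smul_eq_mul]

lemma abs_fst_le (z : E n) (i : Fin n) : |z.1 i| ≤ ‖z‖ :=
  (norm_le_pi_norm z.1 i).trans (norm_fst_le z)

lemma abs_snd_le (z : E n) (i : Fin n) : |z.2 i| ≤ ‖z‖ :=
  (norm_le_pi_norm z.2 i).trans (norm_snd_le z)

lemma sqLen_le (z : E n) : sqLen z ≤ 2 * n * ‖z‖ ^ 2 := by
  have h : ∀ l ∈ Finset.univ, (z.1 l) ^ 2 + (z.2 l) ^ 2 ≤ 2 * ‖z‖ ^ 2 := fun l _ => by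
    have h1 := sq_le_sq' (by linarith [abs_le.1 (abs_fst_le z l)]) (abs_le.1 (abs_fst_le z l)).2
    have h2 := sq_le_sq' (by linarith [abs_le.1 (abs_snd_le z l)]) (abs_le.1 (abs_snd_le z l)).2
    linarith
  refine (Finset.sum_le_sum h).trans (le_of_eq ?_)
  simp
  ring

lemma sq_norm_le_sqLen (z : E n) : ‖z‖ ^ 2 ≤ sqLen z := by
  have h0 : 0 ≤ sqLen z := Finset.sum_nonneg fun _ _ => by positivity
  have hl : ∀ l, (z.1 l) ^ 2 + (z.2 l) ^ 2 ≤ sqLen z := fun l =>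
    Finset.single_le_sum (f := fun l => (z.1 l) ^ 2 + (z.2 l) ^ 2) (fun _ _ => by positivity)
      (Finset.mem_univ l)
  have h : ‖z‖ ≤ Real.sqrt (sqLen z) := by
    refine max_le ?_ ?_
    · refine (pi_norm_le_iff_of_nonneg (Real.sqrt_nonneg _)).2 fun l => Real.abs_le_sqrt ?_
      linarith [hl l, sq_nonneg (z.2 l)]
    · refine (pi_norm_le_iff_of_nonneg (Real.sqrt_nonneg _)).2 fun l => Real.abs_le_sqrt ?_
      linarith [hl l, sq_nonneg (z.1 l)]
  calc ‖z‖ ^ 2 ≤ Real.sqrt (sqLen z) ^ 2 := pow_le_pow_left₀ (norm_nonneg _) h 2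
    _ = sqLen z := Real.sq_sqrt h0

lemma XH_zero_of_quadratic {F : ℝ × E n → ℝ} {t : ℝ} (h : ∀ z, |F (t, z)| ≤ 1 / 26 * sqLen z) :
    XH n F t 0 = 0 := by
  have h1 : HasFDerivAt (fun w => F (t, w)) (0 : E n →L[ℝ] ℝ) 0 := by
    refine Asymptotics.IsBigO.hasFDerivAt (n := 2) ?_ one_lt_two
    refine Asymptotics.IsBigO.of_bound (1 / 26 * (2 * n)) (Filter.Eventually.of_forall fun z => ?_)
    have h2 := sqLen_le z
    have h3 := h z
    rw [sub_zero, Real.norm_eq_abs, Real.norm_of_nonneg (by positivity)]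
    linarith
  unfold XH
  rw [h1.fderiv]
  ext i <;> simp

/-- If the origin is an equilibrium, Gronwall's inequality run backwards in time bounds the whole
trajectory by its end point. -/
lemma IsTraj.norm_le_end {F : ℝ × E n → ℝ} {Λ : ℝ} (hΛ : HamBound Λ F)
    (h : ∀ t ∈ Set.Icc (0 : ℝ) 1, ∀ z, |F (t, z)| ≤ 1 / 26 * sqLen z) {Γ : ℝ → E n}
    (hΓ : IsTraj F Γ) {t : ℝ} (ht : t ∈ Set.Icc (0 : ℝ) 1) :
    ‖Γ t‖ ≤ ‖Γ 1‖ * Real.exp Λ := by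
  have hr := hΓ.rev
  have hb := norm_le_gronwallBound_of_norm_deriv_right_le (f := fun t => Γ (1 - t))
    (f' := fun t => XH n (revH F) t (Γ (1 - t))) (δ := ‖Γ 1‖) (K := Λ) (ε := 0) (a := 0) (b := 1)
    (fun t ht => (hr t ht).continuousWithinAt)
    (fun t ht => (hr t ⟨ht.1, ht.2.le⟩).mono_of_mem_nhdsWithin
      (mem_nhdsWithin.2 ⟨Set.Iio 1, isOpen_Iio, ht.2, fun s hs => ⟨ht.1.trans hs.2, hs.1.le⟩⟩))
    (by simp) (fun t ht => by
      have h1 := hΛ.lip (1 - t) (1 - t) (Γ (1 - t)) 0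
      rw [XH_zero_of_quadratic (h (1 - t) ⟨by linarith [ht.2], by linarith [ht.1]⟩), sub_self,
        abs_zero, zero_add, sub_zero, sub_zero] at h1
      rw [XH_revH, norm_neg, add_zero]
      exact h1)
    (1 - t) ⟨by linarith [ht.2], by linarith [ht.1]⟩
  rw [gronwallBound_ε0] at hb
  simp only [sub_sub_cancel, sub_zero] at hb
  refine hb.trans (mul_le_mul_of_nonneg_left (Real.exp_le_exp.2 ?_) (norm_nonneg _))
  nlinarith [hΛ.nonneg, ht.1]

/-- The map scaling the coordinates `x i`, `i ∈ s`, by `t` and fixing all other coordinates. -/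
def dil (s : Finset (Fin n)) (t : ℝ) : E n →L[ℝ] E n :=
  LinearMap.toContinuousLinearMap
    { toFun := fun z => (fun i => if i ∈ s then t * z.1 i else z.1 i, z.2)
      map_add' := fun z w => by
        refine Prod.ext ?_ rfl
        funext i
        by_cases h : i ∈ s <;> simp [h, mul_add]
      map_smul' := fun c z => by
        refine Prod.ext ?_ rfl
        funext i
        by_cases h : i ∈ s <;> simp [h]
        ring }

lemma dil_apply (s : Finset (Fin n)) (t : ℝ) (z : E n) :
    dil s t z = (fun i => if i ∈ s then t * z.1 i else z.1 i, z.2) := rfl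

lemma dil_one (s : Finset (Fin n)) (z : E n) : dil s 1 z = z := by
  simp [dil_apply]

lemma norm_dil_le (s : Finset (Fin n)) {t : ℝ} (ht : t ∈ Set.Icc (0 : ℝ) 1) (z : E n) :
    ‖dil s t z‖ ≤ ‖z‖ := by
  rw [dil_apply]
  refine max_le ?_ (norm_snd_le z)
  refine (pi_norm_le_iff_of_nonneg (norm_nonneg _)).2 fun i => ?_
  have h := abs_fst_le z i
  by_cases hi : i ∈ s
  · simp only [hi, if_true, norm_mul, Real.norm_eq_abs, abs_of_nonneg ht.1]
    nlinarith [ht.1, ht.2, abs_nonneg (z.1 i)]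
  · simpa [hi] using h

lemma contDiff_dil (s : Finset (Fin n)) {m : WithTop ℕ∞} :
    ContDiff ℝ m fun p : ℝ × E n => dil s p.1 p.2 := by
  have : (fun p : ℝ × E n => dil s p.1 p.2) = fun p =>
      (fun i => if i ∈ s then p.1 * p.2.1 i else p.2.1 i, p.2.2) := rfl
  rw [this]
  refine ContDiff.prodMk (contDiff_pi.2 fun i => ?_) (by fun_prop)
  by_cases h : i ∈ s
  · simp only [h, if_true]; fun_prop
  · simp only [h, if_false]; fun_prop

/-- The coisotropic graph `{y i = a i (x, y), i ∈ s}`: the functions `a i` vanish to second order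
at the origin, do not depend on `y j`, `j ∈ s`, near the origin, and the functions `y i - a i` are
in involution near the origin. -/
structure GraphData (s : Finset (Fin n)) (a : Fin n → E n → ℝ) (R : ℝ) : Prop where
  pos : 0 < R
  smooth : ∀ j, ContDiff ℝ 2 (a j)
  zero : ∀ j ∈ s, a j 0 = 0
  dzero : ∀ j ∈ s, fderiv ℝ (a j) 0 = 0
  indep : ∀ j ∈ s, ∀ i ∈ s, ∀ z, ‖z‖ < R → fderiv ℝ (a j) z (0, Pi.single i 1) = 0
  inv : ∀ i ∈ s, ∀ j ∈ s, ∀ z, ‖z‖ < R →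
    fderiv ℝ (a i) z (Pi.single j 1, 0) - fderiv ℝ (a j) z (Pi.single i 1, 0)
      + ∑ l, (fderiv ℝ (a j) z (Pi.single l 1, 0) * fderiv ℝ (a i) z (0, Pi.single l 1)
        - fderiv ℝ (a i) z (Pi.single l 1, 0) * fderiv ℝ (a j) z (0, Pi.single l 1)) = 0

/-- The Hamiltonian whose flow carries `{y = 0}` into the graph. -/
def genF (s : Finset (Fin n)) (a : Fin n → E n → ℝ) (t : ℝ) (z : E n) : ℝ :=
  -∑ i ∈ s, z.1 i * a i (dil s t z)

lemma fderiv_genF {s : Finset (Fin n)} {a : Fin n → E n → ℝ} (ha : ∀ j, ContDiff ℝ 2 (a j))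
    (t : ℝ) (z v : E n) : fderiv ℝ (genF s a t) z v =
      -∑ i ∈ s, (z.1 i * fderiv ℝ (a i) (dil s t z) (dil s t v) + v.1 i * a i (dil s t z)) := by
  let pr : Fin n → E n →L[ℝ] ℝ := fun i =>
    (ContinuousLinearMap.proj (R := ℝ) (φ := fun _ : Fin n => ℝ) i).comp
      (ContinuousLinearMap.fst ℝ (Fin n → ℝ) (Fin n → ℝ))
  have h : ∀ i ∈ s, HasFDerivAt (fun z : E n => z.1 i * a i (dil s t z))
      (z.1 i • (fderiv ℝ (a i) (dil s t z)).comp (dil s t) + a i (dil s t z) • pr i) z := by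
    intro i _
    have h1 : HasFDerivAt (fun z : E n => z.1 i) (pr i) z := (pr i).hasFDerivAt
    have h2 : HasFDerivAt (fun z : E n => a i (dil s t z))
        ((fderiv ℝ (a i) (dil s t z)).comp (dil s t)) z :=
      ((ha i).differentiable (by norm_num) _).hasFDerivAt.comp z (dil s t).hasFDerivAt
    exact h1.mul h2
  have h3 := (HasFDerivAt.fun_sum h).fun_neg.fderiv
  change fderiv ℝ (fun z => -∑ i ∈ s, z.1 i * a i (dil s t z)) z v = _
  rw [h3, neg_apply, sum_apply]
  refine congrArg _ (Finset.sum_congr rfl fun i _ => ?_)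
  simp [pr]
  ring

end Generating

/-! ### Conserved quantities of the generating Hamiltonian -/

section Conservation
variable {n : ℕ}

lemma dil_snd_single (s : Finset (Fin n)) (t : ℝ) (l : Fin n) :
    dil s t (0, Pi.single l 1) = (0, Pi.single l 1) := by
  rw [dil_apply]; simp; rfl

lemma dil_fst_single (s : Finset (Fin n)) (t : ℝ) (l : Fin n) :
    dil s t (Pi.single l 1, 0) = (if l ∈ s then t else 1) • ((Pi.single l 1, 0) : E n) := by
  rw [dil_apply]
  by_cases hl : l ∈ s
  · refine Prod.ext ?_ (by simp [hl])
    funext i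
    by_cases h : i = l
    · subst h; simp [hl]
    · simp [h, hl]
  · refine Prod.ext ?_ (by simp [hl])
    funext i
    by_cases h : i = l
    · subst h; simp [hl]
    · simp [h, hl]

/-- Along trajectories of `genF s a` the functions `y j - t * a j (t x', x'', y'')` are conserved;
this is where involutivity enters. -/
lemma GraphData.conserved {s : Finset (Fin n)} {a : Fin n → E n → ℝ} {R : ℝ}
    (ha : GraphData s a R) {Γ : ℝ → E n}
    (hΓ : ∀ t ∈ Set.Icc (0 : ℝ) 1,
      HasDerivWithinAt Γ (hamVF (genF s a t) (Γ t)) (Set.Icc 0 1) t)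
    (hR : ∀ t ∈ Set.Icc (0 : ℝ) 1, ‖Γ t‖ < R) (h0 : (Γ 0).2 = 0) :
    ∀ j ∈ s, (Γ 1).2 j = a j (Γ 1) := by
  intro j hj
  have hder : ∀ t ∈ Set.Icc (0 : ℝ) 1,
      HasDerivWithinAt (fun t => (Γ t).2 j - t * a j (dil s t (Γ t))) 0 (Set.Icc 0 1) t := by
    intro t ht
    set ξ := Γ t with hξ
    set D := dil s t ξ with hD
    have hDR : ‖D‖ < R := (norm_dil_le s ht ξ).trans_lt (hR t ht)
    set X := hamVF (genF s a t) ξ with hX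
    set p : Fin n → Fin n → ℝ := fun i l => fderiv ℝ (a i) D (Pi.single l 1, 0) with hp
    set q : Fin n → Fin n → ℝ := fun i l => fderiv ℝ (a i) D (0, Pi.single l 1) with hq
    have hΓt := hΓ t ht
    have hx : ∀ l, HasDerivWithinAt (fun t => (Γ t).1 l) (X.1 l) (Set.Icc 0 1) t := fun l =>
      hasDerivWithinAt_pi.1 hΓt.fst l
    have hy : ∀ l, HasDerivWithinAt (fun t => (Γ t).2 l) (X.2 l) (Set.Icc 0 1) t := fun l =>
      hasDerivWithinAt_pi.1 hΓt.snd l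
    let u' : E n := (fun l => if l ∈ s then ξ.1 l + t * X.1 l else X.1 l, X.2)
    have hu : HasDerivWithinAt (fun t => dil s t (Γ t)) u' (Set.Icc 0 1) t := by
      have : (fun t => dil s t (Γ t)) =
          fun t => (fun l => if l ∈ s then t * (Γ t).1 l else (Γ t).1 l, (Γ t).2) := rfl
      rw [this]
      refine HasDerivWithinAt.prodMk (hasDerivWithinAt_pi.2 fun l => ?_) hΓt.snd
      by_cases hl : l ∈ s
      · simp only [hl, if_true]
        have := (hasDerivWithinAt_id t (Set.Icc 0 1)).fun_mul (hx l)
        simpa using this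
      · simp only [hl, if_false]
        exact hx l
    have hau : HasDerivWithinAt (fun t => a j (dil s t (Γ t))) (fderiv ℝ (a j) D u')
        (Set.Icc 0 1) t :=
      (((ha.smooth j).differentiable (by norm_num) D).hasFDerivAt).comp_hasDerivWithinAt t hu
    have hg := (hy j).fun_sub ((hasDerivWithinAt_id t (Set.Icc 0 1)).fun_mul hau)
    refine hg.congr_deriv ?_
    have hq0 : ∀ i ∈ s, ∀ l ∈ s, q i l = 0 := fun i hi l hl => ha.indep i hi l hl D hDR
    have hX1 : ∀ l, X.1 l = -∑ i ∈ s, ξ.1 i * q i l := by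
      intro l
      change fderiv ℝ (genF s a t) ξ (0, Pi.single l 1) = _
      rw [fderiv_genF ha.smooth, dil_snd_single]
      simp [hq, hD]
    have hX2 : ∀ l, X.2 l = (if l ∈ s then t else 1) * ∑ i ∈ s, ξ.1 i * p i l
        + if l ∈ s then a l D else 0 := by
      intro l
      change -fderiv ℝ (genF s a t) ξ (Pi.single l 1, 0) = _
      rw [fderiv_genF ha.smooth, dil_fst_single, neg_neg, Finset.sum_add_distrib, Finset.mul_sum]
      congr 1
      · refine Finset.sum_congr rfl fun i _ => ?_
        rw [map_smul, smul_eq_mul, hp]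
        ring
      · simp [Pi.single_apply, hD]
    have hX10 : ∀ l ∈ s, X.1 l = 0 := by
      intro l hl
      rw [hX1, Finset.sum_eq_zero fun i hi => by rw [hq0 i hi l hl, mul_zero], neg_zero]
    have hu1 : ∀ l, u'.1 l = (if l ∈ s then ξ.1 l else 0) - ∑ i ∈ s, ξ.1 i * q i l := by
      intro l
      by_cases hl : l ∈ s
      · have h1 := hX1 l
        rw [hX10 l hl] at h1
        simp only [u', hl, if_true, hX10 l hl]
        linarith
      · simp only [u', hl, if_false, hX1]
        ring
    have hu2 : ∀ l, u'.2 l * q j l = ∑ i ∈ s, ξ.1 i * p i l * q j l := by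
      intro l
      by_cases hl : l ∈ s
      · simp [hq0 j hj l hl]
      · change X.2 l * q j l = _
        rw [hX2, if_neg hl, if_neg hl, one_mul, add_zero, Finset.sum_mul]
    have hfd : fderiv ℝ (a j) D u' = ∑ i ∈ s, ξ.1 i * p j i
        - ∑ i ∈ s, ∑ l, ξ.1 i * (p j l * q i l - p i l * q j l) := by
      rw [clm_expand]
      change ∑ l, u'.1 l * p j l + ∑ l, u'.2 l * q j l = _
      simp only [hu1, hu2, sub_mul, Finset.sum_sub_distrib, ite_mul, zero_mul, mul_sub]
      rw [Finset.sum_ite_mem, Finset.univ_inter]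
      simp only [Finset.sum_mul]
      rw [Finset.sum_comm (s := s) (t := Finset.univ), Finset.sum_comm (s := s) (t := Finset.univ)]
      have e1 : ∀ l i, ξ.1 i * q i l * p j l = ξ.1 i * (p j l * q i l) := fun l i => by ring
      have e2 : ∀ l i, ξ.1 i * p i l * q j l = ξ.1 i * (p i l * q j l) := fun l i => by ring
      simp only [e1, e2]
      ring
    have hinv : ∀ i ∈ s, p i j - p j i + ∑ l, (p j l * q i l - p i l * q j l) = 0 :=
      fun i hi => ha.inv i hi j hj D hDR
    have hsum : ∑ i ∈ s, ξ.1 i * p i j - ∑ i ∈ s, ξ.1 i * p j i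
        + ∑ i ∈ s, ∑ l, ξ.1 i * (p j l * q i l - p i l * q j l) = 0 := by
      rw [← Finset.sum_sub_distrib, ← Finset.sum_add_distrib]
      refine Finset.sum_eq_zero fun i hi => ?_
      rw [← Finset.mul_sum, ← mul_sub, ← mul_add, hinv i hi, mul_zero]
    rw [hfd, hX2, if_pos hj, if_pos hj]
    simp only [id]
    rw [← hξ, ← hD]
    linear_combination t * hsum
  have hc := Convex.norm_image_sub_le_of_norm_hasDerivWithin_le (C := 0) hder (fun t _ => by simp)
    (convex_Icc 0 1) (Set.left_mem_Icc.2 zero_le_one) (Set.right_mem_Icc.2 zero_le_one)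
  have h1 := norm_le_zero_iff.1 (hc.trans (zero_mul _).le)
  rw [dil_one, h0] at h1
  simp at h1
  linarith

end Conservation

/-! ### Flowing into the graph -/

section ExistsGenerating
variable {n : ℕ}

/-- There is a compactly supported Hamiltonian, small compared with the squared length, whose flow
carries the points of `{y = 0}` that end near the origin into the coisotropic graph. -/
theorem GraphData.exists_generating {s : Finset (Fin n)} {a : Fin n → E n → ℝ} {R : ℝ}
    (ha : GraphData s a R) :
    ∃ (β : ℝ × E n → ℝ) (δ : ℝ), 0 < δ ∧ ContDiff ℝ 2 β ∧ HasCompactSupport β ∧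
      (∀ t ∈ Set.Icc (0 : ℝ) 1, ∀ z, |β (t, z)| ≤ 1 / 26 * sqLen z) ∧
      ∀ Γ : ℝ → E n, IsTraj β Γ → (Γ 0).2 = 0 → ‖Γ 1‖ < δ → ∀ j ∈ s, (Γ 1).2 j = a j (Γ 1) := by
  set ε : ℝ := 1 / (26 * (n + 1)) with hε
  have hε0 : 0 < ε := by positivity
  have hev : ∀ᶠ z in 𝓝 (0 : E n), ∀ j ∈ s, |a j z| ≤ ε * ‖z‖ := by
    rw [Filter.eventually_all_finset]
    intro j hj
    have h1 : HasFDerivAt (a j) (0 : E n →L[ℝ] ℝ) 0 := by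
      have := ((ha.smooth j).differentiable (by norm_num) 0).hasFDerivAt
      rwa [ha.dzero j hj] at this
    have h2 := h1.isLittleO.def hε0
    filter_upwards [h2] with z hz
    simpa [ha.zero j hj] using hz
  obtain ⟨r₀, hr₀, hball⟩ := Metric.eventually_nhds_iff.1 hev
  set r : ℝ := min R r₀ / 2 with hr
  have hr0 : 0 < r := by have := lt_min ha.pos hr₀; positivity
  have hrR : 2 * r ≤ R := by have := min_le_left R r₀; linarith
  have hrr : 2 * r ≤ r₀ := by have := min_le_right R r₀; linarith
  let χ : ContDiffBump (0 : E n) := ⟨r, 2 * r, hr0, by linarith⟩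
  let τ : ContDiffBump (1 / 2 : ℝ) := ⟨1, 2, one_pos, one_lt_two⟩
  let β : ℝ × E n → ℝ := fun p => τ p.1 * χ p.2 * genF s a p.1 p.2
  have hβs : ContDiff ℝ 2 β := by
    refine ((τ.contDiff.comp contDiff_fst).mul (χ.contDiff.comp contDiff_snd)).mul ?_
    refine (ContDiff.sum fun i _ => ContDiff.mul (by fun_prop) ((ha.smooth i).comp ?_)).neg
    exact contDiff_dil s
  have hβc : HasCompactSupport β := by
    refine HasCompactSupport.of_support_subset_isCompact
      (τ.hasCompactSupport.prod χ.hasCompactSupport) ?_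
    intro p hp
    have h1 : τ p.1 * χ p.2 ≠ 0 := fun h => hp (by simp only [β, h, zero_mul])
    exact ⟨subset_tsupport _ (left_ne_zero_of_mul h1), subset_tsupport _ (right_ne_zero_of_mul h1)⟩
  have hβb : ∀ t ∈ Set.Icc (0 : ℝ) 1, ∀ z, |β (t, z)| ≤ 1 / 26 * sqLen z := by
    intro t ht z
    have hsq := sq_norm_le_sqLen z
    by_cases hz : ‖z‖ < 2 * r
    · have h1 : |genF s a t z| ≤ 1 / 26 * ‖z‖ ^ 2 := by
        rw [genF, abs_neg]
        have h2 : ∀ i ∈ s, |z.1 i * a i (dil s t z)| ≤ ε * ‖z‖ ^ 2 := by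
          intro i hi
          have h3 := norm_dil_le s ht z
          have h4 := hball (y := dil s t z) (by rw [dist_zero_right]; linarith) i hi
          rw [abs_mul]
          calc |z.1 i| * |a i (dil s t z)| ≤ ‖z‖ * (ε * ‖z‖) :=
                mul_le_mul (abs_fst_le z i) (h4.trans (mul_le_mul_of_nonneg_left h3 hε0.le))
                  (abs_nonneg _) (norm_nonneg _)
            _ = _ := by ring
        refine (Finset.abs_sum_le_sum_abs _ _).trans ((Finset.sum_le_sum h2).trans ?_)
        rw [Finset.sum_const, nsmul_eq_mul]
        have hcard : (s.card : ℝ) ≤ n := by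
          have := Finset.card_le_univ s
          rw [Fintype.card_fin] at this
          exact_mod_cast this
        have h5 : (s.card : ℝ) * ε ≤ 1 / 26 := by
          rw [hε, mul_one_div, div_le_div_iff₀ (by positivity) (by norm_num)]
          linarith
        calc (s.card : ℝ) * (ε * ‖z‖ ^ 2) = (s.card * ε) * ‖z‖ ^ 2 := by ring
          _ ≤ _ := mul_le_mul_of_nonneg_right h5 (sq_nonneg _)
      have h6 : |β (t, z)| ≤ 1 * 1 * |genF s a t z| := by
        simp only [β, abs_mul, abs_of_nonneg τ.nonneg, abs_of_nonneg χ.nonneg]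
        exact mul_le_mul_of_nonneg_right (mul_le_mul τ.le_one χ.le_one χ.nonneg zero_le_one)
          (abs_nonneg _)
      linarith
    · have h1 : χ z = 0 := χ.zero_of_le_dist (by rw [dist_zero_right]; exact not_lt.1 hz)
      simp only [β, h1, mul_zero, zero_mul, abs_zero]
      have := sq_nonneg ‖z‖
      linarith
  obtain ⟨Λ, hΛ⟩ := exists_hamBound hβs hβc
  refine ⟨β, r * Real.exp (-Λ), by positivity, hβs, hβc, hβb, fun Γ hΓ h0 h1 => ?_⟩
  have hstay : ∀ t ∈ Set.Icc (0 : ℝ) 1, ‖Γ t‖ < r := by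
    intro t ht
    refine (hΓ.norm_le_end hΛ hβb ht).trans_lt ?_
    calc ‖Γ 1‖ * Real.exp Λ < r * Real.exp (-Λ) * Real.exp Λ :=
          mul_lt_mul_of_pos_right h1 (Real.exp_pos _)
      _ = r := by rw [mul_assoc, ← Real.exp_add, neg_add_cancel, Real.exp_zero, mul_one]
  refine ha.conserved (fun t ht => ?_) (fun t ht => (hstay t ht).trans_le (by linarith)) h0
  have h2 := hΓ t ht
  -- both cutoffs equal one near `Γ t`
  have h3 : (fun w => β (t, w)) =ᶠ[𝓝 (Γ t)] genF s a t := by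
    have h4 : Metric.ball (0 : E n) r ∈ 𝓝 (Γ t) :=
      Metric.isOpen_ball.mem_nhds (mem_ball_zero_iff.2 (hstay t ht))
    filter_upwards [h4] with w hw
    have h5 : χ w = 1 := χ.one_of_mem_closedBall (Metric.ball_subset_closedBall hw)
    have h6 : τ t = 1 := τ.one_of_mem_closedBall (by
      change |t - 1 / 2| ≤ 1
      rw [abs_le]; constructor <;> linarith [ht.1, ht.2])
    simp only [β, h5, h6, one_mul]
  have h7 : XH n β t (Γ t) = hamVF (genF s a t) (Γ t) := by
    unfold XH hamVF
    rw [h3.fderiv_eq]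
  rwa [h7] at h2

end ExistsGenerating

/-! ### Linear symplectic geometry -/

section Linear
variable {n : ℕ}

lemma omega0_hamVF (F : E n → ℝ) (z v : E n) : omega0 n (hamVF F z) v = fderiv ℝ F z v := by
  rw [clm_expand (fderiv ℝ F z) v, omega0, hamVF]
  simp only [neg_mul, Finset.sum_neg_distrib, sub_neg_eq_add]
  rw [add_comm]
  congr 1 <;> exact Finset.sum_congr rfl fun _ _ => mul_comm _ _

lemma omega0_add_left (u v w : E n) : omega0 n (u + v) w = omega0 n u w + omega0 n v w := by
  simp only [omega0, Prod.fst_add, Prod.snd_add, Pi.add_apply, add_mul, Finset.sum_add_distrib]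
  ring

lemma omega0_smul_left (c : ℝ) (u w : E n) : omega0 n (c • u) w = c * omega0 n u w := by
  simp only [omega0, Prod.smul_fst, Prod.smul_snd, Pi.smul_apply, smul_eq_mul, mul_sub,
    Finset.mul_sum, mul_assoc]

lemma omega0_swap (u w : E n) : omega0 n u w = -omega0 n w u := by
  simp only [omega0, neg_sub]
  congr 1 <;> exact Finset.sum_congr rfl fun _ _ => mul_comm _ _

/-- `ω₀`, as a bilinear form. -/
def omegaLin (n : ℕ) : E n →ₗ[ℝ] E n →ₗ[ℝ] ℝ :=
  LinearMap.mk₂ ℝ (omega0 n) omega0_add_left omega0_smul_left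
    (fun u v w => by rw [omega0_swap, omega0_add_left, omega0_swap v, omega0_swap w]; ring)
    (fun c u v => by rw [omega0_swap, omega0_smul_left, omega0_swap v, smul_eq_mul]; ring)

lemma omegaLin_apply (u v : E n) : omegaLin n u v = omega0 n u v := rfl

lemma omega0_single_fst (j : Fin n) (v : E n) : omega0 n (Pi.single j 1, 0) v = v.2 j := by
  simp [omega0, Pi.single_apply]

lemma omega0_single_snd (j : Fin n) (v : E n) : omega0 n (0, Pi.single j 1) v = -v.1 j := by
  simp [omega0, Pi.single_apply]

lemma omega0_nondegenerate {u w : E n} (h : ∀ v, omega0 n u v = omega0 n w v) : u = w := by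
  refine Prod.ext (funext fun j => ?_) (funext fun j => ?_)
  · have := h (0, Pi.single j 1)
    rw [omega0_swap, omega0_swap w, omega0_single_snd, omega0_single_snd] at this
    linarith
  · have := h (Pi.single j 1, 0)
    rw [omega0_swap, omega0_swap w, omega0_single_fst, omega0_single_fst] at this
    linarith

/-- Hamiltonian vector fields are equivariant under affine symplectic maps. -/
lemma hamVF_comp_affine {S : E n ≃L[ℝ] E n} (hS : ∀ z w, omega0 n (S z) (S w) = omega0 n z w)
    (p : E n) {F : E n → ℝ} {z : E n} (hF : DifferentiableAt ℝ F (p + S z)) :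
    S (hamVF (fun w => F (p + S w)) z) = hamVF F (p + S z) := by
  refine omega0_nondegenerate fun v => ?_
  have h1 : HasFDerivAt (fun w => F (p + S w)) ((fderiv ℝ F (p + S z)).comp (S : E n →L[ℝ] E n)) z :=
    hF.hasFDerivAt.comp z ((S : E n →L[ℝ] E n).hasFDerivAt.const_add p)
  rw [omega0_hamVF]
  conv_lhs => rw [← S.apply_symm_apply v]
  rw [hS, omega0_hamVF, h1.fderiv]
  simp

/-- Functions vanishing on a coisotropic set are in involution along it. -/
lemma involution_of_coisotropic {N : Set (E n)} {q : E n}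
    (hco : symplOrth n (TangentSet n N q) ⊆ TangentSet n N q) {f g : E n → ℝ}
    (hf : DifferentiableAt ℝ f q) (hg : DifferentiableAt ℝ g q)
    (hfN : ∀ᶠ z in 𝓝 q, z ∈ N → f z = 0) (hgN : ∀ᶠ z in 𝓝 q, z ∈ N → g z = 0) :
    fderiv ℝ g q (hamVF f q) = 0 := by
  have key : ∀ f : E n → ℝ, DifferentiableAt ℝ f q → (∀ᶠ z in 𝓝 q, z ∈ N → f z = 0) →
      ∀ u ∈ TangentSet n N q, fderiv ℝ f q u = 0 := by
    rintro f hf hfN u ⟨γ, hγ0, hγN, hγ⟩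
    have h1 : HasDerivAt (f ∘ γ) (fderiv ℝ f q u) 0 := by
      have h2 := hf.hasFDerivAt
      rw [← hγ0] at h2 ⊢
      exact h2.comp_hasDerivAt 0 hγ
    have hcont : Filter.Tendsto γ (𝓝 0) (𝓝 q) := by
      have := hγ.continuousAt.tendsto; rwa [hγ0] at this
    have h3 : f ∘ γ =ᶠ[𝓝 0] fun _ => 0 := by
      filter_upwards [hγN, hcont.eventually hfN] with t h4 h5 using h5 h4
    exact h1.unique ((hasDerivAt_const (0 : ℝ) (0 : ℝ)).congr_of_eventuallyEq h3)
  refine key g hg hgN _ (hco fun u hu => ?_)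
  rw [omega0_hamVF]
  exact key f hf hfN u hu

/-- The identification `(x, y) ↦ x + i y` of `E n` with `ℂⁿ`. -/
def toC (n : ℕ) : E n ≃ₗ[ℝ] EuclideanSpace ℂ (Fin n) where
  toFun z := WithLp.toLp 2 fun l => (⟨z.1 l, z.2 l⟩ : ℂ)
  invFun v := (fun l => (v l).re, fun l => (v l).im)
  map_add' z w := by ext l; apply Complex.ext <;> simp
  map_smul' c z := by ext l; apply Complex.ext <;> simp
  left_inv z := rfl
  right_inv v := rfl

lemma inner_toC_im (z w : E n) : (inner ℂ (toC n z) (toC n w)).im = omega0 n z w := by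
  simp only [toC, LinearEquiv.coe_mk, LinearMap.coe_mk, AddHom.coe_mk, PiLp.inner_apply, omega0,
    Complex.im_sum, ← Finset.sum_sub_distrib]
  refine Finset.sum_congr rfl fun l _ => ?_
  simp
  ring

open scoped InnerProductSpace in
/-- An isotropic family spans the image of a coordinate subspace of `{y = 0}` under a linear
symplectic (in fact unitary) map. -/
lemma exists_symplectic_frame {ι : Type*} [Fintype ι] (v : ι → E n)
    (hv : ∀ i j, omega0 n (v i) (v j) = 0) :
    ∃ (s : Finset (Fin n)) (S : E n ≃L[ℝ] E n) (m : Fin n → ι → ℝ) (r : ι → Fin n → ℝ),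
      (∀ z w, omega0 n (S z) (S w) = omega0 n z w) ∧
      (∀ j ∈ s, S (Pi.single j 1, 0) = ∑ i, m j i • v i) ∧
      ∀ i, v i = ∑ j ∈ s, r i j • S (Pi.single j 1, 0) := by
  classical
  let I : Submodule ℝ (EuclideanSpace ℂ (Fin n)) :=
    Submodule.span ℝ (Set.range fun i => toC n (v i))
  have hI : ∀ x ∈ I, ∀ y ∈ I, (inner ℂ x y).im = 0 := by
    intro x hx y hy
    obtain ⟨c, rfl⟩ := (Submodule.mem_span_range_iff_exists_fun ℝ).1 hx
    obtain ⟨d, rfl⟩ := (Submodule.mem_span_range_iff_exists_fun ℝ).1 hy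
    simp only [← map_smul, ← map_sum]
    rw [inner_toC_im, ← omegaLin_apply]
    simp [map_sum, LinearMap.sum_apply, omegaLin_apply, hv]
  let b := stdOrthonormalBasis ℝ I
  set d := Module.finrank ℝ I with hd
  have hb : Orthonormal ℂ (fun i => (b i : EuclideanSpace ℂ (Fin n))) := by
    rw [orthonormal_iff_ite]
    intro i j
    have h1 := orthonormal_iff_ite.1 b.orthonormal i j
    have h2 : (inner ℂ (b i : EuclideanSpace ℂ (Fin n)) (b j : EuclideanSpace ℂ (Fin n))).re =
        inner ℝ (b i) (b j) := by
      rw [Submodule.coe_inner, PiLp.inner_apply, PiLp.inner_apply, Complex.re_sum]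
      exact Finset.sum_congr rfl fun l _ => by simp [Complex.inner]; try ring
    refine Complex.ext ?_ ?_
    · rw [h2, h1]; split_ifs <;> simp
    · rw [hI _ (b i).2 _ (b j).2]; split_ifs <;> simp
  have hdn : d ≤ n := by
    have := hb.linearIndependent.fintype_card_le_finrank
    simpa using this
  let w : Fin n → EuclideanSpace ℂ (Fin n) := fun i => if h : (i : ℕ) < d then b ⟨i, h⟩ else 0
  let s : Finset (Fin n) := Finset.univ.filter fun i => (i : ℕ) < d
  have hs : ∀ i, i ∈ s ↔ (i : ℕ) < d := fun i => by simp [s]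
  have hw : Orthonormal ℂ ((s : Set (Fin n)).domRestrict w) := by
    have h1 := hb.comp (fun i : (s : Set (Fin n)) => (⟨i.1, (hs i.1).1 i.2⟩ : Fin d))
      (fun i j h => Subtype.ext (Fin.ext (by simpa using h)))
    convert h1 using 1
    funext i
    have := (hs i.1).1 i.2
    simp [Set.domRestrict, w, this]
  obtain ⟨e, he⟩ := hw.exists_orthonormalBasis_extension_of_card_eq (by simp)
  let S₀ : E n ≃ₗ[ℝ] E n := (toC n).trans
    ((e.repr.symm.toLinearEquiv.restrictScalars ℝ).trans (toC n).symm)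
  have hS₀ : ∀ z, toC n (S₀ z) = e.repr.symm (toC n z) := fun z => by simp [S₀]
  have hS₁ : ∀ (j : Fin n) (hj : (j : ℕ) < d), toC n (S₀ (Pi.single j 1, 0)) = b ⟨j, hj⟩ := by
    intro j hj
    have h1 : toC n (Pi.single j 1, 0) = EuclideanSpace.single j (1 : ℂ) := by
      ext l
      by_cases h : l = j
      · subst h; apply Complex.ext <;> simp [toC]
      · apply Complex.ext <;> simp [toC, h]
    rw [hS₀, h1, OrthonormalBasis.repr_symm_single, he j (by simpa using (hs j).2 hj)]
    simp [w, hj]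
  have hm : ∀ j : Fin n, ∃ m : ι → ℝ, j ∈ s → S₀ (Pi.single j 1, 0) = ∑ i, m i • v i := by
    intro j
    by_cases hj : j ∈ s
    · obtain ⟨c, hc⟩ := (Submodule.mem_span_range_iff_exists_fun ℝ).1 (b ⟨j, (hs j).1 hj⟩).2
      refine ⟨c, fun _ => (toC n).injective ?_⟩
      rw [hS₁ j ((hs j).1 hj), ← hc]
      simp
    · exact ⟨0, fun h => absurd h hj⟩
  choose m hm using hm
  have hr : ∀ i, ∃ r : Fin n → ℝ, v i = ∑ j ∈ s, r j • S₀ (Pi.single j 1, 0) := by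
    intro i
    let x : I := ⟨toC n (v i), Submodule.subset_span ⟨i, rfl⟩⟩
    refine ⟨fun j => if h : (j : ℕ) < d then b.repr x ⟨j, h⟩ else 0, (toC n).injective ?_⟩
    have h1 : toC n (v i) = ∑ k : Fin d, b.repr x k • (b k : EuclideanSpace ℂ (Fin n)) := by
      have h2 := congrArg (Subtype.val) (b.sum_repr x)
      refine Eq.trans h2.symm ?_
      simp
    rw [h1, map_sum]
    symm
    refine Finset.sum_bij' (fun j hj => ⟨j, (hs j).1 hj⟩)
      (fun k _ => ⟨k, k.2.trans_le hdn⟩) ?_ ?_ ?_ ?_ ?_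
    · intro j hj; simp
    · intro k _; simp [hs]
    · intro j hj; rfl
    · intro k _; rfl
    · intro j hj
      have := (hs j).1 hj
      rw [map_smul, hS₁ j this]
      simp [this]
  choose r hr using hr
  refine ⟨s, S₀.toContinuousLinearEquiv, m, r, fun z w => ?_, fun j hj => hm j hj, hr⟩
  change omega0 n (S₀ z) (S₀ w) = _
  rw [← inner_toC_im, ← inner_toC_im, hS₀, hS₀, LinearIsometryEquiv.inner_map_map]

end Linear

/-! ### Defining functions and adapted coordinates -/

section NormalForm
variable {n : ℕ}

/-- A submanifold is locally the regular zero set of finitely many functions; regularity is recorded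
by vectors `e i` dual to the differentials at `p`. -/
lemma IsSubmanifold.exists_defining {k : ℕ} {N : Set (E n)} (hN : IsSubmanifold n k N) {p : E n}
    (hp : p ∈ N) :
    ∃ (ι : Type) (_ : Fintype ι) (_ : DecidableEq ι) (V : Set (E n)) (f : ι → E n → ℝ)
      (e : ι → E n), IsOpen V ∧ p ∈ V ∧ (∀ i, ContDiffOn ℝ (⊤ : ℕ∞) (f i) V) ∧
      (∀ q ∈ V, q ∈ N ↔ ∀ i, f i q = 0) ∧
      ∀ i j, fderiv ℝ (f i) p (e j) = if i = j then 1 else 0 := by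
  classical
  obtain ⟨V, Φ, hV, hpV, hΦV, hinj, hΦ, ⟨g, hg, hgΦ⟩, hN'⟩ := hN p hp
  let K : Fin n ⊕ Fin n → ℕ := Sum.elim (fun i => (i : ℕ)) (fun i => n + (i : ℕ))
  let co : Fin n ⊕ Fin n → E n →L[ℝ] ℝ := Sum.elim
    (fun i => (ContinuousLinearMap.proj i).comp (ContinuousLinearMap.fst ℝ _ _))
    (fun i => (ContinuousLinearMap.proj i).comp (ContinuousLinearMap.snd ℝ _ _))
  let ve : Fin n ⊕ Fin n → E n := Sum.elim (fun i => (Pi.single i 1, 0)) (fun i => (0, Pi.single i 1))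
  have hcv : ∀ i j, co i (ve j) = if i = j then 1 else 0 := by
    rintro (i | i) (j | j) <;> simp [co, ve, Pi.single_apply]
  have hmem : ∀ z : E n, z ∈ coordSubspace n k ↔ ∀ m, k ≤ K m → co m z = 0 := by
    intro z
    constructor
    · rintro ⟨h1, h2⟩ (i | i) h
      · exact h1 i h
      · exact h2 i h
    · intro h
      exact ⟨fun i hi => h (Sum.inl i) hi, fun i hi => h (Sum.inr i) hi⟩
  have hΦp : DifferentiableAt ℝ Φ p :=
    (hΦ.contDiffAt (hV.mem_nhds hpV)).differentiableAt (by simp)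
  have hgp : DifferentiableAt ℝ g (Φ p) :=
    (hg.contDiffAt (hΦV.mem_nhds ⟨p, hpV, rfl⟩)).differentiableAt (by simp)
  have hinv : ∀ v, fderiv ℝ Φ p (fderiv ℝ g (Φ p) v) = v := by
    intro v
    have h1 : HasFDerivAt (Φ ∘ g) ((fderiv ℝ Φ p).comp (fderiv ℝ g (Φ p))) (Φ p) := by
      refine HasFDerivAt.comp (Φ p) ?_ hgp.hasFDerivAt
      rw [hgΦ p hpV]; exact hΦp.hasFDerivAt
    have h2 : Φ ∘ g =ᶠ[𝓝 (Φ p)] id := by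
      filter_upwards [hΦV.mem_nhds ⟨p, hpV, rfl⟩]
      rintro _ ⟨z, hz, rfl⟩
      simp [hgΦ z hz]
    have h3 := h1.unique ((hasFDerivAt_id (Φ p)).congr_of_eventuallyEq h2)
    exact congrArg (fun L : E n →L[ℝ] E n => L v) h3
  refine ⟨{m : Fin n ⊕ Fin n // k ≤ K m}, inferInstance, inferInstance, V,
    fun m z => co m.1 (Φ z), fun m => fderiv ℝ g (Φ p) (ve m.1), hV, hpV,
    fun m => (co m.1).contDiff.comp_contDiffOn hΦ, fun q hq => ?_, fun i j => ?_⟩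
  · have h1 : q ∈ N ↔ Φ q ∈ coordSubspace n k := by
      constructor
      · intro h
        have : Φ q ∈ Φ '' (N ∩ V) := ⟨q, ⟨h, hq⟩, rfl⟩
        rw [hN'] at this
        exact this.1
      · intro h
        have : Φ q ∈ Φ '' (N ∩ V) := by rw [hN']; exact ⟨h, q, hq, rfl⟩
        obtain ⟨q', hq', he⟩ := this
        rw [← hinj hq'.2 hq he]
        exact hq'.1
    rw [h1, hmem]
    exact ⟨fun h m => h m.1 m.2, fun h m hm => h ⟨m, hm⟩⟩
  · have h1 : HasFDerivAt (fun z => co i.1 (Φ z)) ((co i.1).comp (fderiv ℝ Φ p)) p :=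
      (co i.1).hasFDerivAt.comp p hΦp.hasFDerivAt
    rw [h1.fderiv, ContinuousLinearMap.comp_apply, hinv, hcv]
    simp [Subtype.ext_iff]

/-- Linear symplectic coordinates at `p` in which `N` is given by equations `c j = 0`, `j ∈ s`, with
`d(c j)(0) = dy_j`. -/
lemma exists_adapted {k : ℕ} {N : Set (E n)} (hN : IsSubmanifold n k N) {p : E n}
    (hp : p ∈ N) (hco : symplOrth n (TangentSet n N p) ⊆ TangentSet n N p) :
    ∃ (s : Finset (Fin n)) (S : E n ≃L[ℝ] E n) (c : Fin n → E n → ℝ),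
      (∀ z w, omega0 n (S z) (S w) = omega0 n z w) ∧
      (∀ j, ContDiffAt ℝ 2 (c j) 0) ∧ (∀ j ∈ s, ∀ v, fderiv ℝ (c j) 0 v = v.2 j) ∧
      ∀ᶠ z in 𝓝 (0 : E n), p + S z ∈ N ↔ ∀ j ∈ s, c j z = 0 := by
  obtain ⟨ι, _, _, V, f, e, hV, hpV, hf, hfN, hfe⟩ := hN.exists_defining hp
  have hfp : ∀ i, ContDiffAt ℝ 2 (f i) p := fun i =>
    ((hf i).contDiffAt (hV.mem_nhds hpV)).of_le (WithTop.coe_le_coe.2 (le_top : (2 : ℕ∞) ≤ ⊤))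
  have hfd : ∀ i, DifferentiableAt ℝ (f i) p := fun i => (hfp i).differentiableAt (by simp)
  have hev : ∀ i, ∀ᶠ z in 𝓝 p, z ∈ N → f i z = 0 := fun i => by
    filter_upwards [hV.mem_nhds hpV] with z hz h using (hfN z hz).1 h i
  obtain ⟨s, S, m, r, hS, hm, hr⟩ := exists_symplectic_frame (fun i => hamVF (f i) p)
    (fun i j => by
      rw [omega0_swap, omega0_hamVF, involution_of_coisotropic hco (hfd i) (hfd j) (hev i) (hev j),
        neg_zero])
  have hA : ContDiff ℝ 2 fun z => p + S z := contDiff_const.add S.contDiff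
  have hA0 : p + S 0 = p := by simp
  have hcomp : ∀ i, ContDiffAt ℝ 2 (fun z => f i (p + S z)) 0 := fun i =>
    ContDiffAt.comp (0 : E n) (by rw [hA0]; exact hfp i) hA.contDiffAt
  have hcompd : ∀ i, HasFDerivAt (fun z => f i (p + S z))
      ((fderiv ℝ (f i) p).comp (S : E n →L[ℝ] E n)) 0 := fun i => by
    have h1 := (hfd i).hasFDerivAt
    rw [← hA0] at h1
    have h2 := h1.comp (0 : E n) ((S : E n →L[ℝ] E n).hasFDerivAt.const_add p)
    rwa [hA0] at h2
  -- `r m` is the identity matrix because the differentials of the `f i` are independent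
  have hrm : ∀ i i', ∑ j ∈ s, r i j * m j i' = if i = i' then 1 else 0 := by
    intro i i'
    have h1 : omega0 n (hamVF (f i) p) (e i') =
        omega0 n (∑ j ∈ s, r i j • ∑ l, m j l • hamVF (f l) p) (e i') := by
      conv_lhs => rw [hr i]
      congr 1
      exact Finset.sum_congr rfl fun j hj => by rw [hm j hj]
    rw [omega0_hamVF, hfe, ← omegaLin_apply] at h1
    rw [h1]
    simp only [map_sum, map_smul, LinearMap.sum_apply, LinearMap.smul_apply, smul_eq_mul,
      omegaLin_apply, omega0_hamVF, hfe]
    simp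
  refine ⟨s, S, fun j z => ∑ i, m j i * f i (p + S z), hS, fun j => ?_, fun j hj v => ?_, ?_⟩
  · exact ContDiffAt.sum fun i _ => contDiffAt_const.mul (hcomp i)
  · have h1 : HasFDerivAt (fun z => ∑ i, m j i * f i (p + S z))
        (∑ i, m j i • (fderiv ℝ (f i) p).comp (S : E n →L[ℝ] E n)) 0 :=
      HasFDerivAt.fun_sum fun i _ => (hcompd i).const_mul (m j i)
    rw [h1.fderiv]
    have h2 : omega0 n (S (Pi.single j 1, 0)) (S v) = v.2 j := by rw [hS, omega0_single_fst]
    rw [hm j hj, ← omegaLin_apply] at h2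
    rw [← h2]
    simp [map_sum, LinearMap.sum_apply, omegaLin_apply, omega0_hamVF, sum_apply]
  · have hA' : Filter.Tendsto (fun z => p + S z) (𝓝 0) (𝓝 p) := by
      have := hA.continuous.tendsto 0; rwa [hA0] at this
    filter_upwards [hA'.eventually (hV.mem_nhds hpV)] with z hz
    rw [hfN _ hz]
    constructor
    · intro h j _
      simp [h]
    · intro h i
      have h1 : f i (p + S z) = ∑ i', (∑ j ∈ s, r i j * m j i') * f i' (p + S z) := by
        simp [hrm]
      rw [h1]
      simp only [Finset.sum_mul]
      rw [Finset.sum_comm]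
      refine Finset.sum_eq_zero fun j hj => ?_
      have h2 : ∑ i', r i j * m j i' * f i' (p + S z) = r i j * ∑ i', m j i' * f i' (p + S z) := by
        rw [Finset.mul_sum]; exact Finset.sum_congr rfl fun _ _ => by ring
      rw [h2, h j hj, mul_zero]

end NormalForm

/-! ### Normal form of coisotropic submanifolds -/

section Graph
variable {n : ℕ}

/-- The projection killing the coordinates `y j`, `j ∈ s`. -/
def projY (s : Finset (Fin n)) : E n →L[ℝ] E n :=
  LinearMap.toContinuousLinearMap
    { toFun := fun z => (z.1, fun i => if i ∈ s then 0 else z.2 i)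
      map_add' := fun z w => by
        refine Prod.ext rfl ?_
        funext i
        by_cases h : i ∈ s <;> simp [h]
      map_smul' := fun c z => by
        refine Prod.ext rfl ?_
        funext i
        by_cases h : i ∈ s <;> simp [h] }

lemma projY_apply (s : Finset (Fin n)) (z : E n) :
    projY s z = (z.1, fun i => if i ∈ s then 0 else z.2 i) := rfl

/-- The implicit function theorem: the equations `c j = 0`, `j ∈ s`, are solved for the `y j`. -/
lemma exists_graph {s : Finset (Fin n)} {c : Fin n → E n → ℝ}
    (hc : ∀ j, ContDiffAt ℝ 2 (c j) 0) (hc0 : ∀ j ∈ s, c j 0 = 0)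
    (hdc : ∀ j ∈ s, ∀ v, fderiv ℝ (c j) 0 v = v.2 j) :
    ∃ a : Fin n → E n → ℝ, (∀ j, ContDiff ℝ 2 (a j)) ∧ (∀ j, a j 0 = 0) ∧
      (∀ j ∈ s, fderiv ℝ (a j) 0 = 0) ∧ (∀ j z, a j (projY s z) = a j z) ∧
      ∀ᶠ z in 𝓝 (0 : E n), (∀ j ∈ s, c j z = 0) ↔ ∀ j ∈ s, z.2 j = a j z := by
  let Ψ : E n → E n := fun z => (z.1, fun l => if l ∈ s then c l z else z.2 l)
  have hΨ : ContDiffAt ℝ 2 Ψ 0 := by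
    refine contDiffAt_fst.prodMk (contDiffAt_pi.2 fun l => ?_)
    by_cases h : l ∈ s
    · simpa [h] using hc l
    · simp only [h, if_false]; fun_prop
  have hΨd : HasFDerivAt Ψ ((ContinuousLinearEquiv.refl ℝ (E n) : E n ≃L[ℝ] E n) : E n →L[ℝ] E n)
      0 := by
    have h1 : HasFDerivAt (fun z : E n => fun l => if l ∈ s then c l z else z.2 l)
        (ContinuousLinearMap.snd ℝ (Fin n → ℝ) (Fin n → ℝ)) 0 := by
      refine hasFDerivAt_pi'.2 fun l => ?_
      by_cases h : l ∈ s
      · simp only [h, if_true]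
        have h2 := ((hc l).differentiableAt (by simp)).hasFDerivAt
        convert h2 using 1
        ext v <;> simp [hdc l h]
      · simp only [h, if_false]
        exact ((ContinuousLinearMap.proj (R := ℝ) (φ := fun _ : Fin n => ℝ) l).comp
          (ContinuousLinearMap.snd ℝ (Fin n → ℝ) (Fin n → ℝ))).hasFDerivAt
    have h2 := (hasFDerivAt_fst (𝕜 := ℝ) (p := (0 : E n))).prodMk h1
    exact h2
  have hΨ0 : Ψ 0 = 0 := by
    refine Prod.ext rfl (funext fun l => ?_)
    by_cases h : l ∈ s
    · simp [Ψ, h, hc0 l h]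
    · simp [Ψ, h]
  have hst := hΨ.hasStrictFDerivAt' hΨd (by simp)
  let Θ : E n → E n := hst.localInverse Ψ _ 0
  have hΘ0 : Θ 0 = 0 := by
    have := hst.localInverse_apply_image
    rwa [hΨ0] at this
  have hΘ : ContDiffAt ℝ 2 Θ 0 := by
    have := hΨ.to_localInverse hΨd (by simp)
    rwa [hΨ0] at this
  have hΘd : HasFDerivAt Θ (ContinuousLinearMap.id ℝ (E n)) 0 := by
    have := hst.to_localInverse.hasFDerivAt
    rw [hΨ0] at this
    exact this
  have hl : ∀ᶠ z in 𝓝 (0 : E n), Θ (Ψ z) = z := hst.eventually_left_inverse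
  have hr : ∀ᶠ z in 𝓝 (0 : E n), Ψ (Θ z) = z := by
    have := hst.eventually_right_inverse
    rwa [hΨ0] at this
  obtain ⟨ρ, hρ, hΘρ⟩ := Metric.eventually_nhds_iff_ball.1 (hΘ.eventually (by simp))
  let χ : ContDiffBump (0 : E n) := ⟨ρ / 4, ρ / 2, by positivity, by linarith⟩
  let h : Fin n → E n → ℝ := fun j w => χ w * (Θ w).2 j
  have hsm : ∀ j, ContDiff ℝ 2 (h j) := by
    intro j
    rw [contDiff_iff_contDiffAt]
    intro w
    by_cases hw : w ∈ Metric.ball (0 : E n) ρ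
    · have h1 : ContDiffAt ℝ 2 (fun w => (Θ w).2 j) w :=
        ((ContinuousLinearMap.proj (R := ℝ) (φ := fun _ : Fin n => ℝ) j).comp
          (ContinuousLinearMap.snd ℝ (Fin n → ℝ) (Fin n → ℝ))).contDiff.contDiffAt.comp w (hΘρ w hw)
      exact χ.contDiff.contDiffAt.mul h1
    · have h1 : h j =ᶠ[𝓝 w] fun _ => 0 := by
        have h2 : ∀ᶠ w' in 𝓝 w, ρ / 2 < dist w' 0 := by
          refine (continuous_id.dist continuous_const).continuousAt.eventually_const_lt ?_
          have : ρ ≤ dist w 0 := by simpa using hw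
          simp only [id]
          linarith
        filter_upwards [h2] with w' hw'
        simp [h, χ.zero_of_le_dist (show ρ / 2 ≤ dist w' 0 from hw'.le)]
      exact contDiffAt_const.congr_of_eventuallyEq h1
  have hχ : ∀ᶠ w in 𝓝 (0 : E n), χ w = 1 := by
    filter_upwards [Metric.closedBall_mem_nhds (0 : E n) (show 0 < ρ / 4 by positivity)] with w hw
    exact χ.one_of_mem_closedBall hw
  have hπ : Filter.Tendsto (projY s) (𝓝 0) (𝓝 0) := by
    have := (projY s).continuous.tendsto 0; rwa [map_zero] at this
  refine ⟨fun j z => h j (projY s z), fun j => (hsm j).comp (projY s).contDiff, fun j => ?_,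
    fun j hj => ?_, fun j z => ?_, ?_⟩
  · simp [h, hΘ0]
  · have h1 : HasFDerivAt (fun w => (Θ w).2 j)
        ((ContinuousLinearMap.proj (R := ℝ) (φ := fun _ : Fin n => ℝ) j).comp
          (ContinuousLinearMap.snd ℝ (Fin n → ℝ) (Fin n → ℝ))) 0 :=
      ((ContinuousLinearMap.proj (R := ℝ) (φ := fun _ : Fin n => ℝ) j).comp
          (ContinuousLinearMap.snd ℝ (Fin n → ℝ) (Fin n → ℝ))).hasFDerivAt.comp (0 : E n) hΘd
    have h2 : h j =ᶠ[𝓝 0] fun w => (Θ w).2 j := by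
      filter_upwards [hχ] with w hw
      simp [h, hw]
    have h3 := h1.congr_of_eventuallyEq h2
    rw [← map_zero (projY s)] at h3
    have h4 := h3.comp (0 : E n) (projY s).hasFDerivAt
    refine Eq.trans h4.fderiv ?_
    ext v <;> simp [projY_apply, hj]
  · have : projY s (projY s z) = projY s z := by
      refine Prod.ext rfl (funext fun l => ?_)
      by_cases hl : l ∈ s <;> simp [projY_apply, hl]
    simp [this]
  · filter_upwards [hl, hπ.eventually hr, hπ.eventually hχ] with z h1 h2 h3
    simp only [h, h3, one_mul]
    constructor
    · intro hz j hj
      have : Ψ z = projY s z := by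
        refine Prod.ext rfl (funext fun l => ?_)
        by_cases hl : l ∈ s <;> simp [Ψ, projY_apply, hl, hz]
      rw [← this, h1]
    · intro hz j hj
      have h4 : Θ (projY s z) = z := by
        refine Prod.ext (show (Ψ (Θ (projY s z))).1 = (projY s z).1 by rw [h2]) (funext fun l => ?_)
        by_cases hl : l ∈ s
        · exact (hz l hl).symm
        · have := congrFun (congrArg Prod.snd h2) l
          simpa [Ψ, hl, projY_apply] using this
      rw [h4] at h2
      have := congrFun (congrArg Prod.snd h2) j
      simpa [Ψ, hj, projY_apply] using this

/-- Normal form: near `p`, in affine symplectic coordinates, a coisotropic submanifold is a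
coisotropic graph. -/
lemma exists_graphData {k : ℕ} {N : Set (E n)} (hN : IsSubmanifold n k N)
    (hco : IsCoisotropic n N) {p : E n} (hp : p ∈ N) :
    ∃ (s : Finset (Fin n)) (S : E n ≃L[ℝ] E n) (a : Fin n → E n → ℝ) (R : ℝ),
      GraphData s a R ∧ (∀ z w, omega0 n (S z) (S w) = omega0 n z w) ∧
      ∀ z, ‖z‖ < R → (p + S z ∈ N ↔ ∀ j ∈ s, z.2 j = a j z) := by
  obtain ⟨s, S, c, hS, hc, hdc, hcN⟩ := exists_adapted hN hp (hco p hp)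
  have hc0 : ∀ j ∈ s, c j 0 = 0 := hcN.self_of_nhds.1 (by simpa using hp)
  obtain ⟨a, hsm, ha0, hda, hπ, hg⟩ := exists_graph hc hc0 hdc
  have hgN : ∀ᶠ z in 𝓝 (0 : E n), p + S z ∈ N ↔ ∀ j ∈ s, z.2 j = a j z := by
    filter_upwards [hcN, hg] with z h1 h2 using h1.trans h2
  obtain ⟨r, hr, hrN⟩ := Metric.eventually_nhds_iff_ball.1 hgN
  -- the point of the graph with the same coordinates as `z`, apart from `y j`, `j ∈ s`
  let G : E n → E n := fun z => (z.1, fun l => if l ∈ s then a l z else z.2 l)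
  have hGc : Continuous G := by
    refine continuous_fst.prodMk (continuous_pi fun l => ?_)
    by_cases h : l ∈ s
    · simpa [h] using (hsm l).continuous
    · simp only [h, if_false]; fun_prop
  have hG0 : G 0 = 0 := by
    refine Prod.ext rfl (funext fun l => ?_)
    by_cases h : l ∈ s <;> simp [G, h, ha0]
  have hGr : ∀ᶠ z in 𝓝 (0 : E n), G z ∈ Metric.ball (0 : E n) r := by
    refine hGc.continuousAt.eventually ?_
    rw [hG0]; exact Metric.ball_mem_nhds _ hr
  obtain ⟨R', hR', hGR⟩ := Metric.eventually_nhds_iff_ball.1 hGr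
  have hπG : ∀ z, projY s (G z) = projY s z := fun z => by
    refine Prod.ext rfl (funext fun l => ?_)
    by_cases h : l ∈ s <;> simp [projY_apply, G, h]
  have hd : ∀ j, Differentiable ℝ (a j) := fun j => (hsm j).differentiable (by simp)
  have hfd : ∀ j z v, fderiv ℝ (a j) z v = fderiv ℝ (a j) (projY s z) (projY s v) := by
    intro j z v
    have h1 : HasFDerivAt (fun z => a j (projY s z)) ((fderiv ℝ (a j) (projY s z)).comp (projY s))
        z := (hd j _).hasFDerivAt.comp z (projY s).hasFDerivAt
    have h2 : (fun z => a j (projY s z)) = a j := funext fun z => hπ j z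
    rw [h2] at h1
    rw [h1.fderiv]; rfl
  have hfG : ∀ j z, fderiv ℝ (a j) (G z) = fderiv ℝ (a j) z := by
    intro j z
    refine ContinuousLinearMap.ext fun v => ?_
    rw [hfd, hfd j z, hπG]
  refine ⟨s, S, a, min r R', ⟨lt_min hr hR', hsm, fun j _ => ha0 j, hda, fun j _ i hi z _ => ?_,
    fun i hi j hj z hz => ?_⟩, hS, fun z hz => hrN z (by simpa using hz.trans_le (min_le_left _ _))⟩
  · have : projY s (0, Pi.single i 1) = 0 := by
      refine Prod.ext rfl (funext fun l => ?_)
      by_cases h : l = i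
      · subst h; simp [projY_apply, hi]
      · simp [projY_apply, h]
    rw [hfd, this, map_zero]
  · have hζ : G z ∈ Metric.ball (0 : E n) r := hGR z (by simpa using hz.trans_le (min_le_right _ _))
    set ζ := G z with hζdef
    have hζN : p + S ζ ∈ N := by
      rw [hrN ζ hζ]
      intro l hl
      rw [← hπ l ζ, hζdef, hπG, hπ]
      simp [G, hl]
    let pr : Fin n → E n →L[ℝ] ℝ := fun i =>
      (ContinuousLinearMap.proj (R := ℝ) (φ := fun _ : Fin n => ℝ) i).comp
        (ContinuousLinearMap.snd ℝ (Fin n → ℝ) (Fin n → ℝ))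
    let q : Fin n → E n → ℝ := fun j w => w.2 j - a j w
    have hq : ∀ j w, HasFDerivAt (q j) (pr j - fderiv ℝ (a j) w) w := fun j w =>
      (pr j).hasFDerivAt.sub (hd j w).hasFDerivAt
    let F : Fin n → E n → ℝ := fun j w => q j (S.symm (w - p))
    have hFq : ∀ j, (fun w => F j (p + S w)) = q j := fun j => by
      funext w; simp [F]
    have hF : ∀ j, HasFDerivAt (F j)
        ((pr j - fderiv ℝ (a j) ζ).comp (S.symm : E n →L[ℝ] E n)) (p + S ζ) := by
      intro j
      have h1 : HasFDerivAt (fun w => S.symm (w - p)) (S.symm : E n →L[ℝ] E n) (p + S ζ) :=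
        (S.symm : E n →L[ℝ] E n).hasFDerivAt.comp (p + S ζ) ((hasFDerivAt_id _).sub_const p)
      have h2 := hq j ζ
      rw [show ζ = S.symm (p + S ζ - p) by simp] at h2
      have h3 := HasFDerivAt.comp (p + S ζ) h2 h1
      rwa [show S.symm (p + S ζ - p) = ζ by simp] at h3
    have hFN : ∀ j ∈ s, ∀ᶠ w in 𝓝 (p + S ζ), w ∈ N → F j w = 0 := by
      intro j hj
      have h1 : Filter.Tendsto (fun w => S.symm (w - p)) (𝓝 (p + S ζ)) (𝓝 ζ) := by
        have : Continuous fun w => S.symm (w - p) := by fun_prop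
        simpa using this.tendsto (p + S ζ)
      filter_upwards [h1.eventually (Metric.isOpen_ball.mem_nhds hζ)] with w hw hwN
      have h2 := (hrN _ hw).1 (by simpa using hwN) j hj
      exact sub_eq_zero.2 h2
    have h1 := involution_of_coisotropic (hco _ hζN) (hF i).differentiableAt
      (hF j).differentiableAt (hFN i hi) (hFN j hj)
    rw [← hamVF_comp_affine hS p (hF i).differentiableAt, hFq, (hF j).fderiv] at h1
    have h2 : fderiv ℝ (a j) ζ (hamVF (q i) ζ) = (hamVF (q i) ζ).2 j := by
      have : (pr j - fderiv ℝ (a j) ζ) (hamVF (q i) ζ) = 0 := by simpa using h1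
      have h3 : (hamVF (q i) ζ).2 j - fderiv ℝ (a j) ζ (hamVF (q i) ζ) = 0 := this
      linarith
    have hv1 : ∀ l, (hamVF (q i) ζ).1 l = (if l = i then 1 else 0)
        - fderiv ℝ (a i) ζ (0, Pi.single l 1) := by
      intro l
      change fderiv ℝ (q i) ζ (0, Pi.single l 1) = _
      rw [(hq i ζ).fderiv]
      simp [pr, Pi.single_apply, eq_comm]
    have hv2 : ∀ l, (hamVF (q i) ζ).2 l = fderiv ℝ (a i) ζ (Pi.single l 1, 0) := by
      intro l
      change -fderiv ℝ (q i) ζ (Pi.single l 1, 0) = _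
      rw [(hq i ζ).fderiv]
      simp [pr]
    rw [clm_expand] at h2
    simp only [hv1, hv2] at h2
    simp only [hζdef, hfG, sub_mul, Finset.sum_sub_distrib, ite_mul, one_mul, zero_mul,
      Finset.sum_ite_eq', Finset.mem_univ, if_true] at h2
    rw [Finset.sum_sub_distrib]
    have h3 : ∑ l, fderiv ℝ (a j) z (Pi.single l 1, 0) * fderiv ℝ (a i) z (0, Pi.single l 1) =
        ∑ l, fderiv ℝ (a i) z (0, Pi.single l 1) * fderiv ℝ (a j) z (Pi.single l 1, 0) :=
      Finset.sum_congr rfl fun _ _ => mul_comm _ _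
    linarith

end Graph

/-! ### Rigidity -/

section Assembly
variable {n : ℕ}

lemma XH_lipschitz {F : ℝ × E n → ℝ} (hF : ContDiff ℝ 2 F) (hc : HasCompactSupport F) :
    ∃ K : NNReal, ∀ t, LipschitzOnWith K (XH n F t) Set.univ := by
  obtain ⟨Λ, hΛ⟩ := exists_hamBound hF hc
  let K : NNReal := ⟨Λ, hΛ.nonneg⟩
  refine ⟨K, fun t => (LipschitzWith.of_dist_le_mul fun z w => ?_).lipschitzOnWith⟩
  rw [dist_eq_norm, dist_eq_norm]
  have := hΛ.lip t t z w
  rwa [sub_self, abs_zero, zero_add] at this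

/-- Uniqueness of trajectories: the flow of `F` carries `γ 0` to `γ 1`. -/
lemma IsHamFlow.eq_traj {F : ℝ × E n → ℝ} (hF : ContDiff ℝ 2 F) (hc : HasCompactSupport F)
    {Φ : ℝ → E n → E n} (hΦ : IsHamFlow n F Φ) {γ : ℝ → E n} (hγ : IsTraj F γ) :
    Φ 1 (γ 0) = γ 1 := by
  obtain ⟨K, hK⟩ := XH_lipschitz hF hc
  have := ODE_solution_unique_of_mem_Icc_right (a := 0) (b := 1) (s := fun _ => Set.univ)
    (f := fun t => Φ t (γ 0)) (g := γ) (fun t _ => hK t)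
    (fun t _ => (hΦ.2 (γ 0) t).continuousAt.continuousWithinAt)
    (fun t _ => (hΦ.2 (γ 0) t).hasDerivWithinAt) (fun _ _ => Set.mem_univ _)
    (fun t ht => (hγ t ht).continuousWithinAt)
    (fun t ht => (hγ t ⟨ht.1, ht.2.le⟩).mono_of_mem_nhdsWithin (Icc_mem_nhdsGE_of_mem ht))
    (fun _ _ => Set.mem_univ _) (hΦ.1 _)
  exact this (Set.right_mem_Icc.2 zero_le_one)

/-- A Hamiltonian flow supported in `W` preserves the complement of `W`. -/
lemma IsHamFlow.eq_of_notMem {F : ℝ × E n → ℝ} (hF : ContDiff ℝ 2 F) (hc : HasCompactSupport F)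
    {Φ : ℝ → E n → E n} (hΦ : IsHamFlow n F Φ) {W : Set (E n)}
    (hW : tsupport F ⊆ Set.Icc (0 : ℝ) 1 ×ˢ W) {z : E n} (hz : Φ 1 z ∉ W) : z = Φ 1 z := by
  obtain ⟨K, hK⟩ := XH_lipschitz hF hc
  have h0 : ∀ t, XH n F t (Φ 1 z) = 0 := by
    intro t
    have h1 := (XH_eq_zero_of_notMem (B := F) (t := t) (z := Φ 1 z) fun h => hz (hW h).2).2
    unfold XH
    rw [h1]
    ext i <;> simp
  have := ODE_solution_unique_univ (s := fun _ => Set.univ) (t₀ := 1) (v := XH n F)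
    (f := fun t => Φ t z) (g := fun _ => Φ 1 z) hK (fun t => ⟨hΦ.2 z t, Set.mem_univ _⟩)
    (fun t => ⟨by rw [h0]; exact hasDerivAt_const t _, Set.mem_univ _⟩) rfl
  have h2 := congrFun this 0
  simpa [hΦ.1] using h2

/-- Existence of a bump-shaped well supported in a small ball. -/
lemma exists_well {ρ : ℝ} (hρ : 0 < ρ) : ∃ (B : ℝ × E n → ℝ) (κ : ℝ), 0 < κ ∧ ContDiff ℝ 2 B ∧
    HasCompactSupport B ∧ (∀ t ∈ Set.Icc (0 : ℝ) 1, ∀ z, B (t, z) ≤ 1 / 26 * sqLen z - κ) ∧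
    ∀ t z, (t, z) ∈ tsupport B → ‖z‖ < ρ := by
  let χ : ContDiffBump (0 : E n) := ⟨ρ / 4, ρ / 2, by positivity, by linarith⟩
  let τ : ContDiffBump (0 : ℝ) := ⟨1, 2, by norm_num, by norm_num⟩
  let κ : ℝ := 1 / 26 * (ρ / 4) ^ 2
  have hκ : 0 < κ := by positivity
  let B : ℝ × E n → ℝ := fun q => -(κ * (τ q.1 * χ q.2))
  have hsub : tsupport B ⊆ Metric.closedBall (0 : ℝ) 2 ×ˢ Metric.closedBall (0 : E n) (ρ / 2) := by
    refine closure_minimal ?_ (Metric.isClosed_closedBall.prod Metric.isClosed_closedBall)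
    rintro ⟨t, z⟩ h
    constructor
    · by_contra h1
      have h1 : 2 < dist t 0 := not_le.1 h1
      exact h (by simp [B, τ.zero_of_le_dist (show 2 ≤ dist t 0 from h1.le)])
    · by_contra h1
      have h1 : ρ / 2 < dist z 0 := not_le.1 h1
      exact h (by simp [B, χ.zero_of_le_dist (show ρ / 2 ≤ dist z 0 from h1.le)])
  refine ⟨B, κ, hκ, ?_, ?_, fun t ht z => ?_, fun t z h => ?_⟩
  · exact (contDiff_const.mul ((τ.contDiff.comp contDiff_fst).mul
      (χ.contDiff.comp contDiff_snd))).neg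
  · exact ((isCompact_closedBall (0 : ℝ) 2).prod (isCompact_closedBall (0 : E n) (ρ / 2))).of_isClosed_subset
      (isClosed_tsupport _) hsub
  · have hτ : τ t = 1 := τ.one_of_mem_closedBall (by
      simp only [Metric.mem_closedBall, Real.dist_eq, sub_zero, abs_of_nonneg ht.1]
      exact ht.2)
    simp only [B, hτ, one_mul]
    by_cases hz : ‖z‖ ≤ ρ / 4
    · have : χ z = 1 := χ.one_of_mem_closedBall (by simpa using hz)
      have h0 : 0 ≤ sqLen z := (sq_nonneg ‖z‖).trans (sq_norm_le_sqLen z)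
      rw [this]; linarith
    · have h1 := sq_norm_le_sqLen z
      have h2 : (ρ / 4) ^ 2 ≤ ‖z‖ ^ 2 := by
        have := not_le.1 hz
        gcongr
      have h3 : 0 ≤ κ * χ z := mul_nonneg hκ.le χ.nonneg
      have h4 : κ = 1 / 26 * (ρ / 4) ^ 2 := rfl
      linarith
  · have := (hsub h).2
    simp only [Metric.mem_closedBall, dist_zero_right] at this
    linarith

/-- The Hofer norm is invariant under changes of coordinates. -/
lemma HNorm_comp {H : ℝ × E n → ℝ} {A : E n → E n} (hA : Function.Surjective A) :
    HNorm n (fun q => H (q.1, A q.2)) = HNorm n H := by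
  unfold HNorm
  congr 1
  funext t
  have : (Set.range fun z => H (t, A z)) = Set.range fun z => H (t, z) :=
    hA.range_comp fun z => H (t, z)
  simp only [this]

end Assembly

/-- coisotropy implies local rigidity of all points. -/
theorem locRigid_of_coisotropic
    (n : ℕ) (hn : 1 ≤ n) (k : ℕ) (N : Set (E n)) (hN : IsSubmanifold n k N)
    (hco : IsCoisotropic n N) :
    ∀ p ∈ N, LocRigid n N p := by
  intro p hp
  obtain ⟨s, S, a, R, ha, hS, haN⟩ := exists_graphData hN hco hp
  obtain ⟨β, δ, hδ, hβs, hβc, hβ, hβΓ⟩ := ha.exists_generating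
  set ε := min δ R with hε
  have hε0 : 0 < ε := lt_min hδ ha.pos
  let A : E n → E n := fun z => p + S z
  let A' : E n → E n := fun w => S.symm (w - p)
  have hAA' : ∀ w, A (A' w) = w := fun w => by simp [A, A']
  have hA'A : ∀ z, A' (A z) = z := fun z => by simp [A, A']
  have hAc : Continuous A := by fun_prop
  have hA'c : Continuous A' := by fun_prop
  have hA'p : A' p = 0 := by simp [A']
  let W : Set (E n) := A' ⁻¹' Metric.ball 0 ε
  have hWmem : ∀ w, w ∈ W ↔ ‖A' w‖ < ε := fun w => by simp [W]
  have hNW : ∀ w ∈ W, w ∈ N ↔ ∀ j ∈ s, (A' w).2 j = a j (A' w) := by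
    intro w hw
    have := haN (A' w) (((hWmem w).1 hw).trans_le (min_le_right _ _))
    rwa [show p + S (A' w) = w from hAA' w] at this
  refine ⟨W, Metric.isOpen_ball.preimage hA'c, by simp [W, hA'p, hε0], ⟨Set.inter_subset_right, ?_⟩,
    ?_⟩
  · rintro w ⟨hw, hwW⟩
    refine ⟨?_, hwW⟩
    rw [hNW w hwW]
    have hcl : IsClosed {w | ∀ j ∈ s, (A' w).2 j = a j (A' w)} := by
      simp only [Set.ofPred_forall]
      refine isClosed_iInter fun j => isClosed_iInter fun _ => isClosed_eq (by fun_prop) ?_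
      exact (ha.smooth j).continuous.comp hA'c
    exact closure_minimal (fun w' hw' => (hNW w' hw'.2).1 hw'.1) hcl hw
  · intro U hU hpU hUW
    have h0 : A ⁻¹' U ∈ 𝓝 (0 : E n) := (hU.preimage hAc).mem_nhds (by simpa [A] using hpU)
    obtain ⟨ρ, hρ, hρU⟩ := Metric.mem_nhds_iff.1 h0
    obtain ⟨B, κ, hκ, hBs, hBc, hB, hBsupp⟩ := exists_well (n := n) hρ
    have key : ∀ H Φ, AdmissibleH n W H → IsHamFlow n H Φ →
        Φ 1 '' (closure U ∩ W) ∩ (N ∩ W) = ∅ → κ / 4 ≤ HNorm n H := by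
      intro H Φ hH hΦ hdis
      by_contra hlt
      push Not at hlt
      have hHs : ContDiff ℝ 2 H := hH.1.of_le (WithTop.coe_le_coe.2 (le_top : (2 : ℕ∞) ≤ ⊤))
      let H' : ℝ × E n → ℝ := fun q => H (q.1, A q.2)
      have hH's : ContDiff ℝ 2 H' := hHs.comp
        (contDiff_fst.prodMk (contDiff_const.add (S.contDiff.comp contDiff_snd)))
      have hH'c : HasCompactSupport H' := by
        have hh : ∃ e : ℝ × E n ≃ₜ ℝ × E n, ∀ q, e q = (q.1, A q.2) :=
          ⟨(Homeomorph.refl ℝ).prodCongr ⟨⟨A, A', hA'A, hAA'⟩, hAc, hA'c⟩, fun q => rfl⟩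
        obtain ⟨e, he⟩ := hh
        have : H' = H ∘ e := funext fun q => by simp [H', he]
        rw [this]
        exact HasCompactSupport.comp_homeomorph hH.2.1 e
      obtain ⟨Γ, Δ, hΓ, hΓ0, hΔ, hΓΔ, t, ht⟩ := exists_connecting hκ hβs hβc hH's hH'c hBs hBc hβ hB
        ((HNorm_comp (H := H) fun w => ⟨A' w, hAA' w⟩).trans_lt hlt)
      have hAΔ : IsTraj H fun t => A (Δ t) := by
        intro t ht
        have h1 := (S : E n →L[ℝ] E n).hasFDerivAt.comp_hasDerivWithinAt t (hΔ t ht)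
        have h2 := h1.const_add p
        have h3 : S (XH n H' t (Δ t)) = XH n H t (A (Δ t)) :=
          hamVF_comp_affine hS p (F := fun w => H (t, w))
            (((hHs.differentiable (by simp)).comp
              (by fun_prop : Differentiable ℝ fun w : E n => (t, w))) _)
        rw [← h3]
        exact h2
      have hend : Φ 1 (A (Δ 0)) = A (Γ 1) := by
        rw [hΓΔ]; exact hΦ.eq_traj hHs hH.2.1 hAΔ
      have hΔU : A (Δ 0) ∈ U := hρU (by simpa using hBsupp t _ ht)
      have hΔW : A (Δ 0) ∈ W := hUW hΔU
      -- the flow of `H` preserves `W`, as `H` is supported there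
      have hΓW : A (Γ 1) ∈ W := by
        by_contra hnot
        rw [← hend] at hnot
        have := hΦ.eq_of_notMem hHs hH.2.1 hH.2.2 hnot
        rw [← this] at hnot
        exact hnot hΔW
      have hΓε : ‖Γ 1‖ < ε := by simpa [hWmem, hA'A] using hΓW
      have hΓN : A (Γ 1) ∈ N :=
        (hNW _ hΓW).2 (by
          rw [hA'A]; exact hβΓ Γ hΓ hΓ0 (hΓε.trans_le (min_le_left _ _)))
      have : A (Γ 1) ∈ Φ 1 '' (closure U ∩ W) ∩ (N ∩ W) :=
        ⟨⟨A (Δ 0), ⟨subset_closure hΔU, hΔW⟩, hend⟩, hΓN, hΓW⟩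
      rw [hdis] at this
      exact this
    refine lt_of_lt_of_le (ENNReal.ofReal_pos.2 (by positivity : 0 < κ / 4)) (le_sInf ?_)
    rintro c ⟨φ, hφ, hdis, rfl⟩
    refine ENNReal.ofReal_le_ofReal (le_csInf ?_ ?_)
    · obtain ⟨H, Φ, hH, hΦ, rfl⟩ := hφ
      exact ⟨_, H, Φ, hH, hΦ, rfl, rfl⟩
    · rintro _ ⟨H, Φ, hH, hΦ, rfl, rfl⟩
      exact key H Φ hH hΦ hdis
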